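/- There exists an absolute constant C > 0 such that for every s ≥ 0, every d, n ∈ ℕ with n ≤ 1/s, every s-concave probability measure μ on ℝⁿ, every polynomial f ∈ 𝒫_d(ℝⁿ), and every φ ∈ C_b^∞(ℝ), one has ‖f − 𝔼_μ f‖_{L²(μ)}^{1/d} · ∫_{ℝⁿ} φ'(f(x)) μ(dx) ≤ C · min{d, 1/s} · ‖φ‖_∞^{1/d} ‖φ'‖_∞^{1−1/d}, where 𝔼_μ f := ∫_{ℝⁿ} f dμ. Equivalently, for every f ∈ 𝒫_d(ℝⁿ) with ‖f − 𝔼_μ f‖_{L²(μ)} > 0, one has σ(μ ∘ f⁻¹, t) ≤ C · min{d, 1/s} · ‖f − 𝔼_μ f‖_{L²(μ)}^{−1/d} · t^{1/d} for all t > 0 (with the conventions min{d, 1/s} = d and n ≤ 1/s vacuous when s = 0). -/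

import Mathlib

/-!
The constant is absolute because the estimate can be reduced to measures on a line, where it splits
into two statements about a polynomial `p` of degree at most `d` and an `s`-concave probability
measure.

* Oscillation (`osc_line`): if `|φ| ≤ ε`, `|φ'| ≤ 1`, `φ = 0` on `[0, ∞)` and `p ≥ 1` on a set of
  mass larger than `1/8`, then `∫ φ'(p) ≤ C ε ^ (1/d)`. On an interval this is a van der Corput type
  bound: where `|p'| > δ` one integrates `φ'(p) = (φ ∘ p)' / p'` by parts on `O(d)` intervals of
  monotonicity of `p'`, and where `|p'| ≤ δ` the trivial bound and the Remez inequality (`remez`)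
  for `p'` apply. A density is treated level by level by layer cake: its superlevel sets are
  intervals, and a set of mass larger than `1/8` must meet the region where the density is
  comparable to its maximum.
* Moments (`second_moment_line`): if `|p| ≤ M` on a set of mass at least `3/8`, then
  `∫ p² ≤ M² (C min{d, 1/s}) ^ (2d)`. This follows from the Remez inequality, the exponential decay
  of the density and, for `s > 0`, the bound `O(1/s)` on the rescaled length of its support.

General `s`-concave measures on the line need not have a bounded density, so they are first
convolved with uniform measures on short intervals, which keeps the power mean inequality.

The reduction to lines (`localization`) is variational. After conditioning on a large ball, the
`s`-concave probability measures on the ball giving mass at least `p` to a closed set `F` form a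
weakly compact set. Among the maximizers of `∫ g` choose one of minimal total variance. If it were
not carried by a line, some hyperplane through its mean would cut it into two pieces that both
satisfy the constraint; both conditional measures would then be maximizers, with distinct means, so
one of them would have smaller variance.

In `ℝⁿ`, let `a ≤ b` be the quartiles of the law of `f` and `N = ‖φ'‖_∞`. The moment bound for
`f - a`, which is at most `b - a` in absolute value with probability at least `1/2`, gives
`‖f - 𝔼 f‖_{L²} ≤ (b - a) (C min{d, 1/s}) ^ d`. Cutting `φ` smoothly between `a` and `b` and using
the oscillation bound on each side gives `∫ φ'(f) ≤ C N (ε / (N (b - a))) ^ (1/d)`. In the product of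
the `1/d`-th power of the first bound with the second, the gap `b - a` cancels.
-/

open MeasureTheory Pointwise

noncomputable section

/-- The class `C_b^∞(ℝ)` of bounded smooth functions on `ℝ`
with bounded derivatives of every order. -/
def CbSmooth (φ : ℝ → ℝ) : Prop :=
  ContDiff ℝ (⊤ : ℕ∞) φ ∧ ∀ k : ℕ, ∃ M : ℝ, ∀ t : ℝ, |iteratedDeriv k φ t| ≤ M

/-- The sup norm `‖φ‖_∞ = sup_t |φ(t)|`. -/
def supNorm (φ : ℝ → ℝ) : ℝ := ⨆ t : ℝ, |φ t|

/-- The modulus `σ(ν, ε)` of a Borel measure `ν` on `ℝ`. -/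
def sigmaMod (ν : Measure ℝ) (ε : ℝ) : ℝ :=
  sSup {y : ℝ | ∃ φ : ℝ → ℝ, CbSmooth φ ∧ (∀ t, |φ t| ≤ ε) ∧ (∀ t, |deriv φ t| ≤ 1) ∧
    y = ∫ t, deriv φ t ∂ν}

/-- `μ` is an `s`-concave measure on `ℝⁿ` (for `s ≥ 0`; the case `s = 0` is
log-concavity, understood in the limiting sense). -/
def IsSConcave {n : ℕ} (s : ℝ) (μ : Measure (Fin n → ℝ)) : Prop :=
  ∀ A B : Set (Fin n → ℝ), IsCompact A → IsCompact B → 0 < μ A → 0 < μ B →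
    ∀ α : ℝ, 0 ≤ α → α ≤ 1 →
      (if s = 0 then μ A ^ α * μ B ^ (1 - α)
        else ENNReal.ofReal
          ((α * (μ A).toReal ^ s + (1 - α) * (μ B).toReal ^ s) ^ s⁻¹))
        ≤ μ (α • A + (1 - α) • B)

/-! ### The Remez inequality -/

/-- A closed set of measure larger than `N h` contains `N + 1` points with consecutive gaps at
least `h`: take the minimum and continue to its right at distance `h`. -/
lemma exists_spaced (h : ℝ) (hh : 0 < h) (N : ℕ) : ∀ E : Set ℝ, IsClosed E → BddBelow E →
    ENNReal.ofReal (N * h) < volume E →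
    ∃ x : ℕ → ℝ, (∀ i ≤ N, x i ∈ E) ∧ ∀ i < N, x i + h ≤ x (i + 1) := by
  induction N with
  | zero =>
    intro E hE hb hv
    have hne : E.Nonempty := by
      by_contra hne
      rw [Set.not_nonempty_iff_eq_empty] at hne
      simp [hne] at hv
    obtain ⟨y, hy⟩ := hne
    exact ⟨fun _ => y, fun _ _ => hy, by simp⟩
  | succ N ih =>
    intro E hE hb hv
    have hne : E.Nonempty := by
      by_contra hne
      rw [Set.not_nonempty_iff_eq_empty] at hne
      simp [hne] at hv
    set m := sInf E
    have hm : m ∈ E := hE.csInf_mem hne hb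
    have hsub : E ⊆ (E ∩ Set.Ici (m + h)) ∪ Set.Icc m (m + h) := by
      intro y hy
      have : m ≤ y := csInf_le hb hy
      by_cases hc : m + h ≤ y
      · exact Or.inl ⟨hy, hc⟩
      · exact Or.inr ⟨this, by linarith⟩
    have hv2 : ENNReal.ofReal (N * h) < volume (E ∩ Set.Ici (m + h)) := by
      by_contra hcon
      push Not at hcon
      have h1 := (measure_mono hsub).trans (measure_union_le (μ := volume) _ _)
      rw [Real.volume_Icc] at h1
      have h2 : volume E ≤ ENNReal.ofReal (N * h) + ENNReal.ofReal h := by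
        refine h1.trans (add_le_add hcon ?_)
        simp
      rw [← ENNReal.ofReal_add (by positivity) hh.le] at h2
      push_cast at hv
      rw [add_mul, one_mul] at hv
      exact absurd hv (not_lt.mpr h2)
    obtain ⟨x, hx1, hx2⟩ := ih _ (hE.inter isClosed_Ici) (hb.mono Set.inter_subset_left) hv2
    refine ⟨fun i => if i = 0 then m else x (i - 1), ?_, ?_⟩
    · intro i hi
      rcases Nat.eq_zero_or_pos i with h0 | h0
      · simp [h0, hm]
      · simp only [h0.ne', if_false]
        exact (hx1 (i - 1) (by omega)).1
    · intro i hi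
      rcases Nat.eq_zero_or_pos i with h0 | h0
      · subst h0
        simpa using (hx1 0 (by omega)).2
      · simp only [h0.ne', if_false, Nat.succ_ne_zero]
        have := hx2 (i - 1) (by omega)
        rwa [show i - 1 + 1 = i + 1 - 1 by omega] at this

lemma spaced_diff {h : ℝ} {N : ℕ} {x : ℕ → ℝ} (hx : ∀ i < N, x i + h ≤ x (i + 1)) (i k : ℕ)
    (hk : i + k ≤ N) : x i + k * h ≤ x (i + k) := by
  induction k with
  | zero => simp
  | succ k ih =>
    have h1 := ih (by omega)
    have h2 := hx (i + k) (by omega)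
    push_cast
    rw [← add_assoc]
    linarith

lemma prod_abs_sub (d i : ℕ) (hi : i ≤ d) :
    ∏ j ∈ (Finset.range (d + 1)).erase i, |(i : ℝ) - j| = (i.factorial * (d - i).factorial : ℕ) := by
  have h1 : (Finset.range (d + 1)).erase i = Finset.range i ∪ Finset.Ico (i + 1) (d + 1) := by
    ext j; simp; omega
  have hd : Disjoint (Finset.range i) (Finset.Ico (i + 1) (d + 1)) := by
    rw [Finset.disjoint_left]; intro j; simp; omega
  rw [h1, Finset.prod_union hd]
  push_cast
  congr 1
  · rw [← Finset.prod_range_reflect]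
    rw [← Finset.prod_range_add_one_eq_factorial]
    push_cast
    refine Finset.prod_congr rfl fun j hj => ?_
    have hj' := Finset.mem_range.mp hj
    rw [Nat.cast_sub (by omega), Nat.cast_sub (by omega)]
    rw [show (i : ℝ) - (i - (1 : ℕ) - j) = j + 1 by push_cast; ring]
    exact abs_of_nonneg (by positivity)
  · rw [Finset.prod_Ico_eq_prod_range, ← Finset.prod_range_add_one_eq_factorial]
    push_cast
    refine Finset.prod_congr rfl fun j hj => ?_
    rw [show (i : ℝ) - (i + 1 + j) = -(j + 1) by ring, abs_neg]
    exact abs_of_nonneg (by positivity)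

lemma succ_pow_le (d : ℕ) : ((d : ℝ) + 1) ^ d ≤ 8 ^ d * d.factorial := by
  rcases Nat.eq_zero_or_pos d with h | h
  · simp [h]
  have h1 := Real.pow_div_factorial_le_exp ((d : ℝ) + 1) (by positivity) d
  rw [div_le_iff₀ (by positivity)] at h1
  refine h1.trans ?_
  gcongr
  have h2 : Real.exp (d + 1) ≤ Real.exp (2 * d) := by
    apply Real.exp_le_exp.mpr
    have : (1 : ℝ) ≤ d := by exact_mod_cast h
    linarith
  refine h2.trans ?_
  rw [mul_comm, Real.exp_nat_mul]
  gcongr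
  have h3 : Real.exp 2 = Real.exp 1 * Real.exp 1 := by rw [← Real.exp_add]; norm_num
  rw [h3]
  have := Real.exp_one_lt_d9
  have := Real.exp_pos 1
  nlinarith

/-- Remez inequality with an absolute base: a polynomial of degree at most `d` bounded by `δ` on a
subset of `[a, b]` of measure at least `r` is bounded by `δ (16 (b - a) / r) ^ d` on `[a, b]`.
It comes from Lagrange interpolation at `d + 1` nodes of the set with gaps `r / (d + 1)`. -/
lemma remez {p : Polynomial ℝ} {d : ℕ} (hp : p.natDegree ≤ d) {a b δ r : ℝ} (hr : 0 < r)
    {E : Set ℝ} (hE : E ⊆ Set.Icc a b) (hδ : ∀ x ∈ E, |p.eval x| ≤ δ)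
    (hv : ENNReal.ofReal r ≤ volume E) {x : ℝ} (hx : x ∈ Set.Icc a b) :
    |p.eval x| ≤ δ * (16 * (b - a) / r) ^ d := by
  set h : ℝ := r / (d + 1) with hh
  have hh0 : 0 < h := by positivity
  have hE2 : closure E ⊆ Set.Icc a b := closure_minimal hE isClosed_Icc
  have hδ2 : ∀ x ∈ closure E, |p.eval x| ≤ δ := by
    have hc : IsClosed {x : ℝ | |p.eval x| ≤ δ} :=
      isClosed_le (by fun_prop) continuous_const
    exact fun x hx => closure_minimal (fun y hy => hδ y hy) hc hx
  obtain ⟨v, hv1, hv2⟩ := exists_spaced h hh0 d (closure E) isClosed_closure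
    (bddBelow_Icc.mono hE2) (by
      refine lt_of_lt_of_le ?_ (hv.trans (measure_mono subset_closure))
      rw [ENNReal.ofReal_lt_ofReal_iff hr, hh, mul_div_assoc', div_lt_iff₀ (by positivity)]
      nlinarith)
  have hdist : ∀ i ≤ d, ∀ j ≤ d, |(i : ℝ) - j| * h ≤ |v i - v j| := by
    have key : ∀ i ≤ d, ∀ j ≤ d, i ≤ j → |(i : ℝ) - j| * h ≤ |v i - v j| := by
      intro i _ j hj hij
      obtain ⟨k, rfl⟩ := Nat.exists_eq_add_of_le hij
      have := spaced_diff hv2 i k hj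
      push_cast
      rw [abs_sub_comm (v i), show (i : ℝ) - (i + k) = -k by ring, abs_neg, Nat.abs_cast]
      exact le_trans (by linarith) (le_abs_self _)
    intro i hi j hj
    rcases le_total i j with hij | hij
    · exact key i hi j hj hij
    · rw [abs_sub_comm, abs_sub_comm (v i)]; exact key j hj i hi hij
  have hδ0 : 0 ≤ δ := (abs_nonneg _).trans (hδ2 _ (hv1 0 (by omega)))
  have hinj : Set.InjOn v (Finset.range (d + 1)) := by
    intro i hi j hj hij
    have hi' : i ≤ d := by simpa [Nat.lt_succ_iff] using hi
    have hj' : j ≤ d := by simpa [Nat.lt_succ_iff] using hj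
    have := hdist i hi' j hj'
    rw [hij, sub_self, abs_zero] at this
    have h2 : |(i : ℝ) - j| ≤ 0 := by
      by_contra hc
      push Not at hc
      nlinarith
    have h3 := abs_nonpos_iff.mp h2
    exact_mod_cast sub_eq_zero.mp h3
  have hitg := Lagrange.eq_interpolate (f := p) hinj (by
    refine lt_of_le_of_lt Polynomial.degree_le_natDegree ?_
    rw [Finset.card_range]
    exact_mod_cast Nat.lt_succ_of_le hp)
  set L := b - a
  have hL : 0 ≤ L := by have := hx.1.trans hx.2; simp only [L]; linarith
  have hbasis : ∀ i ∈ Finset.range (d + 1),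
      |(Lagrange.basis (Finset.range (d + 1)) v i).eval x| ≤
        (L / h) ^ d / (i.factorial * (d - i).factorial : ℕ) := by
    intro i hi
    have hi' : i ≤ d := by simpa [Nat.lt_succ_iff] using hi
    rw [Lagrange.basis, Polynomial.eval_prod, Finset.abs_prod, ← prod_abs_sub d i hi']
    have hcard : ((Finset.range (d + 1)).erase i).card = d := by
      rw [Finset.card_erase_of_mem hi]; simp
    have hpow : (L / h) ^ d = ∏ _j ∈ (Finset.range (d + 1)).erase i, L / h := by
      rw [Finset.prod_const, hcard]
    rw [hpow, ← Finset.prod_div_distrib]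
    refine Finset.prod_le_prod (fun _ _ => abs_nonneg _) fun j hj => ?_
    have hji : j ≠ i := Finset.ne_of_mem_erase hj
    have hj' : j ≤ d := by
      simpa [Nat.lt_succ_iff] using Finset.mem_of_mem_erase hj
    have hpos : 0 < |(i : ℝ) - j| := by
      rw [abs_pos, sub_ne_zero]; exact_mod_cast hji.symm
    simp only [Lagrange.basisDivisor, Polynomial.eval_mul, Polynomial.eval_C, Polynomial.eval_sub,
      Polynomial.eval_X, abs_mul, abs_inv]
    rw [div_div, inv_mul_eq_div]
    have hvj := hE2 (hv1 j hj')
    apply div_le_div₀ hL _ (by positivity)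
    · rw [mul_comm]; exact hdist i hi' j hj'
    · rw [abs_le]; simp only [L]; constructor <;> linarith [hvj.1, hvj.2, hx.1, hx.2]
  have hmain : |p.eval x| ≤ ∑ i ∈ Finset.range (d + 1),
      δ * ((L / h) ^ d / (i.factorial * (d - i).factorial : ℕ)) := by
    conv_lhs => rw [hitg, Lagrange.interpolate_apply, Polynomial.eval_finsetSum]
    refine (Finset.abs_sum_le_sum_abs _ _).trans (Finset.sum_le_sum fun i hi => ?_)
    have hi' : i ≤ d := by simpa [Nat.lt_succ_iff] using hi
    rw [Polynomial.eval_mul, Polynomial.eval_C, abs_mul]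
    exact mul_le_mul (hδ2 _ (hv1 i hi')) (hbasis i hi) (abs_nonneg _) hδ0
  have hsum : ∑ i ∈ Finset.range (d + 1), (1 : ℝ) / (i.factorial * (d - i).factorial : ℕ)
      = 2 ^ d / d.factorial := by
    rw [eq_div_iff (by positivity), Finset.sum_mul]
    have : ((2 : ℝ)) ^ d = ∑ i ∈ Finset.range (d + 1), (d.choose i : ℝ) := by
      exact_mod_cast (Nat.sum_range_choose d).symm
    rw [this]
    refine Finset.sum_congr rfl fun i hi => ?_
    have hi' : i ≤ d := by simpa [Nat.lt_succ_iff] using hi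
    rw [Nat.cast_choose ℝ hi']
    push_cast
    ring
  refine hmain.trans ?_
  have : ∑ i ∈ Finset.range (d + 1), δ * ((L / h) ^ d / (i.factorial * (d - i).factorial : ℕ))
      = δ * ((L / h) ^ d * (2 ^ d / d.factorial)) := by
    rw [← hsum, Finset.mul_sum, Finset.mul_sum]
    refine Finset.sum_congr rfl fun i _ => by ring
  rw [this]
  apply mul_le_mul_of_nonneg_left _ hδ0
  have h3 : (L / h) ^ d * (2 ^ d / d.factorial) = (L / r) ^ d * 2 ^ d * (((d : ℝ) + 1) ^ d / d.factorial) := by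
    rw [hh, div_div_eq_mul_div, div_pow, div_pow, mul_pow]; ring
  have h4 : (16 * L / r) ^ d = (L / r) ^ d * 2 ^ d * 8 ^ d := by
    rw [← mul_pow, ← mul_pow]; congr 1; ring
  rw [h3, h4]
  apply mul_le_mul_of_nonneg_left _ (by positivity)
  rw [div_le_iff₀ (by positivity)]
  exact succ_pow_le d

/-! ### Oscillatory integrals along polynomials on an interval -/

/-- If a continuous function has no zero in `(c, e)`, it has a constant sign on `[c, e]`. -/
lemma sign_const {g : ℝ → ℝ} (hg : Continuous g) {c e : ℝ} (hce : c < e)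
    (h0 : ∀ x ∈ Set.Ioo c e, g x ≠ 0) :
    (∀ x ∈ Set.Icc c e, 0 ≤ g x) ∨ (∀ x ∈ Set.Icc c e, g x ≤ 0) := by
  have hcl : closure (Set.Ioo c e) = Set.Icc c e := closure_Ioo hce.ne
  have key : (∀ x ∈ Set.Ioo c e, 0 ≤ g x) ∨ (∀ x ∈ Set.Ioo c e, g x ≤ 0) := by
    by_contra hcon
    push Not at hcon
    obtain ⟨⟨x, hx, hx1⟩, y, hy, hy1⟩ := hcon
    obtain ⟨z, hz, hz0⟩ := isPreconnected_Ioo.intermediate_value hx hy hg.continuousOn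
      ⟨hx1.le, hy1.le⟩
    exact h0 z hz hz0
  rw [← hcl]
  rcases key with h | h
  · left; exact fun x hx => closure_minimal h (isClosed_le continuous_const hg) hx
  · right; exact fun x hx => closure_minimal h (isClosed_le hg continuous_const) hx

/-- Integration by parts of `φ'(p) = (φ ∘ p)' / p'` on an interval where `1 / p'` is monotone. -/
lemma osc_good {p : Polynomial ℝ} {φ : ℝ → ℝ} (hφ : ContDiff ℝ 1 φ) {ε δ c e : ℝ}
    (hδ : 0 < δ) (hb : ∀ t, |φ t| ≤ ε) (hce : c ≤ e)
    (hp1 : ∀ x ∈ Set.Icc c e, δ ≤ |p.derivative.eval x|)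
    (hp2 : (∀ x ∈ Set.Icc c e, 0 ≤ p.derivative.derivative.eval x) ∨
      (∀ x ∈ Set.Icc c e, p.derivative.derivative.eval x ≤ 0)) :
    |∫ x in c..e, deriv φ (p.eval x)| ≤ 4 * ε / δ := by
  set q := p.derivative with hq
  set r := q.derivative with hr
  have hε : 0 ≤ ε := (abs_nonneg _).trans (hb 0)
  have hq0 : ∀ x ∈ Set.Icc c e, q.eval x ≠ 0 := fun x hx h => by
    have := hp1 x hx
    rw [h, abs_zero] at this
    linarith
  have hui : Set.uIcc c e = Set.Icc c e := Set.uIcc_of_le hce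
  have hφc : Continuous φ := hφ.continuous
  have hφ'c : Continuous (deriv φ) := hφ.continuous_deriv le_rfl
  have hd : ∀ x ∈ Set.Icc c e, HasDerivAt (fun x => φ (p.eval x) / q.eval x)
      (deriv φ (p.eval x) - φ (p.eval x) * (r.eval x / (q.eval x) ^ 2)) x := by
    intro x hx
    have h1 : HasDerivAt (fun x => φ (p.eval x)) (deriv φ (p.eval x) * q.eval x) x :=
      ((hφ.differentiable one_ne_zero).differentiableAt.hasDerivAt).comp x (p.hasDerivAt x)
    have h2 := h1.div (q.hasDerivAt x) (hq0 x hx)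
    refine h2.congr_deriv ?_
    have := hq0 x hx
    rw [← hr]
    field_simp
  have hd2 : ∀ x ∈ Set.Icc c e, HasDerivAt (fun x => -(q.eval x)⁻¹)
      (r.eval x / (q.eval x) ^ 2) x := by
    intro x hx
    have h2 := ((q.hasDerivAt x).inv (hq0 x hx)).neg
    refine h2.congr_deriv ?_
    ring
  have hc2 : ContinuousOn (fun x => r.eval x / (q.eval x) ^ 2) (Set.Icc c e) :=
    r.continuous.continuousOn.div (q.continuous.continuousOn.pow 2)
      (fun x hx => pow_ne_zero 2 (hq0 x hx))
  have hi2 : IntervalIntegrable (fun x => r.eval x / (q.eval x) ^ 2) volume c e := by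
    apply ContinuousOn.intervalIntegrable; rwa [hui]
  have hi1 : IntervalIntegrable (fun x => deriv φ (p.eval x)) volume c e :=
    (hφ'c.comp p.continuous).intervalIntegrable _ _
  have hi3 : IntervalIntegrable (fun x => φ (p.eval x) * (r.eval x / (q.eval x) ^ 2)) volume c e := by
    apply ContinuousOn.intervalIntegrable; rw [hui]
    exact (hφc.comp p.continuous).continuousOn.mul hc2
  have hF := intervalIntegral.integral_eq_sub_of_hasDerivAt (by rw [hui]; exact hd) (hi1.sub hi3)
  rw [intervalIntegral.integral_sub hi1 hi3] at hF
  have hG := intervalIntegral.integral_eq_sub_of_hasDerivAt (by rw [hui]; exact hd2) hi2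
  have hinv : ∀ x ∈ Set.Icc c e, |(q.eval x)⁻¹| ≤ 1 / δ := fun x hx => by
    rw [abs_inv, ← one_div]; exact one_div_le_one_div_of_le hδ (hp1 x hx)
  have hbd : ∀ x ∈ Set.Icc c e, |φ (p.eval x) / q.eval x| ≤ ε * (1 / δ) := fun x hx => by
    rw [div_eq_mul_inv, abs_mul]
    exact mul_le_mul (hb _) (hinv x hx) (abs_nonneg _) hε
  have hGa : |∫ x in c..e, r.eval x / (q.eval x) ^ 2| ≤ 2 * (1 / δ) := by
    rw [hG]
    have h1 := abs_le.mp (hinv c ⟨le_rfl, hce⟩)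
    have h2 := abs_le.mp (hinv e ⟨hce, le_rfl⟩)
    rw [abs_le]; constructor <;> linarith
  have hab : ∫ x in c..e, |r.eval x / (q.eval x) ^ 2| = |∫ x in c..e, r.eval x / (q.eval x) ^ 2| := by
    rcases hp2 with h | h
    · have hnn : ∀ x ∈ Set.Icc c e, 0 ≤ r.eval x / (q.eval x) ^ 2 := fun x hx =>
        div_nonneg (h x hx) (sq_nonneg _)
      rw [abs_of_nonneg (intervalIntegral.integral_nonneg hce hnn)]
      apply intervalIntegral.integral_congr
      intro x hx; rw [hui] at hx
      exact abs_of_nonneg (hnn x hx)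
    · have hnn : ∀ x ∈ Set.Icc c e, r.eval x / (q.eval x) ^ 2 ≤ 0 := fun x hx =>
        div_nonpos_of_nonpos_of_nonneg (h x hx) (sq_nonneg _)
      have h3 : ∫ x in c..e, |r.eval x / (q.eval x) ^ 2| = - ∫ x in c..e, r.eval x / (q.eval x) ^ 2 := by
        rw [← intervalIntegral.integral_neg]
        apply intervalIntegral.integral_congr
        intro x hx; rw [hui] at hx
        exact abs_of_nonpos (hnn x hx)
      rw [h3]
      symm; apply abs_of_nonpos
      have : 0 ≤ ∫ x in c..e, |r.eval x / (q.eval x) ^ 2| :=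
        intervalIntegral.integral_nonneg hce fun x _ => abs_nonneg _
      linarith
  have h3a : |∫ x in c..e, φ (p.eval x) * (r.eval x / (q.eval x) ^ 2)| ≤ ε * (2 * (1 / δ)) := by
    refine (intervalIntegral.abs_integral_le_integral_abs hce).trans ?_
    refine (intervalIntegral.integral_mono_on (g := fun x => ε * |r.eval x / (q.eval x) ^ 2|)
      hce hi3.abs (hi2.abs.const_mul _) fun x hx => ?_).trans ?_
    · rw [abs_mul]; exact mul_le_mul_of_nonneg_right (hb _) (abs_nonneg _)
    · rw [intervalIntegral.integral_const_mul, hab]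
      exact mul_le_mul_of_nonneg_left hGa hε
  have h1 := abs_le.mp (hbd c ⟨le_rfl, hce⟩)
  have h2 := abs_le.mp (hbd e ⟨hce, le_rfl⟩)
  have h3 := abs_le.mp h3a
  have h4 : 4 * ε / δ = 4 * (ε * (1 / δ)) := by ring
  rw [h4, abs_le]
  constructor <;> nlinarith

/-- On an interval where `|p'| - δ` and `p''` do not change sign, `φ'(p)` is integrated trivially
if `|p'| ≤ δ`, and by parts otherwise. -/
lemma osc_base {p : Polynomial ℝ} {φ : ℝ → ℝ} (hφ : ContDiff ℝ 1 φ) {ε δ c e : ℝ}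
    (hδ : 0 < δ) (hb : ∀ t, |φ t| ≤ ε) (hb' : ∀ t, |deriv φ t| ≤ 1) (hce : c ≤ e)
    (hp1 : (∀ x ∈ Set.Icc c e, 0 ≤ p.derivative.eval x ^ 2 - δ ^ 2) ∨
      (∀ x ∈ Set.Icc c e, p.derivative.eval x ^ 2 - δ ^ 2 ≤ 0))
    (hp2 : (∀ x ∈ Set.Icc c e, 0 ≤ p.derivative.derivative.eval x) ∨
      (∀ x ∈ Set.Icc c e, p.derivative.derivative.eval x ≤ 0)) :
    |∫ x in c..e, deriv φ (p.eval x)| ≤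
      volume.real ({x | |p.derivative.eval x| ≤ δ} ∩ Set.Ioc c e) + 4 * ε / δ := by
  have hε : 0 ≤ ε := (abs_nonneg _).trans (hb 0)
  rcases hp1 with h | h
  · have := osc_good hφ hδ hb hce (fun x hx => by
      have := h x hx
      rw [← abs_of_pos hδ]; apply sq_le_sq.mp; linarith) hp2
    have h2 : 0 ≤ volume.real ({x | |p.derivative.eval x| ≤ δ} ∩ Set.Ioc c e) := measureReal_nonneg
    linarith
  · have hs : {x | |p.derivative.eval x| ≤ δ} ∩ Set.Ioc c e = Set.Ioc c e := by
      apply Set.inter_eq_right.mpr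
      intro x hx
      have := h x (Set.Ioc_subset_Icc_self hx)
      show |p.derivative.eval x| ≤ δ
      rw [← abs_of_pos hδ]; apply sq_le_sq.mp; linarith
    have h1 : |∫ x in c..e, deriv φ (p.eval x)| ≤ 1 * |e - c| := by
      rw [← Real.norm_eq_abs]
      exact intervalIntegral.norm_integral_le_of_norm_le_const fun x _ => hb' _
    rw [hs, Real.volume_real_Ioc_of_le hce]
    rw [abs_of_nonneg (by linarith : 0 ≤ e - c)] at h1
    have : 0 ≤ 4 * ε / δ := by positivity
    linarith

/-- Splitting `[c, e]` at the points of `S` where `p'' (p' ^ 2 - δ ^ 2)` vanishes. -/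
lemma osc_split {p : Polynomial ℝ} {φ : ℝ → ℝ} (hφ : ContDiff ℝ 1 φ) {ε δ : ℝ}
    (hδ : 0 < δ) (hb : ∀ t, |φ t| ≤ ε) (hb' : ∀ t, |deriv φ t| ≤ 1) (S : Finset ℝ)
    (hS : ∀ x, x ∉ S → p.derivative.eval x ^ 2 - δ ^ 2 ≠ 0 ∧ p.derivative.derivative.eval x ≠ 0)
    (n : ℕ) : ∀ c e : ℝ, c ≤ e → (S.filter (fun x => x ∈ Set.Ioo c e)).card ≤ n →
    |∫ x in c..e, deriv φ (p.eval x)| ≤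
      volume.real ({x | |p.derivative.eval x| ≤ δ} ∩ Set.Ioc c e) + (n + 1) * (4 * ε / δ) := by
  have hε : 0 ≤ ε := (abs_nonneg _).trans (hb 0)
  induction n using Nat.strong_induction_on with
  | _ n ih =>
  intro c e hce hcard
  rcases hce.eq_or_lt with rfl | hlt
  · simp; positivity
  by_cases hne : (S.filter (fun x => x ∈ Set.Ioo c e)).Nonempty
  · obtain ⟨m, hm⟩ := hne
    have hmI : m ∈ Set.Ioo c e := (Finset.mem_filter.mp hm).2
    have hsub : (S.filter (fun x => x ∈ Set.Ioo c m)).card +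
        (S.filter (fun x => x ∈ Set.Ioo m e)).card + 1 ≤ n := by
      have hd : Disjoint (S.filter (fun x => x ∈ Set.Ioo c m))
          (S.filter (fun x => x ∈ Set.Ioo m e)) := by
        rw [Finset.disjoint_left]
        intro x h1 h2
        have h1 := (Finset.mem_filter.mp h1).2
        have h2 := (Finset.mem_filter.mp h2).2
        exact absurd h1.2 (not_lt.mpr h2.1.le)
      rw [← Finset.card_union_of_disjoint hd]
      have hss : (S.filter (fun x => x ∈ Set.Ioo c m)) ∪ (S.filter (fun x => x ∈ Set.Ioo m e)) ⊆
          (S.filter (fun x => x ∈ Set.Ioo c e)).erase m := by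
        intro x hx
        rcases Finset.mem_union.mp hx with h | h
        · have h' := Finset.mem_filter.mp h
          exact Finset.mem_erase.mpr ⟨h'.2.2.ne, Finset.mem_filter.mpr
            ⟨h'.1, h'.2.1, h'.2.2.trans hmI.2⟩⟩
        · have h' := Finset.mem_filter.mp h
          exact Finset.mem_erase.mpr ⟨h'.2.1.ne', Finset.mem_filter.mpr
            ⟨h'.1, hmI.1.trans h'.2.1, h'.2.2⟩⟩
      have := Finset.card_le_card hss
      rw [Finset.card_erase_of_mem hm] at this
      have hpos := Finset.card_pos.mpr ⟨m, hm⟩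
      omega
    set n1 := (S.filter (fun x => x ∈ Set.Ioo c m)).card
    set n2 := (S.filter (fun x => x ∈ Set.Ioo m e)).card
    have h1 := ih n1 (by omega) c m hmI.1.le le_rfl
    have h2 := ih n2 (by omega) m e hmI.2.le le_rfl
    have hcont : Continuous (fun x => deriv φ (p.eval x)) :=
      (hφ.continuous_deriv le_rfl).comp p.continuous
    rw [← intervalIntegral.integral_add_adjacent_intervals (hcont.intervalIntegrable c m)
      (hcont.intervalIntegrable m e)]
    have hvol : volume.real ({x | |p.derivative.eval x| ≤ δ} ∩ Set.Ioc c e) =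
        volume.real ({x | |p.derivative.eval x| ≤ δ} ∩ Set.Ioc c m) +
        volume.real ({x | |p.derivative.eval x| ≤ δ} ∩ Set.Ioc m e) := by
      rw [← Set.Ioc_union_Ioc_eq_Ioc hmI.1.le hmI.2.le, Set.inter_union_distrib_left]
      have hm : MeasurableSet {x | |p.derivative.eval x| ≤ δ} :=
        (isClosed_le (by fun_prop) continuous_const).measurableSet
      apply measureReal_union
      · rw [Set.disjoint_left]
        rintro x ⟨_, hx⟩ ⟨_, hx'⟩
        exact absurd hx.2 (not_le.mpr hx'.1)
      · exact hm.inter measurableSet_Ioc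
      · exact measure_ne_top_of_subset Set.inter_subset_right (by simp)
      · exact measure_ne_top_of_subset Set.inter_subset_right (by simp)
    have h3 := abs_add_le (∫ x in c..m, deriv φ (p.eval x)) (∫ x in m..e, deriv φ (p.eval x))
    have h4 : ((n1 : ℝ) + n2 + 1) ≤ n := by exact_mod_cast hsub
    have h5 : 0 ≤ 4 * ε / δ := by positivity
    nlinarith
  · have hno : ∀ x ∈ Set.Ioo c e, x ∉ S := fun x hx hxS =>
      hne ⟨x, Finset.mem_filter.mpr ⟨hxS, hx⟩⟩
    have := osc_base hφ hδ hb hb' hce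
      (sign_const (g := fun x => p.derivative.eval x ^ 2 - δ ^ 2) (by fun_prop) hlt
        (fun x hx => (hS x (hno x hx)).1))
      (sign_const (g := fun x => p.derivative.derivative.eval x) (by fun_prop) hlt
        (fun x hx => (hS x (hno x hx)).2))
    have h5 : 0 ≤ 4 * ε / δ := by positivity
    have : 0 ≤ (n : ℝ) * (4 * ε / δ) := by positivity
    linarith

/-- Bound of `∫ φ'(p)` by the measure of `{|p'| ≤ δ}` and a multiple of `d ε / δ`: the polynomial
`p'' (p' ^ 2 - δ ^ 2)` has at most `3 d` zeros, unless `p'` is constant. -/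
lemma osc_poly {p : Polynomial ℝ} {d : ℕ} (hp : p.natDegree ≤ d) {φ : ℝ → ℝ}
    (hφ : ContDiff ℝ 1 φ) {ε δ : ℝ}
    (hδ : 0 < δ) (hb : ∀ t, |φ t| ≤ ε) (hb' : ∀ t, |deriv φ t| ≤ 1) (c e : ℝ) (hce : c ≤ e) :
    |∫ x in c..e, deriv φ (p.eval x)| ≤
      volume.real ({x | |p.derivative.eval x| ≤ δ} ∩ Set.Ioc c e) + (3 * d + 1) * (4 * ε / δ) := by
  have hε : 0 ≤ ε := (abs_nonneg _).trans (hb 0)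
  have h5 : 0 ≤ 4 * ε / δ := by positivity
  set q := p.derivative with hq
  by_cases hr : q.derivative = 0
  · have hq0 := Polynomial.eq_C_of_natDegree_eq_zero (Polynomial.derivative_eq_zero.mp hr)
    have := osc_base (p := p) hφ hδ hb hb' hce (by
      rw [← hq, hq0]
      simp only [Polynomial.eval_C]
      rcases le_total 0 (q.coeff 0 ^ 2 - δ ^ 2) with h | h
      · exact Or.inl fun _ _ => h
      · exact Or.inr fun _ _ => h) (by rw [← hq, hr]; simp)
    have : 0 ≤ (3 * d : ℝ) * (4 * ε / δ) := by positivity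
    linarith
  · set Q := (q ^ 2 - Polynomial.C (δ ^ 2)) * q.derivative with hQ
    have hdq : q.natDegree ≤ d := (Polynomial.natDegree_derivative_le p).trans (by omega)
    have hQ0 : Q ≠ 0 := by
      apply mul_ne_zero _ hr
      intro h
      have h1 : q ^ 2 = Polynomial.C (δ ^ 2) := sub_eq_zero.mp h
      have h2 := congrArg Polynomial.natDegree h1
      rw [Polynomial.natDegree_pow, Polynomial.natDegree_C] at h2
      have h3 : q.natDegree = 0 := by omega
      apply hr
      rw [Polynomial.eq_C_of_natDegree_eq_zero h3, Polynomial.derivative_C]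
    have hdeg : Q.natDegree ≤ 3 * d := by
      refine Polynomial.natDegree_mul_le.trans ?_
      have h1 : (q ^ 2 - Polynomial.C (δ ^ 2)).natDegree ≤ 2 * d := by
        rw [Polynomial.natDegree_sub_C, Polynomial.natDegree_pow]; omega
      have h2 := (Polynomial.natDegree_derivative_le q)
      omega
    have hcard : Q.roots.toFinset.card ≤ 3 * d :=
      (Multiset.toFinset_card_le _).trans ((Polynomial.card_roots' Q).trans hdeg)
    have := osc_split hφ hδ hb hb' Q.roots.toFinset (p := p) (fun x hx => by
      have h1 : Q.eval x ≠ 0 := fun h => hx (by simp [hQ0, h])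
      rw [hQ] at h1
      simp only [Polynomial.eval_mul, Polynomial.eval_sub, Polynomial.eval_pow,
        Polynomial.eval_C] at h1
      exact mul_ne_zero_iff.mp h1) (3 * d) c e hce
      ((Finset.card_filter_le _ _).trans hcard)
    push_cast at this
    exact this

/-- If `φ` vanishes on `[0, ∞)` and `p` reaches the value `1` on `[a, b]`, then `φ'(p)` has a
small integral over every subinterval `[c, e]`. The threshold `δ ~ d ε ^ (1 - 1 / d) / (b - a)`
on `|p'|` is the one that makes the final constant independent of `d`. -/
lemma osc_interval {p : Polynomial ℝ} {d : ℕ} (hd : 0 < d) (hp : p.natDegree ≤ d) {φ : ℝ → ℝ}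
    (hφ : ContDiff ℝ 1 φ) {ε : ℝ} (hε : 0 < ε) (hb : ∀ t, |φ t| ≤ ε)
    (hb' : ∀ t, |deriv φ t| ≤ 1) (hz : ∀ t, 0 ≤ t → φ t = 0) {a b c e : ℝ} (hac : a ≤ c)
    (hce : c ≤ e) (heb : e ≤ b) (hy : ∃ y ∈ Set.Icc a b, 1 ≤ p.eval y) :
    |∫ x in c..e, deriv φ (p.eval x)| ≤ 64 * (b - a) * ε ^ (1 / (d : ℝ)) := by
  have hη : 0 < ε ^ (1 / (d : ℝ)) := Real.rpow_pos_of_pos hε _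
  by_cases hx : ∃ x ∈ Set.Icc c e, p.eval x ≤ 0
  swap
  · push Not at hx
    have h0 : ∀ x ∈ Set.uIcc c e, deriv φ (p.eval x) = 0 := by
      intro x hxx
      rw [Set.uIcc_of_le hce] at hxx
      have : φ =ᶠ[nhds (p.eval x)] fun _ => 0 := by
        filter_upwards [Ioi_mem_nhds (hx x hxx)] with t ht
        exact hz t (le_of_lt ht)
      rw [this.deriv_eq]; simp
    rw [intervalIntegral.integral_congr h0]
    simp only [intervalIntegral.integral_zero, abs_zero]
    have : 0 ≤ b - a := by linarith
    positivity
  obtain ⟨x, hx, hx0⟩ := hx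
  obtain ⟨y, hy, hy1⟩ := hy
  have hxab : x ∈ Set.Icc a b := ⟨hac.trans hx.1, hx.2.trans heb⟩
  have hxy : x ≠ y := by rintro rfl; linarith
  have hL : 0 < b - a := by
    rcases lt_or_gt_of_ne hxy with h | h
    · linarith [hxab.1, hy.2]
    · linarith [hxab.2, hy.1]
  set L := b - a with hLdef
  obtain ⟨ξ, hξ, hξ1⟩ : ∃ ξ ∈ Set.Icc a b, 1 ≤ |p.derivative.eval ξ| * L := by
    have hconv : Convex ℝ (Set.Icc a b) := convex_Icc a b
    by_contra hcon
    push Not at hcon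
    have hle : ∀ z ∈ Set.Icc a b, ‖deriv (fun z => p.eval z) z‖ ≤ |p.derivative.eval z| := by
      intro z _; rw [Polynomial.deriv]; exact le_rfl
    obtain ⟨z0, hz0, hmax⟩ := isCompact_Icc.exists_isMaxOn (Set.nonempty_of_mem hxab)
      (p.derivative.continuous.abs.continuousOn (s := Set.Icc a b))
    have := hconv.norm_image_sub_le_of_norm_deriv_le (f := fun z => p.eval z)
      (fun z _ => p.differentiableAt) (C := |p.derivative.eval z0|)
      (fun z hz => (hle z hz).trans (hmax hz)) hxab hy
    have h1 : |y - x| ≤ L := by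
      rw [abs_le]; constructor <;> linarith [hxab.1, hxab.2, hy.1, hy.2]
    have h2 : 1 ≤ p.eval y - p.eval x := by linarith
    rw [Real.norm_eq_abs, Real.norm_eq_abs] at this
    have h3 := (h2.trans (le_abs_self _)).trans this
    have h4 := hcon z0 hz0
    have h5 := mul_le_mul_of_nonneg_left h1 (abs_nonneg (p.derivative.eval z0))
    linarith
  set η := ε ^ (1 / (d : ℝ)) with hηdef
  have hηd : η ^ d = ε := by
    rw [hηdef, ← Real.rpow_natCast, ← Real.rpow_mul hε.le]
    have : (d : ℝ) ≠ 0 := by exact_mod_cast hd.ne'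
    rw [one_div_mul_cancel this, Real.rpow_one]
  have hd1 : (1 : ℝ) ≤ d := by exact_mod_cast hd
  set δ := d * η ^ (d - 1) / (2 * L) with hδdef
  have hδ : 0 < δ := by positivity
  have hmain := osc_poly hp hφ hδ hb hb' c e hce
  set V := volume.real ({x | |p.derivative.eval x| ≤ δ} ∩ Set.Ioc c e) with hV
  have hV1 : V ≤ 32 * L * η := by
    by_contra hcon
    push Not at hcon
    have hVpos : 0 < V := lt_trans (by positivity) hcon
    have hsub : ({x | |p.derivative.eval x| ≤ δ} ∩ Set.Ioc c e) ⊆ Set.Icc a b := fun z hz =>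
      ⟨hac.trans hz.2.1.le, hz.2.2.trans heb⟩
    have hr := remez (p := p.derivative) (d := d - 1)
      ((Polynomial.natDegree_derivative_le p).trans (by omega)) hVpos hsub
      (fun z hz => hz.1) (by
        rw [hV, ofReal_measureReal (measure_ne_top_of_subset hsub (by simp))]) hξ
    have h1 : 16 * L / V ≤ (2 * η)⁻¹ := by
      rw [div_le_iff₀ hVpos]
      have : (2 * η)⁻¹ * (32 * L * η) = 16 * L := by field_simp; norm_num
      rw [← this]
      exact mul_le_mul_of_nonneg_left hcon.le (by positivity)
    have h2 : (16 * L / V) ^ (d - 1) ≤ (2 * η)⁻¹ ^ (d - 1) :=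
      pow_le_pow_left₀ (by positivity) h1 _
    have h3 : δ * (2 * η)⁻¹ ^ (d - 1) * L = d / 2 ^ d := by
      have h2d : (2 : ℝ) ^ d = 2 ^ (d - 1) * 2 := by
        rw [← pow_succ]; congr 1; omega
      rw [hδdef, h2d, inv_pow, mul_pow]
      field_simp
    have h4 : (d : ℝ) < 2 ^ d := by exact_mod_cast Nat.lt_two_pow_self
    have h5 : (d : ℝ) / 2 ^ d < 1 := by rw [div_lt_one (by positivity)]; exact h4
    have h6 := mul_le_mul_of_nonneg_left h2 hδ.le
    have h7 := mul_le_mul_of_nonneg_right (hr.trans h6) hL.le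
    linarith
  have h8 : ε / δ = 2 * L * η / d := by
    rw [← hηd, hδdef]
    have : η ^ d = η ^ (d - 1) * η := by rw [← pow_succ]; congr 1; omega
    rw [this]
    field_simp
  have h9 : (3 * d + 1) * (4 * ε / δ) ≤ 32 * L * η := by
    rw [mul_div_assoc, h8]
    have : (3 * (d : ℝ) + 1) * (4 * (2 * L * η / d)) = 8 * L * η * ((3 * d + 1) / d) := by ring
    rw [this]
    have : (3 * (d : ℝ) + 1) / d ≤ 4 := by rw [div_le_iff₀ (by linarith)]; linarith
    have h10 : 0 ≤ 8 * L * η := by positivity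
    nlinarith
  linarith

/-! ### Power means and `s`-concave densities on the line -/

/-- The `s`-power mean of `a` and `b` with weights `α` and `1 - α`; the geometric mean if
`s = 0`. -/
def pm (s α a b : ℝ) : ℝ :=
  if s = 0 then a ^ α * b ^ (1 - α) else (α * a ^ s + (1 - α) * b ^ s) ^ s⁻¹

lemma pm_geom {s α a b : ℝ} (hs : 0 ≤ s) (ha : 0 < a) (hb : 0 < b) (h0 : 0 ≤ α) (h1 : α ≤ 1) :
    a ^ α * b ^ (1 - α) ≤ pm s α a b := by
  unfold pm
  split_ifs with h
  · exact le_rfl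
  · have hs' : 0 < s := lt_of_le_of_ne hs (Ne.symm h)
    have h2 := Real.geom_mean_le_arith_mean2_weighted h0 (by linarith : 0 ≤ 1 - α)
      (Real.rpow_nonneg ha.le s) (Real.rpow_nonneg hb.le s) (by ring)
    have h3 := Real.rpow_le_rpow (by positivity) h2 (inv_nonneg.mpr hs)
    refine le_trans (le_of_eq ?_) h3
    rw [Real.mul_rpow (by positivity) (by positivity), ← Real.rpow_mul (by positivity),
      ← Real.rpow_mul (by positivity), ← Real.rpow_mul (by positivity),
      ← Real.rpow_mul (by positivity)]
    congr 2 <;> field_simp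

lemma pm_mono {s α a b a' b' : ℝ} (hs : 0 ≤ s) (ha : 0 < a) (hb : 0 < b) (h0 : 0 ≤ α)
    (h1 : α ≤ 1) (haa : a ≤ a') (hbb : b ≤ b') : pm s α a b ≤ pm s α a' b' := by
  have h1' : 0 ≤ 1 - α := by linarith
  have ha' := ha.trans_le haa
  have hb' := hb.trans_le hbb
  unfold pm
  split_ifs with h
  · gcongr
  · have hs' : 0 < s := lt_of_le_of_ne hs (Ne.symm h)
    gcongr

lemma pm_self {s α a : ℝ} (ha : 0 < a) : pm s α a a = a := by
  unfold pm
  split_ifs with h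
  · rw [← Real.rpow_add ha]; simp
  · rw [← add_mul, show α + (1 - α) = 1 by ring, one_mul, ← Real.rpow_mul ha.le,
      mul_inv_cancel₀ h, Real.rpow_one]

lemma min_le_pm {s α a b : ℝ} (hs : 0 ≤ s) (ha : 0 < a) (hb : 0 < b) (h0 : 0 ≤ α) (h1 : α ≤ 1) :
    min a b ≤ pm s α a b := by
  have hm : 0 < min a b := lt_min ha hb
  rw [← pm_self (s := s) (α := α) hm]
  exact pm_mono hs hm hm h0 h1 (min_le_left _ _) (min_le_right _ _)

lemma pm_pos {s α a b : ℝ} (hs : 0 ≤ s) (ha : 0 < a) (hb : 0 < b) (h0 : 0 ≤ α) (h1 : α ≤ 1) :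
    0 < pm s α a b := (lt_min ha hb).trans_le (min_le_pm hs ha hb h0 h1)

lemma pm_homog {s α a b c : ℝ} (ha : 0 < a) (hb : 0 < b) (h0 : 0 ≤ α)
    (h1 : α ≤ 1) (hc : 0 < c) : pm s α (c * a) (c * b) = c * pm s α a b := by
  have h1' : 0 ≤ 1 - α := by linarith
  unfold pm
  split_ifs with h
  · rw [Real.mul_rpow hc.le ha.le, Real.mul_rpow hc.le hb.le]
    have : c ^ α * c ^ (1 - α) = c := by rw [← Real.rpow_add hc]; simp
    calc _ = (c ^ α * c ^ (1 - α)) * (a ^ α * b ^ (1 - α)) := by ring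
      _ = _ := by rw [this]
  · rw [Real.mul_rpow hc.le ha.le, Real.mul_rpow hc.le hb.le]
    rw [show α * (c ^ s * a ^ s) + (1 - α) * (c ^ s * b ^ s) =
      c ^ s * (α * a ^ s + (1 - α) * b ^ s) by ring]
    rw [Real.mul_rpow (by positivity) (by positivity), ← Real.rpow_mul hc.le,
      mul_inv_cancel₀ h, Real.rpow_one]

/-- A bounded probability density on `ℝ` satisfying the power mean inequality pointwise. -/
structure Dens (s : ℝ) (ρ : ℝ → ℝ) : Prop where
  nonneg : ∀ x, 0 ≤ ρ x
  meas : Measurable ρ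
  int : Integrable ρ
  one : ∫ x, ρ x = 1
  bdd : ∃ B, ∀ x, ρ x ≤ B
  conc : ∀ x y, 0 < ρ x → 0 < ρ y → ∀ α, 0 < α → α < 1 →
    pm s α (ρ x) (ρ y) ≤ ρ (α * x + (1 - α) * y)

namespace Dens

variable {s : ℝ} {ρ : ℝ → ℝ}

/-- A point where `ρ` is at least half its supremum. -/
lemma exists_peak (h : Dens s ρ) : ∃ x0, 0 < ρ x0 ∧ ∀ x, ρ x ≤ 2 * ρ x0 := by
  have hbdd : BddAbove (Set.range ρ) := by
    obtain ⟨B, hB⟩ := h.bdd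
    exact ⟨B, by rintro _ ⟨x, rfl⟩; exact hB x⟩
  have hpos : 0 < ⨆ x, ρ x := by
    by_contra hcon
    have : ∀ x, ρ x = 0 := fun x =>
      le_antisymm ((le_ciSup hbdd x).trans (not_lt.mp hcon)) (h.nonneg x)
    have h1 := h.one
    simp [this] at h1
  obtain ⟨x0, hx0⟩ := exists_lt_of_lt_ciSup (half_lt_self hpos)
  refine ⟨x0, (half_pos hpos).trans hx0, fun x => ?_⟩
  have := le_ciSup hbdd x
  linarith

/-- Quasi-concavity. -/
lemma quasi (h : Dens s ρ) (hs : 0 ≤ s) {c x y z : ℝ} (hc : 0 < c) (hx : c ≤ ρ x) (hy : c ≤ ρ y)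
    (hz : z ∈ Set.uIcc x y) : c ≤ ρ z := by
  rw [← segment_eq_uIcc] at hz
  obtain ⟨α, β, hα, hβ, hαβ, rfl⟩ := hz
  have hβ' : β = 1 - α := by linarith
  rcases hα.eq_or_lt with rfl | hα
  · simpa [hβ'] using hy
  rcases hβ.eq_or_lt with rfl | hβ
  · have : α = 1 := by linarith
    simpa [this] using hx
  have h1 := h.conc x y (hc.trans_le hx) (hc.trans_le hy) α hα (by linarith)
  have h2 := min_le_pm hs (hc.trans_le hx) (hc.trans_le hy) hα.le (by linarith : α ≤ 1)
  simp only [smul_eq_mul, hβ']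
  exact (le_min hx hy).trans (h2.trans h1)

lemma level_lt_top (h : Dens s ρ) {c : ℝ} (hc : 0 < c) {T : Set ℝ} (hT : ∀ x ∈ T, c ≤ ρ x) :
    volume T < ⊤ :=
  (measure_mono hT).trans_lt (h.int.measure_ge_lt_top hc)

lemma level_le (h : Dens s ρ) {c : ℝ} (hc : 0 < c) {T : Set ℝ} (hT : ∀ x ∈ T, c ≤ ρ x) :
    c * volume.real T ≤ 1 := by
  have h1 := mul_meas_ge_le_integral_of_nonneg (Filter.Eventually.of_forall h.nonneg) h.int c
  rw [h.one] at h1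
  refine le_trans ?_ h1
  refine mul_le_mul_of_nonneg_left ?_ hc.le
  exact measureReal_mono hT (h.int.measure_ge_lt_top hc).ne

lemma segment_le (h : Dens s ρ) (hs : 0 ≤ s) {c x y : ℝ} (hc : 0 < c) (hx : c ≤ ρ x)
    (hy : c ≤ ρ y) : c * |x - y| ≤ 1 := by
  have := h.level_le hc (T := Set.uIcc x y) fun z hz => h.quasi hs hc hx hy hz
  rwa [Set.uIcc, Real.volume_real_Icc_of_le inf_le_sup, max_sub_min_eq_abs, abs_sub_comm] at this

lemma midpoint (h : Dens s ρ) (hs : 0 ≤ s) (x y : ℝ) :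
    ρ x * ρ y ≤ ρ ((x + y) / 2) ^ 2 := by
  rcases (h.nonneg x).eq_or_lt with h0 | hx
  · rw [← h0]; nlinarith
  rcases (h.nonneg y).eq_or_lt with h0 | hy
  · rw [← h0]; nlinarith
  have h1 := h.conc x y hx hy (1 / 2) (by norm_num) (by norm_num)
  have h2 := pm_geom hs hx hy (by norm_num : (0:ℝ) ≤ 1 / 2) (by norm_num)
  have h3 := h2.trans h1
  rw [show 1 / 2 * x + (1 - 1 / 2) * y = (x + y) / 2 by ring] at h3
  have h4 := pow_le_pow_left₀ (by positivity) h3 2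
  refine le_trans (le_of_eq ?_) h4
  rw [mul_pow, ← Real.rpow_natCast, ← Real.rpow_natCast, ← Real.rpow_mul hx.le,
    ← Real.rpow_mul hy.le]
  norm_num

/-- The change of variables `x ↦ (x + x0) / 2` doubles the integral of `ρ`. -/
lemma int_mid (h : Dens s ρ) (x0 : ℝ) : Integrable (fun x => ρ ((x + x0) / 2)) ∧
    ∫ x, ρ ((x + x0) / 2) = 2 := by
  constructor
  · exact (h.int.comp_div (by norm_num : (2:ℝ) ≠ 0)).comp_add_right x0
  · rw [integral_add_right_eq_self (fun x => ρ (x / 2)) x0, Measure.integral_comp_div, h.one]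
    norm_num

/-- The region where `ρ ≤ ρ x0 / 256` carries mass at most `1 / 8`: there `ρ x` is at most
`ρ ((x + x0) / 2) / 16`, by the geometric mean inequality between `x` and `x0`. -/
lemma low_mass (h : Dens s ρ) (hs : 0 ≤ s) (x0 : ℝ) :
    ∫ x in {x | ρ x ≤ ρ x0 / 256}, ρ x ≤ 1 / 8 := by
  obtain ⟨hi, hv⟩ := h.int_mid x0
  have hm : MeasurableSet {x | ρ x ≤ ρ x0 / 256} := measurableSet_le h.meas measurable_const
  have h1 : ∀ x ∈ {x | ρ x ≤ ρ x0 / 256}, ρ x ≤ 1 / 16 * ρ ((x + x0) / 2) := by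
    intro x hx
    have hx : ρ x ≤ ρ x0 / 256 := hx
    have h2 := h.midpoint hs x x0
    have h3 := h.nonneg x
    have h4 := h.nonneg ((x + x0) / 2)
    apply le_of_sq_le_sq _ (by positivity)
    nlinarith
  calc ∫ x in {x | ρ x ≤ ρ x0 / 256}, ρ x
      ≤ ∫ x in {x | ρ x ≤ ρ x0 / 256}, 1 / 16 * ρ ((x + x0) / 2) :=
        setIntegral_mono_on h.int.integrableOn (hi.const_mul _).integrableOn hm h1
    _ ≤ ∫ x, 1 / 16 * ρ ((x + x0) / 2) :=
        setIntegral_le_integral (hi.const_mul _)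
          (Filter.Eventually.of_forall fun x => mul_nonneg (by norm_num) (h.nonneg _))
    _ = 1 / 8 := by rw [integral_const_mul, hv]; norm_num

lemma ordConnected (h : Dens s ρ) (hs : 0 ≤ s) {u : ℝ} (hu : 0 < u) :
    Set.OrdConnected {x | u < ρ x} := by
  rw [Set.ordConnected_iff_uIcc_subset]
  intro x hx y hy z hz
  have hx : u < ρ x := hx
  have hy : u < ρ y := hy
  exact lt_of_lt_of_le (lt_min hx hy)
    (h.quasi hs (hu.trans (lt_min hx hy)) (min_le_left _ _) (min_le_right _ _) hz)

end Dens

/-! ### Layer cake and the oscillatory integral for a density -/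

/-- The interval estimate for order-connected sets `I ⊆ J` of finite length, where the larger set
`J` contains a point with `p ≥ 1`. -/
lemma osc_ordConnected {p : Polynomial ℝ} {d : ℕ} (hd : 0 < d) (hp : p.natDegree ≤ d) {φ : ℝ → ℝ}
    (hφ : ContDiff ℝ 1 φ) {ε : ℝ} (hε : 0 < ε) (hb : ∀ t, |φ t| ≤ ε)
    (hb' : ∀ t, |deriv φ t| ≤ 1) (hz : ∀ t, 0 ≤ t → φ t = 0) {I J : Set ℝ}
    (hI : I.OrdConnected) (hJ : J.OrdConnected) (hIJ : I ⊆ J) (hJt : volume J < ⊤)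
    (hy : ∃ y ∈ J, 1 ≤ p.eval y) :
    |∫ x in I, deriv φ (p.eval x)| ≤ 64 * volume.real J * ε ^ (1 / (d : ℝ)) := by
  have hη : 0 < ε ^ (1 / (d : ℝ)) := Real.rpow_pos_of_pos hε _
  obtain ⟨y, hyJ, hy1⟩ := hy
  have hbA : BddAbove J := by
    by_contra hcon
    have : Set.Ici y ⊆ J := by
      intro z hz
      obtain ⟨w, hw, hzw⟩ := not_bddAbove_iff.mp hcon z
      exact hJ.out hyJ hw ⟨hz, hzw.le⟩
    have := (measure_mono this).trans_lt hJt
    simp at this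
  have hbB : BddBelow J := by
    by_contra hcon
    have : Set.Iic y ⊆ J := by
      intro z hz
      obtain ⟨w, hw, hzw⟩ := not_bddBelow_iff.mp hcon z
      exact hJ.out hw hyJ ⟨hzw.le, hz⟩
    have := (measure_mono this).trans_lt hJt
    simp at this
  have hsubI : ∀ K : Set ℝ, K.OrdConnected → K.Nonempty → BddAbove K → BddBelow K →
      Set.Ioo (sInf K) (sSup K) ⊆ K := by
    intro K hK hne h1 h2 z hz
    obtain ⟨u, hu, huz⟩ := exists_lt_of_csInf_lt hne hz.1
    obtain ⟨v, hv, hzv⟩ := exists_lt_of_lt_csSup hne hz.2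
    exact hK.out hu hv ⟨huz.le, hzv.le⟩
  have hJlen : sSup J - sInf J ≤ volume.real J := by
    have h1 := measureReal_mono (hsubI J hJ ⟨y, hyJ⟩ hbA hbB) hJt.ne
    have : sInf J ≤ sSup J := (csInf_le hbB hyJ).trans (le_csSup hbA hyJ)
    rwa [Real.volume_real_Ioo_of_le this] at h1
  rcases I.eq_empty_or_nonempty with rfl | hne
  · simp; positivity
  have hIA := hbA.mono hIJ
  have hIB := hbB.mono hIJ
  obtain ⟨z, hzI⟩ := hne
  have hle : sInf I ≤ sSup I := (csInf_le hIB hzI).trans (le_csSup hIA hzI)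
  have hae : I =ᵐ[volume] Set.Ioc (sInf I) (sSup I) := by
    have h1 : I ⊆ Set.Icc (sInf I) (sSup I) := fun x hx => ⟨csInf_le hIB hx, le_csSup hIA hx⟩
    have h2 := hsubI I hI ⟨z, hzI⟩ hIA hIB
    have h3 : Set.Ioo (sInf I) (sSup I) =ᵐ[volume] Set.Icc (sInf I) (sSup I) := Ioo_ae_eq_Icc
    have h4 : I =ᵐ[volume] Set.Icc (sInf I) (sSup I) :=
      Filter.EventuallyLE.antisymm (LE.le.eventuallyLE h1)
        (h3.symm.le.trans (LE.le.eventuallyLE h2))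
    exact h4.trans Ioc_ae_eq_Icc.symm
  rw [setIntegral_congr_set hae, ← intervalIntegral.integral_of_le hle]
  have := osc_interval hd hp hφ hε hb hb' hz (a := sInf J) (b := sSup J)
    (csInf_le_csInf hbB ⟨z, hzI⟩ hIJ) hle (csSup_le_csSup hbA ⟨z, hzI⟩ hIJ)
    ⟨y, ⟨csInf_le hbB hyJ, le_csSup hbA hyJ⟩, hy1⟩
  refine this.trans ?_
  gcongr

namespace Dens

variable {s : ℝ} {ρ : ℝ → ℝ}

/-- Layer cake formula for a bounded weight `g`. -/
lemma layer (h : Dens s ρ) {B : ℝ} (hB : ∀ x, ρ x ≤ B) {g : ℝ → ℝ} (hg : Measurable g)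
    (hg1 : ∀ x, |g x| ≤ 1) :
    IntegrableOn (fun u => ∫ x in {x | u < ρ x}, g x) (Set.Ioc 0 B) ∧
    ∫ u in Set.Ioc 0 B, ∫ x in {x | u < ρ x}, g x = ∫ x, g x * ρ x := by
  have hB0 : 0 ≤ B := (h.nonneg 0).trans (hB 0)
  set G : ℝ × ℝ → ℝ := fun z => Set.indicator {z : ℝ × ℝ | z.2 < ρ z.1} (fun z => g z.1) z with hG
  have hmset : MeasurableSet {z : ℝ × ℝ | z.2 < ρ z.1} :=
    measurableSet_lt measurable_snd (h.meas.comp measurable_fst)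
  have hGm : Measurable G := (hg.comp measurable_fst).indicator hmset
  have hInner : ∀ x, ∫ u in Set.Ioc 0 B, G (x, u) = g x * ρ x := by
    intro x
    have h1 : ∀ u, G (x, u) = Set.indicator (Set.Iio (ρ x)) (fun _ => g x) u := fun u => rfl
    simp_rw [h1]
    rw [setIntegral_indicator measurableSet_Iio, setIntegral_const]
    have h2 : (Set.Ioc 0 B ∩ Set.Iio (ρ x)) = Set.Ioo 0 (ρ x) := by
      ext u; simp only [Set.mem_inter_iff, Set.mem_Ioc, Set.mem_Iio, Set.mem_Ioo]
      exact ⟨fun h => ⟨h.1.1, h.2⟩, fun h => ⟨⟨h.1, h.2.le.trans (hB x)⟩, h.2⟩⟩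
    rw [h2, Real.volume_real_Ioo_of_le (h.nonneg x), smul_eq_mul, sub_zero, mul_comm]
  have hNorm : ∀ x, ∫ u in Set.Ioc 0 B, ‖G (x, u)‖ = |g x| * ρ x := by
    intro x
    have h1 : ∀ u, ‖G (x, u)‖ = Set.indicator (Set.Iio (ρ x)) (fun _ => |g x|) u := by
      intro u
      rw [← Real.norm_eq_abs, ← norm_indicator_eq_indicator_norm]; rfl
    simp_rw [h1]
    rw [setIntegral_indicator measurableSet_Iio, setIntegral_const]
    have h2 : (Set.Ioc 0 B ∩ Set.Iio (ρ x)) = Set.Ioo 0 (ρ x) := by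
      ext u; simp only [Set.mem_inter_iff, Set.mem_Ioc, Set.mem_Iio, Set.mem_Ioo]
      exact ⟨fun h => ⟨h.1.1, h.2⟩, fun h => ⟨⟨h.1, h.2.le.trans (hB x)⟩, h.2⟩⟩
    rw [h2, Real.volume_real_Ioo_of_le (h.nonneg x), smul_eq_mul, sub_zero, mul_comm]
  have hitg : Integrable G (volume.prod (volume.restrict (Set.Ioc 0 B))) := by
    rw [integrable_prod_iff hGm.aestronglyMeasurable]
    constructor
    · refine Filter.Eventually.of_forall fun x => ?_
      refine Measure.integrableOn_of_bounded (M := 1) (by simp)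
        (hGm.comp measurable_prodMk_left).aestronglyMeasurable ?_
      refine Filter.Eventually.of_forall fun u => ?_
      simp only [hG]
      rw [norm_indicator_eq_indicator_norm]
      exact Set.indicator_apply_le' (fun _ => hg1 x) (fun _ => zero_le_one)
    · simp_rw [hNorm]
      refine h.int.mono ((hg.abs.mul h.meas).aestronglyMeasurable) ?_
      refine Filter.Eventually.of_forall fun x => ?_
      rw [Real.norm_eq_abs, Real.norm_eq_abs, abs_mul, abs_abs]
      exact mul_le_of_le_one_left (abs_nonneg _) (hg1 x)
  have hout : ∀ u, ∫ x, G (x, u) = ∫ x in {x | u < ρ x}, g x := by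
    intro u
    rw [← integral_indicator (measurableSet_lt measurable_const h.meas)]
    rfl
  constructor
  · have := hitg.integral_prod_right
    simp_rw [hout] at this
    exact this
  · simp_rw [← hout, ← hInner]
    rw [integral_integral_swap (f := fun x u => G (x, u)) hitg]

/-- A set carrying more than `1 / 8` of the mass meets the region where `ρ > ρ x0 / 256`. -/
lemma exists_large (h : Dens s ρ) (hs : 0 ≤ s) (x0 : ℝ) {T : Set ℝ}
    (hm : 1 / 8 < ∫ x in T, ρ x) : ∃ y ∈ T, ρ x0 / 256 < ρ y := by
  by_contra hcon
  push Not at hcon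
  have h1 : ∫ x in T, ρ x ≤ ∫ x in {x | ρ x ≤ ρ x0 / 256}, ρ x :=
    setIntegral_mono_set h.int.integrableOn
      (Filter.Eventually.of_forall fun x => h.nonneg x)
      (LE.le.eventuallyLE hcon)
  linarith [h.low_mass hs x0]

/-- One-sided oscillation estimate for a density. Layer cake reduces it to the intervals `{ρ > u}`,
each of which is compared with the interval `{ρ > ρ x0 / 256}`, of length `O(1 / ρ x0)`, where `p`
reaches the value `1`. -/
theorem osc (h : Dens s ρ) (hs : 0 ≤ s) {p : Polynomial ℝ} {d : ℕ} (hd : 0 < d)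
    (hp : p.natDegree ≤ d) {φ : ℝ → ℝ}
    (hφ : ContDiff ℝ 1 φ) {ε : ℝ} (hε : 0 < ε) (hb : ∀ t, |φ t| ≤ ε)
    (hb' : ∀ t, |deriv φ t| ≤ 1) (hz : ∀ t, 0 ≤ t → φ t = 0)
    (hm : 1 / 8 < ∫ x in {x | 1 ≤ p.eval x}, ρ x) :
    ∫ x, deriv φ (p.eval x) * ρ x ≤ 32832 * ε ^ (1 / (d : ℝ)) := by
  have hη : 0 < ε ^ (1 / (d : ℝ)) := Real.rpow_pos_of_pos hε _
  obtain ⟨x0, h0, hB⟩ := h.exists_peak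
  set r := ρ x0 with hr
  obtain ⟨y, hy1, hy⟩ := h.exists_large hs x0 hm
  have hgm : Measurable fun x => deriv φ (p.eval x) :=
    (hφ.continuous_deriv le_rfl).measurable.comp p.continuous.measurable
  obtain ⟨hi, he⟩ := h.layer hB hgm (fun x => hb' _)
  obtain ⟨hi1, he1⟩ := h.layer hB (g := fun _ => 1) measurable_const (by simp)
  rw [← he]
  have hK : 0 < r / 256 := by positivity
  have hKl : volume.real {x | r / 256 < ρ x} ≤ 256 / r := by
    have := h.level_le hK (T := {x | r / 256 < ρ x}) (fun x hx => le_of_lt hx)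
    rw [le_div_iff₀ h0]; linarith
  have key : ∀ u ∈ Set.Ioc 0 (2 * r), ∫ x in {x | u < ρ x}, deriv φ (p.eval x) ≤
      64 * ε ^ (1 / (d : ℝ)) * ((∫ x in {x | u < ρ x}, 1) + 256 / r) := by
    intro u hu
    have h1 : ∫ x in {x | u < ρ x}, (1:ℝ) = volume.real {x | u < ρ x} := by simp
    rw [h1]
    refine (le_abs_self _).trans ?_
    rcases le_or_gt u (r / 256) with hur | hur
    · have := osc_ordConnected hd hp hφ hε hb hb' hz (h.ordConnected hs hu.1)
        (h.ordConnected hs hu.1) (subset_refl _)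
        (h.level_lt_top hu.1 fun x hx => le_of_lt hx) ⟨y, hur.trans_lt hy, hy1⟩
      have h2 : 0 ≤ 64 * (256 / r) * ε ^ (1 / (d : ℝ)) := by positivity
      linarith
    · have := osc_ordConnected hd hp hφ hε hb hb' hz (h.ordConnected hs hu.1)
        (h.ordConnected hs hK) (fun x (hx : u < ρ x) => hur.trans hx)
        (h.level_lt_top hK fun x hx => le_of_lt hx) ⟨y, hy, hy1⟩
      have h2 : 0 ≤ 64 * volume.real {x | u < ρ x} * ε ^ (1 / (d : ℝ)) := by positivity
      have h3 : 64 * volume.real {x | r / 256 < ρ x} * ε ^ (1 / (d : ℝ)) ≤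
        64 * (256 / r) * ε ^ (1 / (d : ℝ)) := by gcongr
      linarith
  have hci : IntegrableOn (fun _ : ℝ => 256 / r) (Set.Ioc 0 (2 * r)) :=
    integrableOn_const measure_Ioc_lt_top.ne
  refine (setIntegral_mono_on hi ((hi1.add hci).const_mul _) measurableSet_Ioc key).trans ?_
  rw [integral_const_mul]
  simp only [Pi.add_apply]
  rw [integral_add hi1 hci, he1]
  simp only [one_mul, h.one, setIntegral_const, smul_eq_mul]
  rw [Real.volume_real_Ioc_of_le (by positivity)]
  have : (2 * r - 0) * (256 / r) = 512 := by field_simp; ring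
  rw [this]
  linarith

end Dens

/-! ### Second moments of polynomials against a density -/

lemma half_one_add_le_two_rpow {y : ℝ} (hy : 0 ≤ y) : (1 + y) / 2 ≤ (2 : ℝ) ^ y := by
  rw [Real.rpow_def_of_pos two_pos]
  have h1 := Real.add_one_le_exp (Real.log 2 * y)
  have h2 := Real.log_two_gt_d9
  nlinarith

/-- The factor `min{d, 1/s}`, read as `d` when `s = 0`. -/
def dimFactor (s : ℝ) (d : ℕ) : ℝ := if s = 0 then (d : ℝ) else min (d : ℝ) s⁻¹

lemma one_le_dimFactor {s : ℝ} {d : ℕ} (hs : 0 ≤ s) (hs1 : s ≤ 1) (hd : 0 < d) :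
    1 ≤ dimFactor s d := by
  have hd1 : (1 : ℝ) ≤ d := by exact_mod_cast hd
  unfold dimFactor
  split_ifs with h
  · exact hd1
  · exact le_min hd1 ((one_le_inv₀ (lt_of_le_of_ne hs (Ne.symm h))).mpr hs1)

namespace Dens

variable {s : ℝ} {ρ : ℝ → ℝ}

/-- Exponential decay away from the peak `x0`, at rate `ρ x0`. -/
lemma decay (h : Dens s ρ) (hs : 0 ≤ s) {x0 : ℝ} (h0 : 0 < ρ x0) (hB : ∀ x, ρ x ≤ 2 * ρ x0)
    (x : ℝ) : ρ x / ρ x0 ≤ 4 * (2 : ℝ) ^ (-(ρ x0 * |x - x0| / 4)) := by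
  set r := ρ x0 with hr
  set w := r * |x - x0| with hw
  have hw0 : 0 ≤ w := by positivity
  rcases (h.nonneg x).eq_or_lt with hx | hx
  · rw [← hx, zero_div]; positivity
  rcases le_or_gt w 4 with h4 | h4
  · have h1 : ρ x / r ≤ 2 := by rw [div_le_iff₀ h0]; exact hB x
    have h2 : (2 : ℝ) ^ (-1 : ℝ) ≤ (2 : ℝ) ^ (-(w / 4)) :=
      Real.rpow_le_rpow_of_exponent_le one_le_two (by linarith)
    rw [Real.rpow_neg_one] at h2
    linarith
  · set θ := 4 / w with hθ
    have hθ0 : 0 < θ := by positivity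
    have hθ1 : θ < 1 := by rw [hθ, div_lt_one (by linarith)]; exact h4
    set z := θ * x + (1 - θ) * x0 with hz
    have hzx : r * |z - x0| = 4 := by
      have : z - x0 = θ * (x - x0) := by rw [hz]; ring
      rw [this, abs_mul, abs_of_pos hθ0, mul_left_comm, ← hw, hθ]
      field_simp
    have hzr : ρ z ≤ r / 2 := by
      by_contra hcon
      push Not at hcon
      have := h.segment_le hs (c := r / 2) (by positivity) hcon.le (by linarith : r / 2 ≤ ρ x0)
      linarith
    have h1 := (pm_geom hs hx h0 hθ0.le hθ1.le).trans (h.conc x x0 hx h0 θ hθ0 hθ1)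
    rw [← hz] at h1
    have h2 : (ρ x / r) ^ θ ≤ (2:ℝ)⁻¹ := by
      have h3 : ρ x ^ θ * r ^ (1 - θ) = (ρ x / r) ^ θ * r := by
        rw [Real.div_rpow hx.le h0.le, Real.rpow_sub h0, Real.rpow_one]
        field_simp
      rw [h3] at h1
      have h4 := h1.trans hzr
      rw [div_eq_mul_inv r, mul_comm r] at h4
      exact le_of_mul_le_mul_right h4 h0
    have h5 := Real.rpow_le_rpow (by positivity) h2 (by positivity : 0 ≤ w / 4)
    rw [← Real.rpow_mul (by positivity), show θ * (w / 4) = 1 by rw [hθ]; field_simp,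
      Real.rpow_one, Real.inv_rpow two_pos.le, ← Real.rpow_neg two_pos.le] at h5
    have : 0 ≤ (2 : ℝ) ^ (-(w / 4)) := by positivity
    linarith

/-- For `s > 0` the density lives within distance `4 / (s ρ x0)` of the point `x0`. -/
lemma support_le (h : Dens s ρ) (hs : 0 < s) (hs1 : s ≤ 1) {x0 : ℝ} (h0 : 0 < ρ x0)
    {x : ℝ} (hx : 0 < ρ x) : s * (ρ x0 * |x - x0|) ≤ 4 := by
  set r := ρ x0 with hr
  set z := s / 2 * x + (1 - s / 2) * x0 with hz
  have h1 := h.conc x x0 hx h0 (s / 2) (by positivity) (by linarith)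
  rw [← hz] at h1
  have h2 : r / 2 ≤ pm s (s / 2) (ρ x) (ρ x0) := by
    unfold pm
    rw [if_neg hs.ne']
    have h3 : (1 / 2 : ℝ) ^ s ≤ 1 - s / 2 := by
      have := rpow_one_add_le_one_add_mul_self (s := -1 / 2) (by norm_num) hs.le hs1
      norm_num at this ⊢
      linarith
    have h4 : (r / 2) ^ s ≤ s / 2 * ρ x ^ s + (1 - s / 2) * r ^ s := by
      have h5 : 0 ≤ s / 2 * ρ x ^ s := by positivity
      have h6 : (r / 2) ^ s = (1 / 2) ^ s * r ^ s := by
        rw [← Real.mul_rpow (by norm_num) h0.le]; congr 1; ring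
      have h7 : 0 ≤ r ^ s := by positivity
      rw [h6]
      nlinarith
    have h8 := Real.rpow_le_rpow (by positivity) h4 (inv_nonneg.mpr hs.le)
    rwa [← Real.rpow_mul (by positivity), mul_inv_cancel₀ hs.ne', Real.rpow_one] at h8
  have h9 := h.segment_le hs.le (c := r / 2) (by positivity) (h2.trans h1)
    (by linarith : r / 2 ≤ ρ x0)
  have h10 : z - x0 = s / 2 * (x - x0) := by rw [hz]; ring
  rw [h10, abs_mul, abs_of_pos (by positivity : 0 < s / 2)] at h9
  linarith

/-- A polynomial bounded by `M` on a set of mass at least `3 / 8` has second moment at most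
`M ^ 2 (2 ^ 18 min{d, 1/s}) ^ (2 d)`. By the Remez inequality `|p|` grows at most like
`M (C (1 + w)) ^ d` in the rescaled distance `w = ρ x0 |x - x0|` to the peak; the decay of `ρ` makes
`w ~ d` the relevant scale, and boundedness of the support forces `w ≤ 4 / s`. -/
theorem second_moment (h : Dens s ρ) (hs : 0 ≤ s) (hs1 : s ≤ 1) {p : Polynomial ℝ} {d : ℕ}
    (hd : 0 < d) (hp : p.natDegree ≤ d) {M : ℝ}
    (hm : 3 / 8 ≤ ∫ x in {x | |p.eval x| ≤ M}, ρ x) :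
    ∫ x, p.eval x ^ 2 * ρ x ≤ M ^ 2 * (2 ^ 18 * dimFactor s d) ^ (2 * d) := by
  obtain ⟨x0, h0, hB⟩ := h.exists_peak
  set r := ρ x0 with hr
  set m := dimFactor s d with hmdef
  have hd1 : (1 : ℝ) ≤ d := by exact_mod_cast hd
  have hm1 : 1 ≤ m := one_le_dimFactor hs hs1 hd
  set E := {x | |p.eval x| ≤ M} with hE
  have hEm : MeasurableSet E := (isClosed_le p.continuous.abs continuous_const).measurableSet
  set S := E ∩ {x | r / 256 < ρ x} with hS
  have hK : 0 < r / 256 := by positivity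
  have hKm : MeasurableSet {x | r / 256 < ρ x} := measurableSet_lt measurable_const h.meas
  have hSt : volume S < ⊤ := h.level_lt_top hK fun x hx => le_of_lt hx.2
  have hSv : 1 / (8 * r) ≤ volume.real S := by
    have h1 : ∫ x in E, ρ x = (∫ x in S, ρ x) + ∫ x in E \ {x | r / 256 < ρ x}, ρ x :=
      (integral_inter_add_sdiff hKm h.int.integrableOn).symm
    have h2 : ∫ x in E \ {x | r / 256 < ρ x}, ρ x ≤ ∫ x in {x | ρ x ≤ ρ x0 / 256}, ρ x :=
      setIntegral_mono_set h.int.integrableOn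
        (Filter.Eventually.of_forall fun x => h.nonneg x)
        (LE.le.eventuallyLE fun x (hx : x ∈ E ∧ ¬ r / 256 < ρ x) => (not_lt.mp hx.2 : ρ x ≤ r / 256))
    have h3 := h.low_mass hs x0
    have h4 : ∫ x in S, ρ x ≤ ∫ x in S, 2 * r :=
      setIntegral_mono_on h.int.integrableOn (integrableOn_const hSt.ne) (hEm.inter hKm)
        fun x _ => hB x
    rw [setIntegral_const, smul_eq_mul] at h4
    rw [div_le_iff₀ (by positivity)]
    linarith
  have hIloc : ∀ y ∈ S, |y - x0| ≤ 256 / r := by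
    intro y hy
    have := h.segment_le hs hK (le_of_lt hy.2) (by linarith : r / 256 ≤ ρ x0)
    rw [le_div_iff₀ h0]; linarith
  -- Remez inequality on an interval around the peak containing both `S` and `x`
  have hpx : ∀ x, |p.eval x| ≤ M * (256 * (256 + r * |x - x0|)) ^ d := by
    intro x
    set w := r * |x - x0| with hw
    have hw0 : 0 ≤ w := by positivity
    set R := (256 + w) / r with hR
    have hR0 : 0 < R := by positivity
    have h1 : |x - x0| ≤ R := by rw [hR, le_div_iff₀ h0]; rw [hw]; linarith
    have h2 : ∀ y ∈ S, |y - x0| ≤ R := fun y hy => (hIloc y hy).trans (by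
      rw [hR]; gcongr; linarith)
    have := remez hp (a := x0 - R) (b := x0 + R) (r := 1 / (8 * r)) (by positivity) (E := S)
      (fun y hy => by have := abs_le.mp (h2 y hy); constructor <;> linarith)
      (fun y hy => hy.1) (by
        rw [← ofReal_measureReal hSt.ne]; exact ENNReal.ofReal_le_ofReal hSv) (x := x)
      (by have := abs_le.mp h1; constructor <;> linarith)
    refine this.trans (le_of_eq ?_)
    congr 2
    rw [hR]; field_simp; ring
  have hsup : ∀ x, 0 < ρ x → p.eval x ^ 2 * Real.sqrt (ρ x / r) ≤
      2 * (M ^ 2 * (2 ^ 17 * m) ^ (2 * d)) := by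
    intro x hx
    set w := r * |x - x0| with hw
    have hw0 : 0 ≤ w := by positivity
    have h1 : p.eval x ^ 2 ≤ M ^ 2 * (256 * (256 + w)) ^ (2 * d) := by
      have := pow_le_pow_left₀ (abs_nonneg _) (hpx x) 2
      rw [sq_abs] at this
      refine this.trans (le_of_eq ?_)
      rw [mul_pow, ← pow_mul, mul_comm d 2]
    have h2 : Real.sqrt (ρ x / r) ≤ 2 * (2 : ℝ) ^ (-(w / 8)) := by
      apply Real.sqrt_le_iff.mpr
      refine ⟨by positivity, (h.decay hs h0 hB x).trans (le_of_eq ?_)⟩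
      rw [mul_pow, ← Real.rpow_natCast ((2 : ℝ) ^ (-(w / 8))) 2, ← Real.rpow_mul two_pos.le,
        ← hr, ← hw]
      norm_num
      ring_nf
    have h3 : (256 * (256 + w)) ^ (2 * d) * (2 : ℝ) ^ (-(w / 8)) ≤ (2 ^ 17 * m) ^ (2 * d) := by
      -- the bound `(C d) ^ (2 d)`, from the exponential decay
      have hA : (256 * (256 + w)) ^ (2 * d) * (2 : ℝ) ^ (-(w / 8)) ≤ (2 ^ 17 * d) ^ (2 * d) := by
        set y := w / (16 * d) with hy
        have hy0 : 0 ≤ y := by positivity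
        have h4 : (2 : ℝ) ^ (-(w / 8)) = ((2 : ℝ) ^ (-y)) ^ (2 * d) := by
          rw [← Real.rpow_natCast _ (2 * d), ← Real.rpow_mul two_pos.le]
          congr 1
          push_cast
          rw [hy]; field_simp; ring
        rw [h4, ← mul_pow]
        apply pow_le_pow_left₀ (by positivity)
        have h5 : w = 16 * d * y := by rw [hy]; field_simp
        have h6 : 256 + w ≤ 256 * d * (1 + y) := by rw [h5]; nlinarith [mul_nonneg (by linarith : (0:ℝ) ≤ d) hy0]
        have h7 := half_one_add_le_two_rpow hy0
        have h8 : (1 + y) * (2 : ℝ) ^ (-y) ≤ 2 := by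
          rw [Real.rpow_neg two_pos.le, ← div_eq_mul_inv, div_le_iff₀ (by positivity)]
          linarith
        have h9 : 0 ≤ (2 : ℝ) ^ (-y) := by positivity
        calc 256 * (256 + w) * (2 : ℝ) ^ (-y) ≤ 256 * (256 * d * (1 + y)) * (2 : ℝ) ^ (-y) := by
              gcongr
          _ = 2 ^ 16 * d * ((1 + y) * (2 : ℝ) ^ (-y)) := by ring
          _ ≤ 2 ^ 16 * d * 2 := by gcongr
          _ = _ := by ring
      -- the bound `(C / s) ^ (2 d)`, from the boundedness of the support
      have hC : s ≠ 0 → (256 * (256 + w)) ^ (2 * d) * (2 : ℝ) ^ (-(w / 8)) ≤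
          (2 ^ 17 * s⁻¹) ^ (2 * d) := by
        intro hs0
        have hsp : 0 < s := lt_of_le_of_ne hs (Ne.symm hs0)
        have h4 := h.support_le hsp hs1 h0 hx
        rw [← hr, ← hw] at h4
        have h5 : (2 : ℝ) ^ (-(w / 8)) ≤ 1 :=
          Real.rpow_le_one_of_one_le_of_nonpos one_le_two (by linarith)
        refine (mul_le_of_le_one_right (by positivity) h5).trans ?_
        apply pow_le_pow_left₀ (by positivity)
        rw [← div_eq_mul_inv, le_div_iff₀ hsp]
        nlinarith
      rw [hmdef]
      unfold dimFactor
      split_ifs with h0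
      · exact hA
      · rcases min_choice (d : ℝ) s⁻¹ with h | h <;> rw [h]
        · exact hA
        · exact hC h0
    calc p.eval x ^ 2 * Real.sqrt (ρ x / r)
        ≤ (M ^ 2 * (256 * (256 + w)) ^ (2 * d)) * (2 * (2 : ℝ) ^ (-(w / 8))) := by gcongr
      _ = 2 * (M ^ 2 * ((256 * (256 + w)) ^ (2 * d) * (2 : ℝ) ^ (-(w / 8)))) := by ring
      _ ≤ _ := by gcongr
  obtain ⟨hi, hv⟩ := h.int_mid x0
  set Q := M ^ 2 * (2 ^ 17 * m) ^ (2 * d) with hQ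
  have hQ0 : 0 ≤ Q := by positivity
  have hpt : ∀ x, p.eval x ^ 2 * ρ x ≤ 2 * Q * ρ ((x + x0) / 2) := by
    intro x
    rcases (h.nonneg x).eq_or_lt with hx | hx
    · rw [← hx, mul_zero]; exact mul_nonneg (by positivity) (h.nonneg _)
    have h1 : ρ x ≤ Real.sqrt (ρ x / r) * ρ ((x + x0) / 2) := by
      apply le_of_sq_le_sq _ (mul_nonneg (Real.sqrt_nonneg _) (h.nonneg _))
      rw [mul_pow, Real.sq_sqrt (by positivity)]
      have h2 := h.midpoint hs x x0
      have h3 := mul_le_mul_of_nonneg_left h2 (by positivity : 0 ≤ ρ x / r)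
      refine le_trans (le_of_eq ?_) h3
      rw [← hr]; field_simp
    calc p.eval x ^ 2 * ρ x ≤ p.eval x ^ 2 * (Real.sqrt (ρ x / r) * ρ ((x + x0) / 2)) := by gcongr
      _ = (p.eval x ^ 2 * Real.sqrt (ρ x / r)) * ρ ((x + x0) / 2) := by ring
      _ ≤ _ := mul_le_mul_of_nonneg_right (hsup x hx) (h.nonneg _)
  have hfin : ∫ x, p.eval x ^ 2 * ρ x ≤ ∫ x, 2 * Q * ρ ((x + x0) / 2) :=
    integral_mono_of_nonneg
      (Filter.Eventually.of_forall fun x => mul_nonneg (sq_nonneg _) (h.nonneg _))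
      (hi.const_mul _) (Filter.Eventually.of_forall hpt)
  rw [integral_const_mul, hv] at hfin
  have h4 : (4 : ℝ) ≤ 2 ^ (2 * d) := by
    rw [pow_mul]
    norm_num
    exact le_self_pow₀ (by norm_num) hd.ne'
  calc ∫ x, p.eval x ^ 2 * ρ x ≤ 4 * Q := by linarith
    _ ≤ 2 ^ (2 * d) * Q := by gcongr
    _ = M ^ 2 * (2 ^ 18 * m) ^ (2 * d) := by
      rw [hQ, show (2 : ℝ) ^ 18 * m = 2 * (2 ^ 17 * m) by ring, mul_pow 2 (2 ^ 17 * m)]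
      ring

end Dens

/-! ### Mollification of `s`-concave measures on the line -/

/-- `s`-concavity of a finite measure on a topological vector space, phrased with real-valued
measures and for weights in the open unit interval. -/
def SC {E : Type*} [AddCommGroup E] [Module ℝ E] [TopologicalSpace E] [MeasurableSpace E]
    (s : ℝ) (ν : Measure E) : Prop :=
  ∀ A B : Set E, IsCompact A → IsCompact B → 0 < ν.real A → 0 < ν.real B →
    ∀ α : ℝ, 0 < α → α < 1 → pm s α (ν.real A) (ν.real B) ≤ ν.real (α • A + (1 - α) • B)

/-- The density of the convolution of `ν` with the uniform measure on `[-h, h]`. -/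
def moll (ν : Measure ℝ) (h : ℝ) (z : ℝ) : ℝ := (2 * h)⁻¹ * ν.real (Set.Icc (z - h) (z + h))

section Moll

variable {s R h : ℝ} {ν : Measure ℝ} [IsProbabilityMeasure ν]

lemma strip_meas (h : ℝ) : MeasurableSet {q : ℝ × ℝ | q.1 - h ≤ q.2 ∧ q.2 ≤ q.1 + h} :=
  (measurableSet_le (measurable_fst.sub_const h) measurable_snd).inter
    (measurableSet_le measurable_snd (measurable_fst.add_const h))

lemma moll_meas : Measurable (moll ν h) := by
  have hS := strip_meas h
  have := (measurable_measure_prodMk_left (ν := ν) hS).ennreal_toReal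
  exact this.const_mul _

/-- Fubini for the mollified density and a locally bounded function. -/
lemma moll_integral (hh : 0 < h) (hh1 : h ≤ 1) (hν : ∀ᵐ x ∂ν, |x| ≤ R) {ψ : ℝ → ℝ}
    (hψ : Measurable ψ) {B : ℝ} (hB : ∀ z, |z| ≤ R + 1 → |ψ z| ≤ B) :
    Integrable (fun z => ψ z * moll ν h z) ∧
    Integrable (fun x => ∫ z in Set.Icc (x - h) (x + h), ψ z) ν ∧
    ∫ z, ψ z * moll ν h z = (2 * h)⁻¹ * ∫ x, (∫ z in Set.Icc (x - h) (x + h), ψ z) ∂ν := by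
  set S : Set (ℝ × ℝ) := {q | q.1 - h ≤ q.2 ∧ q.2 ≤ q.1 + h} with hSdef
  have hS : MeasurableSet S := strip_meas h
  set G : ℝ × ℝ → ℝ := S.indicator (fun q => ψ q.1) with hG
  have hGm : Measurable G := (hψ.comp measurable_fst).indicator hS
  have hsec1 : ∀ z, ∫ x, G (z, x) ∂ν = ψ z * ν.real (Set.Icc (z - h) (z + h)) := by
    intro z
    have h1 : ∀ x, G (z, x) = (Set.Icc (z - h) (z + h)).indicator (fun _ => ψ z) x := fun x => rfl
    simp_rw [h1]
    rw [integral_indicator measurableSet_Icc, setIntegral_const, smul_eq_mul, mul_comm]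
  have hsec2 : ∀ x, ∫ z, G (z, x) = ∫ z in Set.Icc (x - h) (x + h), ψ z := by
    intro x
    rw [← integral_indicator measurableSet_Icc]
    congr 1
    ext z
    simp only [hG, hSdef, Set.indicator, Set.mem_ofPred_eq, Set.mem_Icc]
    congr 1
    apply propext
    constructor <;> rintro ⟨h1, h2⟩ <;> constructor <;> linarith
  have hfin : (volume.prod ν) S < ⊤ := by
    rw [Measure.prod_apply_symm hS]
    have : ∀ x, (fun z => (z, x)) ⁻¹' S = Set.Icc (x - h) (x + h) := by
      intro x; ext z
      simp only [hSdef, Set.mem_preimage, Set.mem_ofPred_eq, Set.mem_Icc]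
      constructor <;> rintro ⟨h1, h2⟩ <;> constructor <;> linarith
    simp_rw [this, Real.volume_Icc]
    have h2 : ∀ x : ℝ, x + h - (x - h) = 2 * h := fun x => by ring
    simp_rw [h2]
    simpa using ENNReal.mul_lt_top (by simp) ENNReal.ofReal_lt_top
  have hitg : Integrable G (volume.prod ν) := by
    rw [hG, integrable_indicator_iff hS]
    refine Measure.integrableOn_of_bounded (M := B) hfin.ne
      (hψ.comp measurable_fst).aestronglyMeasurable ?_
    have h1 : ∀ᵐ q : ℝ × ℝ ∂(volume.prod ν), |q.2| ≤ R :=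
      Measure.quasiMeasurePreserving_snd.ae hν
    rw [ae_restrict_iff' hS]
    filter_upwards [h1] with q hq hqS
    apply hB
    have h2 := abs_le.mp hq
    have h3 : q.1 - h ≤ q.2 ∧ q.2 ≤ q.1 + h := hqS
    rw [abs_le]; constructor <;> linarith [h3.1, h3.2]
  have hi1 := hitg.integral_prod_left
  have hi2 := hitg.integral_prod_right
  simp_rw [hsec1] at hi1
  simp_rw [hsec2] at hi2
  have hsw := integral_integral_swap (f := fun z x => G (z, x)) hitg
  simp_rw [hsec1, hsec2] at hsw
  have heq : ∀ z, ψ z * moll ν h z = (2 * h)⁻¹ * (ψ z * ν.real (Set.Icc (z - h) (z + h))) := by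
    intro z; unfold moll; ring
  simp_rw [heq]
  exact ⟨hi1.const_mul _, hi2, by rw [integral_const_mul, hsw]⟩

/-- If `Ψ x ≤ ψ z` whenever `|z - x| ≤ h`, then `∫ Ψ dν` is at most the integral of `ψ` against the
mollification. -/
lemma moll_ge (hh : 0 < h) (hh1 : h ≤ 1) (hν : ∀ᵐ x ∂ν, |x| ≤ R) {ψ Ψ : ℝ → ℝ}
    (hψ : Measurable ψ) {B : ℝ} (hB : ∀ z, |z| ≤ R + 1 → |ψ z| ≤ B) (hΨ : Integrable Ψ ν)
    (hle : ∀ x z, |x| ≤ R → |z - x| ≤ h → Ψ x ≤ ψ z) :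
    ∫ x, Ψ x ∂ν ≤ ∫ z, ψ z * moll ν h z := by
  obtain ⟨-, h2, h3⟩ := moll_integral hh hh1 hν hψ hB
  rw [h3, ← integral_const_mul]
  refine integral_mono_ae hΨ (h2.const_mul _) ?_
  filter_upwards [hν] with x hx
  have hvol : volume.real (Set.Icc (x - h) (x + h)) = 2 * h := by
    rw [Real.volume_real_Icc_of_le (by linarith)]; ring
  have h4 : ∫ z in Set.Icc (x - h) (x + h), Ψ x ≤ ∫ z in Set.Icc (x - h) (x + h), ψ z := by
    refine setIntegral_mono_on (integrableOn_const (by simp)) ?_ measurableSet_Icc ?_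
    · refine Measure.integrableOn_of_bounded (M := B) (by simp) hψ.aestronglyMeasurable ?_
      rw [ae_restrict_iff' measurableSet_Icc]
      refine Filter.Eventually.of_forall fun z hz => hB z ?_
      have h2 := abs_le.mp hx
      rw [abs_le]; constructor <;> linarith [hz.1, hz.2]
    · intro z hz
      apply hle x z hx
      rw [abs_le]; constructor <;> linarith [hz.1, hz.2]
  rw [setIntegral_const, hvol, smul_eq_mul] at h4
  rw [inv_mul_eq_div, le_div_iff₀ (by positivity)]
  linarith

/-- The mollification inherits the power mean inequality, because an `α`-combination of two
intervals of length `2 h` lies in the interval of length `2 h` around the combined center. -/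
lemma moll_dens (hs : 0 ≤ s) (hSC : SC s ν) (hh : 0 < h) (hh1 : h ≤ 1)
    (hν : ∀ᵐ x ∂ν, |x| ≤ R) : Dens s (moll ν h) where
  nonneg x := by unfold moll; positivity
  meas := moll_meas
  int := by
    have := (moll_integral (ψ := fun _ => 1) hh hh1 hν measurable_const (B := 1) (by simp)).1
    simpa using this
  one := by
    have := (moll_integral (ψ := fun _ => 1) hh hh1 hν measurable_const (B := 1) (by simp)).2.2
    simp only [one_mul] at this
    rw [this]
    have h2 : ∀ x : ℝ, ∫ z in Set.Icc (x - h) (x + h), (1 : ℝ) = 2 * h := by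
      intro x
      rw [setIntegral_const, Real.volume_real_Icc_of_le (by linarith), smul_eq_mul]; ring
    simp_rw [h2]
    simp
    field_simp
  bdd := ⟨(2 * h)⁻¹, fun x => by
    unfold moll
    exact mul_le_of_le_one_right (by positivity) measureReal_le_one⟩
  conc := by
    intro x y hx hy α h0 h1
    have hc : 0 < (2 * h)⁻¹ := by positivity
    unfold moll at hx hy ⊢
    have hx' := (mul_pos_iff_of_pos_left hc).mp hx
    have hy' := (mul_pos_iff_of_pos_left hc).mp hy
    rw [pm_homog hx' hy' h0.le h1.le hc]
    refine mul_le_mul_of_nonneg_left ?_ hc.le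
    refine (hSC _ _ isCompact_Icc isCompact_Icc hx' hy' α h0 h1).trans (measureReal_mono ?_)
    rintro _ ⟨_, ⟨u, hu, rfl⟩, _, ⟨v, hv, rfl⟩, rfl⟩
    have h1' : 0 < 1 - α := by linarith
    simp only [smul_eq_mul]
    constructor
    · nlinarith [hu.1, hv.1]
    · nlinarith [hu.2, hv.2]

end Moll

lemma poly_integrable {ν : Measure ℝ} [IsProbabilityMeasure ν] {R : ℝ} (hν : ∀ᵐ x ∂ν, |x| ≤ R)
    {g : ℝ → ℝ} (hg : Continuous g) : Integrable g ν := by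
  obtain ⟨B, hB⟩ := (isCompact_Icc (a := -R) (b := R)).exists_bound_of_continuousOn hg.continuousOn
  refine Integrable.of_bound hg.aestronglyMeasurable B ?_
  filter_upwards [hν] with x hx using hB x (abs_le.mp hx)

/-- Comparison of masses of polynomial superlevel sets for `ν` and its mollification. -/
lemma moll_mass {ν : Measure ℝ} [IsProbabilityMeasure ν] {R h : ℝ} (hh : 0 < h) (hh1 : h ≤ 1)
    (hν : ∀ᵐ x ∂ν, |x| ≤ R) {S T : Set ℝ} (hS : MeasurableSet S) (hT : MeasurableSet T)
    (hST : ∀ x z, |x| ≤ R → |z - x| ≤ h → x ∈ S → z ∈ T) :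
    ν.real S ≤ ∫ z in T, moll ν h z := by
  have h1 := moll_ge hh hh1 hν (ψ := T.indicator fun _ => 1) (Ψ := S.indicator fun _ => 1)
    (measurable_const.indicator hT) (B := 1) (fun z _ => by
      rw [← Real.norm_eq_abs, norm_indicator_eq_indicator_norm]
      exact Set.indicator_apply_le' (fun _ => by simp) (fun _ => zero_le_one))
    ((integrable_const (1 : ℝ)).indicator hS) (fun x z hx hz => by
      by_cases hxS : x ∈ S
      · rw [Set.indicator_of_mem hxS, Set.indicator_of_mem (hST x z hx hz hxS)]
      · rw [Set.indicator_of_notMem hxS]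
        exact Set.indicator_nonneg (fun _ _ => zero_le_one) _)
  rw [integral_indicator hS, setIntegral_const, smul_eq_mul, mul_one] at h1
  refine h1.trans (le_of_eq ?_)
  rw [← integral_indicator hT]
  congr 1; ext z
  by_cases hz : z ∈ T <;> simp [hz]

/-- A modulus of continuity of a continuous function on a bounded set. -/
lemma unif_modulus {g : ℝ → ℝ} (hg : Continuous g) (R : ℝ) {τ : ℝ} (hτ : 0 < τ) :
    ∃ h, 0 < h ∧ h ≤ 1 ∧ ∀ x z, |x| ≤ R → |z - x| ≤ h → |g z - g x| ≤ τ := by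
  have hu := (isCompact_Icc (a := -(R + 1)) (b := R + 1)).uniformContinuousOn_of_continuous
    hg.continuousOn
  obtain ⟨δ, hδ, hd⟩ := Metric.uniformContinuousOn_iff.mp hu τ hτ
  refine ⟨min (δ / 2) 1, by positivity, min_le_right _ _, fun x z hx hz => ?_⟩
  have h1 := abs_le.mp hx
  have h2 := abs_le.mp (hz.trans (min_le_right _ _))
  have h3 := hz.trans (min_le_left _ _)
  have := hd z ⟨by linarith, by linarith⟩ x ⟨by linarith, by linarith⟩ (by
    rw [Real.dist_eq]; linarith)
  exact this.le

/-- One-sided oscillation estimate for a compactly supported `s`-concave measure on the line. -/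
theorem osc_line {ν : Measure ℝ} [IsProbabilityMeasure ν] {s R : ℝ} (hs : 0 ≤ s) (hSC : SC s ν)
    (hν : ∀ᵐ x ∂ν, |x| ≤ R) {p : Polynomial ℝ} {d : ℕ} (hd : 0 < d)
    (hp : p.natDegree ≤ d) {φ : ℝ → ℝ}
    (hφ : ContDiff ℝ 1 φ) {ε : ℝ} (hε : 0 < ε) (hb : ∀ t, |φ t| ≤ ε)
    (hb' : ∀ t, |deriv φ t| ≤ 1) (hz : ∀ t, 0 ≤ t → φ t = 0)
    (hm : 1 / 8 < ν.real {x | 1 ≤ p.eval x}) :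
    ∫ x, deriv φ (p.eval x) ∂ν ≤ 32832 * ε ^ (1 / (d : ℝ)) := by
  have hφc : Continuous (deriv φ) := hφ.continuous_deriv le_rfl
  refine le_of_forall_pos_le_add fun τ hτ => ?_
  obtain ⟨K, hK⟩ := (isCompact_Icc (a := -R) (b := R)).exists_bound_of_continuousOn
    p.continuous.continuousOn
  obtain ⟨δ, hδ, hδ1, hδm⟩ := unif_modulus hφc K hτ
  obtain ⟨h, hh, hh1, hhm⟩ := unif_modulus p.continuous R (half_pos hδ)
  have hD := moll_dens hs hSC hh hh1 hν
  -- the shift by `δ / 2` keeps the superlevel set inside the mollified one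
  set q := p + Polynomial.C (δ / 2) with hq
  have hqe : ∀ x, q.eval x = p.eval x + δ / 2 := by intro x; simp [hq]
  have hqd : q.natDegree ≤ d := by rw [hq, Polynomial.natDegree_add_C]; exact hp
  have hmass := moll_mass hh hh1 hν (S := {x | 1 ≤ p.eval x}) (T := {x | 1 ≤ q.eval x})
    (isClosed_le continuous_const p.continuous).measurableSet
    (isClosed_le continuous_const q.continuous).measurableSet (fun x z hx hzx hxS => by
      have h1 := abs_le.mp (hhm x z hx hzx)
      have hxS : 1 ≤ p.eval x := hxS
      show 1 ≤ q.eval z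
      rw [hqe]; linarith)
  have hfin := hD.osc hs hd hqd hφ hε hb hb' hz (hm.trans_le hmass)
  have hci : Integrable (fun x => deriv φ (p.eval x)) ν :=
    poly_integrable hν (hφc.comp p.continuous)
  have hcmp := moll_ge hh hh1 hν (ψ := fun z => deriv φ (q.eval z))
    (Ψ := fun x => deriv φ (p.eval x) - τ) (hφc.comp q.continuous).measurable (B := 1)
    (fun z _ => hb' _) (hci.sub (integrable_const _)) (fun x z hx hzx => by
      have h1 := abs_le.mp (hhm x z hx hzx)
      have h2 := abs_le.mp (hδm (p.eval x) (q.eval z) (hK x (abs_le.mp hx)) (by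
        rw [hqe, abs_le]; constructor <;> linarith))
      linarith)
  rw [integral_sub hci (integrable_const _)] at hcmp
  simp at hcmp
  linarith

/-- Moment comparison for a compactly supported `s`-concave measure on the line. -/
theorem second_moment_line {ν : Measure ℝ} [IsProbabilityMeasure ν] {s R : ℝ} (hs : 0 ≤ s)
    (hs1 : s ≤ 1) (hSC : SC s ν)
    (hν : ∀ᵐ x ∂ν, |x| ≤ R) {p : Polynomial ℝ} {d : ℕ} (hd : 0 < d)
    (hp : p.natDegree ≤ d) {M : ℝ}
    (hm : 3 / 8 ≤ ν.real {x | |p.eval x| ≤ M}) :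
    ∫ x, p.eval x ^ 2 ∂ν ≤ M ^ 2 * (2 ^ 18 * dimFactor s d) ^ (2 * d) := by
  have hpi : Integrable (fun x => p.eval x ^ 2) ν := poly_integrable hν (p.continuous.pow 2)
  set Q := (2 ^ 18 * dimFactor s d) ^ (2 * d) with hQ
  have key : ∀ τ, 0 < τ → ∫ x, p.eval x ^ 2 ∂ν ≤ (M + τ) ^ 2 * Q + τ := by
    intro τ hτ
    obtain ⟨h1, hh1, hh11, hhm1⟩ := unif_modulus p.continuous R hτ
    obtain ⟨h2, hh2, hh21, hhm2⟩ := unif_modulus (p.continuous.pow 2) R hτ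
    set h := min h1 h2
    have hh : 0 < h := lt_min hh1 hh2
    have hhl : h ≤ 1 := (min_le_left _ _).trans hh11
    have hD := moll_dens hs hSC hh hhl hν
    have hmass := moll_mass hh hhl hν (S := {x | |p.eval x| ≤ M}) (T := {x | |p.eval x| ≤ M + τ})
      (isClosed_le p.continuous.abs continuous_const).measurableSet
      (isClosed_le p.continuous.abs continuous_const).measurableSet (fun x z hx hzx hxS => by
        have h3 := hhm1 x z hx (hzx.trans (min_le_left _ _))
        have hxS : |p.eval x| ≤ M := hxS
        show |p.eval z| ≤ M + τ
        have := abs_sub_abs_le_abs_sub (p.eval z) (p.eval x)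
        linarith)
    have hfin := hD.second_moment hs hs1 hd hp (hm.trans hmass)
    obtain ⟨B, hB⟩ := (isCompact_Icc (a := -(R + 1)) (b := R + 1)).exists_bound_of_continuousOn
      (p.continuous.pow 2).continuousOn
    have hcmp := moll_ge hh hhl hν (ψ := fun z => p.eval z ^ 2)
      (Ψ := fun x => p.eval x ^ 2 - τ) (p.continuous.pow 2).measurable (B := B)
      (fun z hz => hB z (abs_le.mp hz)) (hpi.sub (integrable_const _)) (fun x z hx hzx => by
        have h1 := abs_le.mp (hhm2 x z hx (hzx.trans (min_le_right _ _)))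
        simp only [Pi.pow_apply] at h1
        linarith)
    rw [integral_sub hpi (integrable_const _)] at hcmp
    simp at hcmp
    linarith
  have hlim : Filter.Tendsto (fun τ : ℝ => (M + τ) ^ 2 * Q + τ) (nhdsWithin 0 (Set.Ioi 0))
      (nhds (M ^ 2 * Q)) := by
    have : Continuous fun τ : ℝ => (M + τ) ^ 2 * Q + τ := by fun_prop
    have h1 := this.tendsto 0
    simp only [add_zero] at h1
    exact h1.mono_left nhdsWithin_le_nhds
  exact ge_of_tendsto hlim (by filter_upwards [self_mem_nhdsWithin] with τ hτ using key τ hτ)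

/-! ### Stability properties of `s`-concave measures -/

section SCtools

variable {E : Type*} [NormedAddCommGroup E] [NormedSpace ℝ E] [ProperSpace E]
  [MeasurableSpace E] [BorelSpace E] {s : ℝ} {ν : Measure E} [IsProbabilityMeasure ν]

lemma compact_comb {A B : Set E} (hA : IsCompact A) (hB : IsCompact B) (α : ℝ) :
    IsCompact (α • A + (1 - α) • B) := (hA.smul α).add (hB.smul (1 - α))

/-- Affine images of `s`-concave measures with compact support are `s`-concave. -/
lemma SC.map {F : Type*} [NormedAddCommGroup F] [NormedSpace ℝ F] [ProperSpace F]
    [MeasurableSpace F] [BorelSpace F] (h : SC s ν) {K : Set E} (hK : IsCompact K)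
    (hKν : ∀ᵐ x ∂ν, x ∈ K) {T : E → F} (hT : Continuous T)
    (hTa : ∀ x y (α : ℝ), T (α • x + (1 - α) • y) = α • T x + (1 - α) • T y) :
    SC s (ν.map T) := by
  intro A B hA hB ha hb α h0 h1
  have key : ∀ S : Set F, IsClosed S → (ν.map T).real S = ν.real (T ⁻¹' S ∩ K) := by
    intro S hS
    rw [map_measureReal_apply hT.measurable hS.measurableSet]
    apply measureReal_congr
    filter_upwards [hKν] with x hx
    exact propext ⟨fun h => ⟨h, hx⟩, fun h => h.1⟩
  rw [key A hA.isClosed] at ha ⊢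
  rw [key B hB.isClosed] at hb ⊢
  refine (h _ _ (hK.inter_left (hA.isClosed.preimage hT)) (hK.inter_left (hB.isClosed.preimage hT))
    ha hb α h0 h1).trans ?_
  rw [map_measureReal_apply hT.measurable (compact_comb hA hB α).measurableSet]
  refine measureReal_mono ?_ (measure_ne_top _ _)
  rintro _ ⟨_, ⟨u, hu, rfl⟩, _, ⟨v, hv, rfl⟩, rfl⟩
  simp only [Set.mem_preimage]
  rw [hTa]
  exact Set.add_mem_add (Set.smul_mem_smul_set hu.1) (Set.smul_mem_smul_set hv.1)

/-- Conditioning on a closed convex set preserves `s`-concavity. -/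
lemma SC.cond (h : SC s ν) {C : Set E} (hC : IsClosed C) (hCc : Convex ℝ C)
    (hpos : 0 < ν.real C) : SC s (ProbabilityTheory.cond ν C) := by
  intro A B hA hB ha hb α h0 h1
  have key : ∀ S : Set E, (ProbabilityTheory.cond ν C).real S = (ν.real C)⁻¹ * ν.real (C ∩ S) :=
    fun S => by
      simp only [Measure.real, ProbabilityTheory.cond_apply hC.measurableSet, ENNReal.toReal_mul,
        ENNReal.toReal_inv]
  rw [key] at ha hb
  rw [key, key, key]
  have hc : 0 < (ν.real C)⁻¹ := by positivity
  have ha' := (mul_pos_iff_of_pos_left hc).mp ha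
  have hb' := (mul_pos_iff_of_pos_left hc).mp hb
  rw [pm_homog ha' hb' h0.le h1.le hc]
  refine mul_le_mul_of_nonneg_left ?_ hc.le
  refine (h _ _ (hA.inter_left hC) (hB.inter_left hC) ha' hb' α h0 h1).trans (measureReal_mono ?_)
  rintro _ ⟨_, ⟨u, hu, rfl⟩, _, ⟨v, hv, rfl⟩, rfl⟩
  exact ⟨hCc hu.1 hv.1 h0.le (by linarith) (by ring),
    Set.add_mem_add (Set.smul_mem_smul_set hu.2) (Set.smul_mem_smul_set hv.2)⟩

/-- A compactly supported `s`-concave measure not carried by a hyperplane `l = 0` does not charge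
it: otherwise, combining a set `B` off the hyperplane with a set `A` inside it, with weight on `B`
tending to `0`, the slabs `0 < |l| ≤ η` would have mass bounded below as `η → 0`. -/
lemma SC.hyperplane (h : SC s ν) (hs : 0 ≤ s) {K : Set E} (hK : IsCompact K)
    (hKν : ∀ᵐ x ∂ν, x ∈ K) {l : E → ℝ} (hl : Continuous l)
    (hla : ∀ x y (α : ℝ), l (α • x + (1 - α) • y) = α * l x + (1 - α) * l y)
    (hne : ¬ ∀ᵐ x ∂ν, l x = 0) : ∀ᵐ x ∂ν, l x ≠ 0 := by
  by_contra hcon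
  have hA0 : ν.real ({x | l x = 0} ∩ K) ≠ 0 := by
    intro h0
    apply hcon
    rw [measureReal_eq_zero_iff] at h0
    have h1 : ∀ᵐ x ∂ν, x ∉ {x | l x = 0} ∩ K := measure_eq_zero_iff_ae_notMem.mp h0
    filter_upwards [h1, hKν] with x hx hxK h2 using hx ⟨h2, hxK⟩
  obtain ⟨m, hm⟩ : ∃ m : ℕ, ν.real ({x | 1 / ((m : ℝ) + 1) ≤ |l x|} ∩ K) ≠ 0 := by
    by_contra hall
    push Not at hall
    apply hne
    have h1 : ∀ m : ℕ, ∀ᵐ x ∂ν, x ∉ {x | 1 / ((m : ℝ) + 1) ≤ |l x|} ∩ K := fun m =>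
      measure_eq_zero_iff_ae_notMem.mp ((measureReal_eq_zero_iff).mp (hall m))
    filter_upwards [ae_all_iff.mpr h1, hKν] with x hx hxK
    by_contra hlx
    obtain ⟨m, hm⟩ := exists_nat_one_div_lt (abs_pos.mpr hlx)
    exact hx m ⟨hm.le, hxK⟩
  set A := {x | l x = 0} ∩ K with hA
  set B := {x | 1 / ((m : ℝ) + 1) ≤ |l x|} ∩ K with hB
  have hAc : IsCompact A := hK.inter_left (isClosed_eq hl continuous_const)
  have hBc : IsCompact B := hK.inter_left (isClosed_le continuous_const hl.abs)
  have hApos : 0 < ν.real A := lt_of_le_of_ne measureReal_nonneg (Ne.symm hA0)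
  have hBpos : 0 < ν.real B := lt_of_le_of_ne measureReal_nonneg (Ne.symm hm)
  obtain ⟨c, hc⟩ := hK.exists_bound_of_continuousOn hl.continuousOn
  have hlow : ∀ k : ℕ, min (ν.real B) (ν.real A) ≤
      ν.real {x | 0 < |l x| ∧ |l x| ≤ 1 / ((k : ℝ) + 2) * c} := by
    intro k
    have h0 : (0 : ℝ) < 1 / ((k : ℝ) + 2) := by positivity
    have h1 : 1 / ((k : ℝ) + 2) < 1 := by
      rw [div_lt_one (by positivity)]
      have : (0 : ℝ) ≤ k := by positivity
      linarith
    refine (min_le_pm hs hBpos hApos h0.le h1.le).trans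
      ((h B A hBc hAc hBpos hApos _ h0 h1).trans (measureReal_mono ?_))
    rintro _ ⟨_, ⟨u, hu, rfl⟩, _, ⟨v, hv, rfl⟩, rfl⟩
    have hv0 : l v = 0 := hv.1
    have hu0 : 1 / ((m : ℝ) + 1) ≤ |l u| := hu.1
    have huc : |l u| ≤ c := hc u hu.2
    have hup : 0 < |l u| := lt_of_lt_of_le (by positivity) hu0
    show 0 < |l _| ∧ |l _| ≤ _
    simp only [hla, hv0, mul_zero, add_zero, abs_mul, abs_of_pos h0]
    exact ⟨by positivity, by gcongr⟩
  have hlim : Filter.Tendsto (fun k : ℕ => ν {x | 0 < |l x| ∧ |l x| ≤ 1 / ((k : ℝ) + 2) * c})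
      Filter.atTop (nhds (ν (⋂ k : ℕ, {x | 0 < |l x| ∧ |l x| ≤ 1 / ((k : ℝ) + 2) * c}))) := by
    apply tendsto_measure_iInter_atTop
    · intro k
      exact ((isOpen_lt continuous_const hl.abs).measurableSet.inter
        (isClosed_le hl.abs continuous_const).measurableSet).nullMeasurableSet
    · intro j k hjk x hx
      refine ⟨hx.1, hx.2.trans ?_⟩
      have hc0 : 0 ≤ c := by
        by_contra hc0
        have := hx.2
        have h3 : 1 / ((k : ℝ) + 2) * c ≤ 0 :=
          mul_nonpos_of_nonneg_of_nonpos (by positivity) (not_le.mp hc0).le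
        have := hx.1
        linarith
      have : (j : ℝ) ≤ k := by exact_mod_cast hjk
      gcongr
    · exact ⟨0, measure_ne_top _ _⟩
  have hempty : (⋂ k : ℕ, {x | 0 < |l x| ∧ |l x| ≤ 1 / ((k : ℝ) + 2) * c}) = ∅ := by
    ext x
    simp only [Set.mem_iInter, Set.mem_ofPred_eq, Set.mem_empty_iff_false, iff_false]
    intro hx
    have hp := (hx 0).1
    have hl2 : Filter.Tendsto (fun k : ℕ => 1 / ((k : ℝ) + 2) * c) Filter.atTop (nhds (0 * c)) := by
      apply Filter.Tendsto.mul_const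
      have := tendsto_one_div_add_atTop_nhds_zero_nat (𝕜 := ℝ)
      have h2 := this.comp (Filter.tendsto_add_atTop_nat 1)
      refine h2.congr fun k => ?_
      simp only [Function.comp]
      push_cast; ring
    have := ge_of_tendsto' hl2 fun k => (hx k).2
    linarith
  rw [hempty, measure_empty] at hlim
  have hlim2 := (ENNReal.tendsto_toReal ENNReal.zero_ne_top).comp hlim
  have := ge_of_tendsto' hlim2 hlow
  have h5 := lt_min hBpos hApos
  simp at this
  rcases this with h | h <;> linarith

/-- The set of `s`-concave probability measures is weakly closed: the defining inequality is
passed to the limit on closed thickenings of the two compact sets. -/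
lemma SC.isClosed (hs : 0 ≤ s) : IsClosed {ν : ProbabilityMeasure E | SC s (ν : Measure E)} := by
  refine isClosed_of_closure_subset fun ν hν => ?_
  obtain ⟨u, hu, hun⟩ := mem_closure_iff_ultrafilter.mp hν
  have hlim : Filter.Tendsto (fun x : ProbabilityMeasure E => x) u (nhds ν) := hun
  intro A B hA hB ha hb α h0 h1
  have hD := compact_comb hA hB α
  set D := α • A + (1 - α) • B with hDdef
  set P := pm s α ((ν : Measure E).real A) ((ν : Measure E).real B) with hP
  have hthick : ∀ (S : Set E), 0 < (ν : Measure E).real S → ∀ t : ℝ, 0 < t → t < 1 →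
      ∀ δ : ℝ, 0 < δ → ∀ᶠ η : ProbabilityMeasure E in u,
      t * (ν : Measure E).real S ≤ (η : Measure E).real (Metric.cthickening δ S) := by
    intro S hS t ht0 ht1 δ hδ
    have h2 := ProbabilityMeasure.le_liminf_measure_open_of_tendsto hlim
      (Metric.isOpen_thickening (δ := δ) (E := S))
    have h3 : ENNReal.ofReal (t * (ν : Measure E).real S) < (ν : Measure E) (Metric.thickening δ S) := by
      refine lt_of_lt_of_le ?_ (measure_mono (Metric.self_subset_thickening hδ S))
      rw [← ofReal_measureReal (measure_ne_top _ _)]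
      rw [ENNReal.ofReal_lt_ofReal_iff hS]
      nlinarith
    have h4 := Filter.eventually_lt_of_lt_liminf (h3.trans_le h2)
    filter_upwards [h4] with η hη
    have h5 := hη.le.trans (measure_mono (Metric.thickening_subset_cthickening δ S))
    rw [← ofReal_measureReal (measure_ne_top _ _)] at h5
    exact (ENNReal.ofReal_le_ofReal_iff measureReal_nonneg).mp h5
  have hsub : ∀ δ : ℝ, 0 < δ → α • Metric.cthickening δ A + (1 - α) • Metric.cthickening δ B ⊆
      Metric.cthickening δ D := by
    intro δ hδ
    rintro _ ⟨_, ⟨x, hx, rfl⟩, _, ⟨y, hy, rfl⟩, rfl⟩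
    rw [hA.cthickening_eq_biUnion_closedBall hδ.le] at hx
    rw [hB.cthickening_eq_biUnion_closedBall hδ.le] at hy
    simp only [Set.mem_iUnion, Metric.mem_closedBall] at hx hy
    obtain ⟨x', hx', hxx⟩ := hx
    obtain ⟨y', hy', hyy⟩ := hy
    refine Metric.mem_cthickening_of_dist_le _ (α • x' + (1 - α) • y') δ D
      (Set.add_mem_add (Set.smul_mem_smul_set hx') (Set.smul_mem_smul_set hy')) ?_
    rw [dist_eq_norm] at hxx hyy ⊢
    have h5 : α • x + (1 - α) • y - (α • x' + (1 - α) • y') =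
        α • (x - x') + (1 - α) • (y - y') := by module
    simp only []
    rw [h5]
    refine (norm_add_le _ _).trans ?_
    rw [norm_smul, norm_smul, Real.norm_eq_abs, Real.norm_eq_abs, abs_of_pos h0,
      abs_of_pos (by linarith : 0 < 1 - α)]
    nlinarith
  have hstep : ∀ t : ℝ, 0 < t → t < 1 → ∀ δ : ℝ, 0 < δ →
      t * P ≤ (ν : Measure E).real (Metric.cthickening δ D) := by
    intro t ht0 ht1 δ hδ
    have hev : ∀ᶠ η : ProbabilityMeasure E in u,
        ENNReal.ofReal (t * P) ≤ (η : Measure E) (Metric.cthickening δ D) := by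
      filter_upwards [hthick A ha t ht0 ht1 δ hδ, hthick B hb t ht0 ht1 δ hδ, hu] with η h1A h1B hη
      have hη : SC s (η : Measure E) := hη
      have hta := mul_pos ht0 ha
      have htb := mul_pos ht0 hb
      have h6 := hη _ _ hA.cthickening hB.cthickening (hta.trans_le h1A) (htb.trans_le h1B) α h0 h1
      rw [← ofReal_measureReal (measure_ne_top _ _)]
      apply ENNReal.ofReal_le_ofReal
      rw [hP, ← pm_homog ha hb h0.le h1.le ht0]
      exact (pm_mono hs hta htb h0.le h1.le h1A h1B).trans (h6.trans (measureReal_mono (hsub δ hδ)))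
    have h7 := ProbabilityMeasure.limsup_measure_closed_le_of_tendsto hlim
      (Metric.isClosed_cthickening (δ := δ) (E := D))
    have h8 : ENNReal.ofReal (t * P) ≤
        Filter.limsup (fun η : ProbabilityMeasure E => (η : Measure E) (Metric.cthickening δ D)) u :=
      (Filter.le_limsup_of_frequently_le hev.frequently)
    have h9 := h8.trans h7
    rw [← ofReal_measureReal (measure_ne_top _ _)] at h9
    exact (ENNReal.ofReal_le_ofReal_iff measureReal_nonneg).mp h9
  have hδlim := tendsto_measure_cthickening_of_isClosed (μ := (ν : Measure E)) (s := D)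
    ⟨1, one_pos, measure_ne_top _ _⟩ hD.isClosed
  have hδlim2 := ((ENNReal.tendsto_toReal (measure_ne_top (ν : Measure E) D)).comp hδlim).mono_left
    (nhdsWithin_le_nhds (s := Set.Ioi 0))
  have hstep2 : ∀ t : ℝ, 0 < t → t < 1 → t * P ≤ (ν : Measure E).real D := fun t ht0 ht1 =>
    ge_of_tendsto hδlim2 (by
      filter_upwards [self_mem_nhdsWithin] with δ hδ using hstep t ht0 ht1 δ hδ)
  have hfin : Filter.Tendsto (fun t : ℝ => t * P) (nhdsWithin 1 (Set.Iio 1)) (nhds (1 * P)) :=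
    ((continuous_id.mul continuous_const).tendsto 1).mono_left nhdsWithin_le_nhds
  rw [one_mul] at hfin
  refine le_of_tendsto hfin ?_
  filter_upwards [Ioo_mem_nhdsLT (show (0:ℝ) < 1 by norm_num)] with t ht using hstep2 t ht.1 ht.2

end SCtools

/-! ### Localization to lines -/

section Localize

lemma isClosed_le_measure {E : Type*} [PseudoMetricSpace E] [MeasurableSpace E] [BorelSpace E]
    {F : Set E} (hF : IsClosed F) (c : ENNReal) :
    IsClosed {ν : ProbabilityMeasure E | c ≤ (ν : Measure E) F} := by
  refine isClosed_of_closure_subset fun ν hν => ?_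
  obtain ⟨u, hu, hun⟩ := mem_closure_iff_ultrafilter.mp hν
  have hlim : Filter.Tendsto (fun x : ProbabilityMeasure E => x) u (nhds ν) := hun
  have hev : ∀ᶠ η : ProbabilityMeasure E in u, c ≤ (η : Measure E) F := hu
  exact (Filter.le_limsup_of_frequently_le hev.frequently).trans
    (ProbabilityMeasure.limsup_measure_closed_le_of_tendsto hlim hF)

/-- A hyperplane through the intersection of `l₁ = 0` and `l₂ = 0` splits the nonnegative integral
of `g` into two nonnegative pieces: rotate the hyperplane by half a turn and apply the intermediate
value theorem. -/
lemma exists_bisect {E : Type*} [NormedAddCommGroup E] [NormedSpace ℝ E] [ProperSpace E]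
    [MeasurableSpace E] [BorelSpace E] {s : ℝ} {ν : Measure E} [IsProbabilityMeasure ν]
    (h : SC s ν) (hs : 0 ≤ s) {K : Set E} (hK : IsCompact K) (hKν : ∀ᵐ x ∂ν, x ∈ K)
    {l₁ l₂ : E → ℝ} (h₁ : Continuous l₁) (h₂ : Continuous l₂)
    (ha₁ : ∀ x y (α : ℝ), l₁ (α • x + (1 - α) • y) = α * l₁ x + (1 - α) * l₁ y)
    (ha₂ : ∀ x y (α : ℝ), l₂ (α • x + (1 - α) • y) = α * l₂ x + (1 - α) * l₂ y)
    (hind : ∀ a b : ℝ, (a ≠ 0 ∨ b ≠ 0) → ¬ ∀ᵐ x ∂ν, a * l₁ x + b * l₂ x = 0)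
    {g : E → ℝ} (hg : Integrable g ν) (hg0 : 0 ≤ ∫ x, g x ∂ν) :
    ∃ a b : ℝ, (a ≠ 0 ∨ b ≠ 0) ∧ (∀ᵐ x ∂ν, a * l₁ x + b * l₂ x ≠ 0) ∧
      0 ≤ ∫ x in {x | 0 ≤ a * l₁ x + b * l₂ x}, g x ∂ν ∧
      0 ≤ ∫ x in {x | a * l₁ x + b * l₂ x ≤ 0}, g x ∂ν := by
  set L : ℝ → E → ℝ := fun τ x => Real.cos τ * l₁ x + Real.sin τ * l₂ x with hL
  have hLc : ∀ τ, Continuous (L τ) := fun τ => by fun_prop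
  have hcs : ∀ τ : ℝ, Real.cos τ ≠ 0 ∨ Real.sin τ ≠ 0 := by
    intro τ
    by_contra hc
    push Not at hc
    have := Real.sin_sq_add_cos_sq τ
    rw [hc.1, hc.2] at this
    norm_num at this
  have hnz : ∀ τ, ∀ᵐ x ∂ν, L τ x ≠ 0 := fun τ =>
    h.hyperplane hs hK hKν (hLc τ) (fun x y α => by simp only [hL, ha₁, ha₂]; ring)
      (hind _ _ (hcs τ))
  set S : ℝ → Set E := fun τ => {x | 0 ≤ L τ x} with hS
  have hSm : ∀ τ, MeasurableSet (S τ) := fun τ =>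
    (isClosed_le continuous_const (hLc τ)).measurableSet
  set G : ℝ → ℝ := fun τ => ∫ x, (S τ).indicator g x ∂ν with hG
  have hGc : Continuous G := by
    rw [continuous_iff_continuousAt]
    intro τ₀
    refine continuousAt_of_dominated (bound := fun x => ‖g x‖) ?_ ?_ hg.norm ?_
    · exact Filter.Eventually.of_forall fun τ => (hg.indicator (hSm τ)).aestronglyMeasurable
    · exact Filter.Eventually.of_forall fun τ => Filter.Eventually.of_forall fun x =>
        norm_indicator_le_norm_self _ _
    · filter_upwards [hnz τ₀] with x hx
      have hcx : Continuous fun τ => L τ x := by simp only [hL]; fun_prop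
      rcases lt_or_gt_of_ne hx with hx | hx
      · have hev : ∀ᶠ τ in nhds τ₀, (0 : ℝ) = (S τ).indicator g x := by
          filter_upwards [(isOpen_lt hcx continuous_const).mem_nhds hx] with τ hτ
          rw [Set.indicator_of_notMem]
          exact not_le.mpr hτ
        exact continuousAt_const.congr hev
      · have hev : ∀ᶠ τ in nhds τ₀, g x = (S τ).indicator g x := by
          filter_upwards [(isOpen_lt continuous_const hcx).mem_nhds hx] with τ hτ
          rw [Set.indicator_of_mem]
          exact le_of_lt hτ
        exact continuousAt_const.congr hev
  have hcompl : ∀ τ, G τ + ∫ x in {x | L τ x ≤ 0}, g x ∂ν = ∫ x, g x ∂ν := by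
    intro τ
    simp only [hG]
    rw [integral_indicator (hSm τ), ← integral_add_compl (hSm τ) hg]
    congr 1
    apply setIntegral_congr_set
    filter_upwards [hnz τ] with x hx
    apply propext
    show L τ x ≤ 0 ↔ ¬ (0 ≤ L τ x)
    exact ⟨fun h => not_le.mpr (lt_of_le_of_ne h hx), fun h => (not_le.mp h).le⟩
  have hpi : G Real.pi = ∫ x in {x | L 0 x ≤ 0}, g x ∂ν := by
    simp only [hG]
    rw [integral_indicator (hSm _)]
    congr 2
    ext x
    simp [hS, hL]
  have h0 := hcompl 0
  rw [← hpi] at h0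
  have hmem : (∫ x, g x ∂ν) / 2 ∈ Set.uIcc (G 0) (G Real.pi) := by
    rw [Set.mem_uIcc]
    rcases le_total (G 0) (G Real.pi) with h | h
    · left; constructor <;> linarith
    · right; constructor <;> linarith
  obtain ⟨τ, -, hτ⟩ := intermediate_value_uIcc hGc.continuousOn hmem
  refine ⟨Real.cos τ, Real.sin τ, hcs τ, hnz τ, ?_, ?_⟩
  · have : G τ = ∫ x in {x | 0 ≤ Real.cos τ * l₁ x + Real.sin τ * l₂ x}, g x ∂ν := by
      simp only [hG]
      rw [integral_indicator (hSm _)]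
    rw [← this, hτ]
    linarith
  · have := hcompl τ
    rw [hτ] at this
    change 0 ≤ ∫ x in {x | L τ x ≤ 0}, g x ∂ν
    linarith

lemma cont_integrable {E : Type*} [TopologicalSpace E] [MeasurableSpace E] [BorelSpace E]
    [SecondCountableTopology E] {ν : Measure E} [IsProbabilityMeasure ν] {K : Set E}
    (hK : IsCompact K) (hKν : ∀ᵐ x ∂ν, x ∈ K) {g : E → ℝ} (hg : Continuous g) :
    Integrable g ν := by
  obtain ⟨B, hB⟩ := hK.exists_bound_of_continuousOn hg.continuousOn
  refine Integrable.of_bound hg.aestronglyMeasurable B ?_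
  filter_upwards [hKν] with x hx using hB x hx

lemma exists_bcf {E : Type*} [TopologicalSpace E] [MeasurableSpace E] {K : Set E}
    (hK : IsCompact K) {g : E → ℝ} (hg : Continuous g) :
    ∃ H : BoundedContinuousFunction E ℝ, ∀ ν : Measure E, (∀ᵐ x ∂ν, x ∈ K) →
      ∫ x, g x ∂ν = ∫ x, H x ∂ν := by
  obtain ⟨B, hB⟩ := hK.exists_bound_of_continuousOn hg.continuousOn
  refine ⟨BoundedContinuousFunction.ofNormedAddCommGroup
    (fun x => max (-|B|) (min |B| (g x))) (by fun_prop) |B| ?_, fun ν hν => ?_⟩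
  · intro x
    rw [Real.norm_eq_abs, abs_le]
    exact ⟨le_max_left _ _, max_le (by linarith [abs_nonneg B]) (min_le_left _ _)⟩
  · apply integral_congr_ae
    filter_upwards [hν] with x hx
    have h1 := abs_le.mp ((hB x hx).trans (le_abs_self B))
    simp [min_eq_right h1.2, max_eq_right h1.1]

lemma integral_cond_eq {E : Type*} [MeasurableSpace E] {ν : Measure E} (A : Set E) (g : E → ℝ) :
    ∫ x, g x ∂(ProbabilityTheory.cond ν A) = (ν.real A)⁻¹ * ∫ x in A, g x ∂ν := by
  rw [ProbabilityTheory.cond, integral_smul_measure, ENNReal.toReal_inv, smul_eq_mul, Measure.real]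

/-- The total variance of a measure on `ℝⁿ`. -/
def totalVar {n : ℕ} (ν : Measure (Fin n → ℝ)) : ℝ :=
  ∑ k, ((∫ x, x k ^ 2 ∂ν) - (∫ x, x k ∂ν) ^ 2)

/-- The constraint set of the localization argument: `s`-concave probability measures on `ℝⁿ`
carried by `K` and giving mass at least `q` to `F`. -/
def locSet {n : ℕ} (s : ℝ) (K F : Set (Fin n → ℝ)) (q : ENNReal) :
    Set (ProbabilityMeasure (Fin n → ℝ)) :=
  {ν | SC s (ν : Measure (Fin n → ℝ))} ∩ {ν | 1 ≤ (ν : Measure (Fin n → ℝ)) K} ∩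
    {ν | q ≤ (ν : Measure (Fin n → ℝ)) F}

lemma ae_of_one_le {E : Type*} [MeasurableSpace E] {ν : Measure E} [IsProbabilityMeasure ν]
    {K : Set E} (hK : MeasurableSet K) (h : 1 ≤ ν K) : ∀ᵐ x ∂ν, x ∈ K := by
  have h1 : ν K = 1 := le_antisymm prob_le_one h
  have := (prob_compl_eq_zero_iff hK).mpr h1
  exact this

variable {n : ℕ} {s : ℝ} {K F : Set (Fin n → ℝ)} {q : ENNReal}

lemma locSet_compact (hs : 0 ≤ s) (hK : IsCompact K) (hF : IsClosed F) :
    IsCompact (locSet s K F q) := by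
  have hcl : IsClosed (locSet s K F q) :=
    ((SC.isClosed hs).inter (isClosed_le_measure hK.isClosed 1)).inter (isClosed_le_measure hF q)
  rw [← hcl.closure_eq]
  apply isCompact_closure_of_isTightMeasureSet
  rw [isTightMeasureSet_iff_exists_isCompact_measure_compl_le]
  intro ε hε
  refine ⟨K, hK, ?_⟩
  rintro _ ⟨ν, hν, rfl⟩
  have := ae_of_one_le hK.measurableSet hν.1.2
  have h0 : (ν : Measure (Fin n → ℝ)) Kᶜ = 0 := this
  rw [h0]
  exact zero_le

/-- A maximizer of `∫ g` on the constraint set, of minimal variance among the maximizers. -/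
lemma exists_extremal (hs : 0 ≤ s) (hK : IsCompact K) (hF : IsClosed F) {g : (Fin n → ℝ) → ℝ}
    (hg : Continuous g) (hne : (locSet s K F q).Nonempty) :
    ∃ ν ∈ locSet s K F q, (∀ η ∈ locSet s K F q, ∫ x, g x ∂(η : Measure (Fin n → ℝ)) ≤
        ∫ x, g x ∂(ν : Measure (Fin n → ℝ))) ∧
      ∀ η ∈ locSet s K F q, ∫ x, g x ∂(ν : Measure (Fin n → ℝ)) ≤
        ∫ x, g x ∂(η : Measure (Fin n → ℝ)) →
        totalVar (ν : Measure (Fin n → ℝ)) ≤ totalVar (η : Measure (Fin n → ℝ)) := by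
  have hc : ∀ f : (Fin n → ℝ) → ℝ, Continuous f → ContinuousOn
      (fun ν : ProbabilityMeasure (Fin n → ℝ) => ∫ x, f x ∂(ν : Measure (Fin n → ℝ)))
      (locSet s K F q) := by
    intro f hf
    obtain ⟨H, hH⟩ := exists_bcf hK hf
    refine (ProbabilityMeasure.continuous_integral_boundedContinuousFunction H).continuousOn.congr
      fun ν hν => hH _ (ae_of_one_le hK.measurableSet hν.1.2)
  have hcomp := locSet_compact (q := q) hs hK hF
  obtain ⟨ν₀, hν₀, hmax⟩ := hcomp.exists_isMaxOn hne (hc g hg)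
  set P' := locSet s K F q ∩ (fun ν : ProbabilityMeasure (Fin n → ℝ) =>
    ∫ x, g x ∂(ν : Measure (Fin n → ℝ))) ⁻¹' Set.Ici (∫ x, g x ∂(ν₀ : Measure (Fin n → ℝ)))
  have hcl : IsClosed P' := (hc g hg).preimage_isClosed_of_isClosed hcomp.isClosed isClosed_Ici
  have hP' : IsCompact P' := hcomp.of_isClosed_subset hcl Set.inter_subset_left
  have hV : ContinuousOn (fun ν : ProbabilityMeasure (Fin n → ℝ) =>
      totalVar (ν : Measure (Fin n → ℝ))) P' := by
    unfold totalVar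
    refine continuousOn_finsetSum _ fun k _ => ?_
    exact ((hc _ (by fun_prop)).mono Set.inter_subset_left).sub
      (((hc _ (by fun_prop)).mono Set.inter_subset_left).pow 2)
  obtain ⟨ν, hν, hmin⟩ := hP'.exists_isMinOn ⟨ν₀, hν₀, by simp⟩ hV
  refine ⟨ν, hν.1, fun η hη => (hmax hη).trans hν.2, fun η hη hle => hmin ⟨hη, ?_⟩⟩
  exact le_trans hν.2 hle

/-- If any two coordinates of `x - x₀` satisfy a nontrivial linear relation almost everywhere, then
`x` lies almost everywhere on a line through `x₀`, parametrized by one of the coordinates. -/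
lemma on_line {ν : Measure (Fin n → ℝ)} (hn : 0 < n) (x₀ : Fin n → ℝ)
    (h : ∀ i j, ∃ a b : ℝ, (a ≠ 0 ∨ b ≠ 0) ∧
      ∀ᵐ x ∂ν, a * (x i - x₀ i) + b * (x j - x₀ j) = 0) :
    ∃ (i : Fin n) (v : Fin n → ℝ), ∀ᵐ x ∂ν, x = x₀ + (x i - x₀ i) • v := by
  by_cases hz : ∀ i, ∀ᵐ x ∂ν, x i - x₀ i = 0
  · refine ⟨⟨0, hn⟩, 0, ?_⟩
    filter_upwards [ae_all_iff.mpr hz] with x hx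
    ext j
    simp only [smul_zero, add_zero]
    linarith [hx j]
  · push Not at hz
    obtain ⟨i, hi⟩ := hz
    have hj : ∀ j, ∃ c : ℝ, ∀ᵐ x ∂ν, x j - x₀ j = (x i - x₀ i) * c := by
      intro j
      obtain ⟨a, b, hab, hx⟩ := h i j
      have hb : b ≠ 0 := by
        rintro rfl
        have ha : a ≠ 0 := by simpa using hab
        refine hi ?_
        filter_upwards [hx] with x hx
        simpa [ha] using hx
      refine ⟨-(a / b), ?_⟩
      filter_upwards [hx] with x hx
      field_simp
      linarith
    choose v hv using hj
    refine ⟨i, v, ?_⟩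
    filter_upwards [ae_all_iff.mpr hv] with x hx
    ext j
    simp only [Pi.add_apply, Pi.smul_apply, smul_eq_mul]
    linarith [hx j]

/-- Conditioning on a closed convex set `A` stays in the constraint set if the conditional mass of
`F` is still at least `p`. -/
lemma cond_mem_locSet {ν : Measure (Fin n → ℝ)} [IsProbabilityMeasure ν] (h : SC s ν)
    (hKν : ∀ᵐ x ∂ν, x ∈ K) (hF : IsClosed F) (hKc : IsClosed K)
    {p : ℝ} {A : Set (Fin n → ℝ)} (hA : IsClosed A) (hAc : Convex ℝ A)
    (hpos : 0 < ν.real A) (hg : 0 ≤ ∫ x in A, (F.indicator (fun _ => (1 : ℝ)) x - p) ∂ν) :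
    ∃ η ∈ locSet s K F (ENNReal.ofReal p),
      (η : Measure (Fin n → ℝ)) = ProbabilityTheory.cond ν A := by
  have hA0 : ν A ≠ 0 := by
    intro h0
    simp [Measure.real, h0] at hpos
  have hprob := ProbabilityTheory.cond_isProbabilityMeasure (μ := ν) hA0
  refine ⟨⟨ProbabilityTheory.cond ν A, hprob⟩, ⟨⟨h.cond hA hAc hpos, ?_⟩, ?_⟩, rfl⟩
  · show 1 ≤ ProbabilityTheory.cond ν A K
    have hae : ∀ᵐ x ∂(ProbabilityTheory.cond ν A), x ∈ K :=
      (ProbabilityTheory.cond_absolutelyContinuous (μ := ν) (s := A)).ae_le hKν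
    exact ((prob_compl_eq_zero_iff hKc.measurableSet).mp hae).ge
  · show ENNReal.ofReal p ≤ ProbabilityTheory.cond ν A F
    rw [integral_sub (((integrable_const (1 : ℝ)).indicator hF.measurableSet)) (integrable_const _),
      integral_indicator hF.measurableSet] at hg
    simp only [integral_const, smul_eq_mul, mul_one, measureReal_restrict_apply_univ,
      Measure.restrict_restrict hF.measurableSet] at hg
    rw [← ofReal_measureReal (measure_ne_top _ _)]
    apply ENNReal.ofReal_le_ofReal
    rw [Measure.real, ProbabilityTheory.cond_apply hA.measurableSet, ENNReal.toReal_mul,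
      ENNReal.toReal_inv]
    change p ≤ (ν.real A)⁻¹ * ν.real (A ∩ F)
    rw [Set.inter_comm]
    rw [inv_mul_eq_div, le_div_iff₀ hpos]
    linarith

/-- If a weighted mean `c` of `a` and `b` is at least `b`, then it is at most `a`. -/
lemma convex_split {u w a b c : ℝ} (hu : 0 < u) (hw : 0 < w) (h : u + w = 1)
    (hc : u * a + w * b = c) (hb : b ≤ c) : c ≤ a := by
  have h1 := mul_le_mul_of_nonneg_left hb hw.le
  have h2 : u * c + w * c = c := by rw [← add_mul, h, one_mul]
  exact le_of_mul_le_mul_left (by linarith) hu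

/-- An extremal measure of the localization problem is carried by a line: otherwise it could be
bisected into two other maximizers with different means, one of which has smaller variance. -/
lemma extremal_on_line (hn : 0 < n) (hs : 0 ≤ s) (hK : IsCompact K) (hF : IsClosed F)
    {g : (Fin n → ℝ) → ℝ} (hg : Continuous g) {p : ℝ}
    {ν : ProbabilityMeasure (Fin n → ℝ)} (hν : ν ∈ locSet s K F (ENNReal.ofReal p))
    (hmax : ∀ η ∈ locSet s K F (ENNReal.ofReal p), ∫ x, g x ∂(η : Measure (Fin n → ℝ)) ≤
        ∫ x, g x ∂(ν : Measure (Fin n → ℝ)))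
    (hmin : ∀ η ∈ locSet s K F (ENNReal.ofReal p), ∫ x, g x ∂(ν : Measure (Fin n → ℝ)) ≤
        ∫ x, g x ∂(η : Measure (Fin n → ℝ)) →
        totalVar (ν : Measure (Fin n → ℝ)) ≤ totalVar (η : Measure (Fin n → ℝ))) :
    ∃ (x₀ : Fin n → ℝ) (i : Fin n) (v : Fin n → ℝ),
      ∀ᵐ x ∂(ν : Measure (Fin n → ℝ)), x = x₀ + (x i - x₀ i) • v := by
  obtain ⟨⟨hSC, hK1⟩, hFq⟩ := hν
  simp only [Set.mem_ofPred_eq] at hSC hK1 hFq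
  generalize hm : (ν : Measure (Fin n → ℝ)) = m at *
  have hprob : IsProbabilityMeasure m := by rw [← hm]; infer_instance
  have hKν := ae_of_one_le hK.measurableSet hK1
  set x₀ : Fin n → ℝ := fun k => ∫ x, x k ∂m with hx₀
  refine ⟨x₀, on_line hn x₀ ?_⟩
  by_contra hcon
  obtain ⟨i, hcon⟩ := not_forall.mp hcon
  obtain ⟨j, hcon⟩ := not_forall.mp hcon
  have hind : ∀ a b : ℝ, (a ≠ 0 ∨ b ≠ 0) →
      ¬ ∀ᵐ x ∂m, a * (x i - x₀ i) + b * (x j - x₀ j) = 0 := fun a b hab hx => hcon ⟨a, b, hab, hx⟩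
  have hitg : ∀ f : (Fin n → ℝ) → ℝ, Continuous f → Integrable f m := fun f hf =>
    cont_integrable hK hKν hf
  set G : (Fin n → ℝ) → ℝ := fun x => F.indicator (fun _ => (1 : ℝ)) x - p with hG
  have hGi : Integrable G m :=
    ((integrable_const (1 : ℝ)).indicator hF.measurableSet).sub (integrable_const _)
  have hG0 : 0 ≤ ∫ x, G x ∂m := by
    simp only [hG]
    rw [integral_sub (((integrable_const (1 : ℝ)).indicator hF.measurableSet)) (integrable_const _),
      integral_indicator hF.measurableSet]
    simp only [integral_const, smul_eq_mul, mul_one, measureReal_restrict_apply_univ,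
      probReal_univ, one_mul]
    rw [← ofReal_measureReal (measure_ne_top _ _)] at hFq
    have := (ENNReal.ofReal_le_ofReal_iff measureReal_nonneg).mp hFq
    linarith
  obtain ⟨a, b, -, hL0, hGA, hGB⟩ := exists_bisect hSC hs hK hKν
    (l₁ := fun x => x i - x₀ i) (l₂ := fun x => x j - x₀ j)
    (by fun_prop) (by fun_prop) (fun x y α => by simp; ring) (fun x y α => by simp; ring)
    hind hGi hG0
  set L : (Fin n → ℝ) → ℝ := fun x => a * (x i - x₀ i) + b * (x j - x₀ j) with hL
  have hLc : Continuous L := by simp only [hL]; fun_prop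
  have hLa : ∀ x y : Fin n → ℝ, ∀ u w : ℝ, u + w = 1 → L (u • x + w • y) = u * L x + w * L y := by
    intro x y u w huw
    have : u = 1 - w := by linarith
    subst this
    simp [hL]; ring
  set A : Set (Fin n → ℝ) := {x | 0 ≤ L x} with hA
  set B : Set (Fin n → ℝ) := {x | L x ≤ 0} with hB
  have hAcl : IsClosed A := isClosed_le continuous_const hLc
  have hBcl : IsClosed B := isClosed_le hLc continuous_const
  have hAc : Convex ℝ A := by
    intro x hx y hy u w hu hw huw
    have h1 : 0 ≤ L x := hx
    have h2 : 0 ≤ L y := hy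
    show 0 ≤ L _
    rw [hLa x y u w huw]; positivity
  have hBc : Convex ℝ B := by
    intro x hx y hy u w hu hw huw
    have h1 : L x ≤ 0 := hx
    have h2 : L y ≤ 0 := hy
    show L _ ≤ 0
    rw [hLa x y u w huw]; nlinarith
  have hsplit : ∀ f : (Fin n → ℝ) → ℝ, Integrable f m →
      ∫ x in A, f x ∂m + ∫ x in B, f x ∂m = ∫ x, f x ∂m := by
    intro f hf
    rw [← integral_add_compl hAcl.measurableSet hf]
    congr 1
    apply setIntegral_congr_set
    filter_upwards [hL0] with x hx
    apply propext
    show L x ≤ 0 ↔ ¬ (0 ≤ L x)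
    exact ⟨fun h => not_le.mpr (lt_of_le_of_ne h hx), fun h => (not_le.mp h).le⟩
  have hmean : ∫ x, L x ∂m = 0 := by
    simp only [hL]
    rw [integral_add (hitg _ (by fun_prop)) (hitg _ (by fun_prop)), integral_const_mul,
      integral_const_mul, integral_sub (hitg _ (by fun_prop)) (integrable_const _),
      integral_sub (hitg _ (by fun_prop)) (integrable_const _)]
    simp [hx₀]
  -- the first moment of `L` on either half cannot vanish
  have hLApos : ∫ x in A, L x ∂m ≠ 0 := by
    intro h0
    have h1 := hsplit L (hitg L hLc)
    rw [h0, hmean, zero_add] at h1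
    have h2 : ∫ x, |L x| ∂m = 0 := by
      rw [← hsplit _ (hitg _ hLc.abs)]
      have e1 : ∫ x in A, |L x| ∂m = ∫ x in A, L x ∂m :=
        setIntegral_congr_fun hAcl.measurableSet fun x hx => abs_of_nonneg hx
      have e2 : ∫ x in B, |L x| ∂m = ∫ x in B, -L x ∂m :=
        setIntegral_congr_fun hBcl.measurableSet fun x hx => abs_of_nonpos hx
      rw [e1, e2, integral_neg, h0, h1]; simp
    rw [integral_eq_zero_iff_of_nonneg (fun x => abs_nonneg _) (hitg _ hLc.abs)] at h2
    have h3 : ∀ᵐ x ∂m, False := by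
      filter_upwards [h2, hL0] with x hx hx2
      exact hx2 (abs_eq_zero.mp hx)
    simp at h3
    exact (IsProbabilityMeasure.ne_zero m) h3
  have hLBeq : ∫ x in B, L x ∂m = - ∫ x in A, L x ∂m := by
    have := hsplit L (hitg L hLc)
    rw [hmean] at this
    linarith
  have hApos : 0 < m.real A := by
    refine lt_of_le_of_ne measureReal_nonneg fun h0 => hLApos ?_
    apply setIntegral_measure_zero
    exact (measureReal_eq_zero_iff).mp h0.symm
  have hBpos : 0 < m.real B := by
    refine lt_of_le_of_ne measureReal_nonneg fun h0 => hLApos ?_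
    have : ∫ x in B, L x ∂m = 0 := setIntegral_measure_zero _ ((measureReal_eq_zero_iff).mp h0.symm)
    linarith
  have hsum : m.real A + m.real B = 1 := by
    have := hsplit (fun _ => 1) (integrable_const _)
    simpa using this
  obtain ⟨η₁, hη₁, he₁⟩ := cond_mem_locSet hSC hKν hF hK.isClosed hAcl hAc hApos hGA
  obtain ⟨η₂, hη₂, he₂⟩ := cond_mem_locSet hSC hKν hF hK.isClosed hBcl hBc hBpos hGB
  set w₁ := m.real A
  set w₂ := m.real B
  have hI : ∀ f : (Fin n → ℝ) → ℝ, Continuous f →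
      w₁ * ∫ x, f x ∂(η₁ : Measure (Fin n → ℝ)) + w₂ * ∫ x, f x ∂(η₂ : Measure (Fin n → ℝ)) =
        ∫ x, f x ∂m := by
    intro f hf
    rw [he₁, he₂, integral_cond_eq, integral_cond_eq, ← hsplit f (hitg f hf),
      mul_inv_cancel_left₀ hApos.ne', mul_inv_cancel_left₀ hBpos.ne']
  have hg1 := hmax _ hη₁
  have hg2 := hmax _ hη₂
  have hgI := hI g hg
  have hg1' : ∫ x, g x ∂m ≤ ∫ x, g x ∂(η₁ : Measure (Fin n → ℝ)) :=
    convex_split hApos hBpos hsum hgI hg2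
  have hg2' : ∫ x, g x ∂m ≤ ∫ x, g x ∂(η₂ : Measure (Fin n → ℝ)) :=
    convex_split hBpos hApos (by linarith) (by linarith) hg1
  have hV1 := hmin _ hη₁ hg1'
  have hV2 := hmin _ hη₂ hg2'
  set m₁ : Fin n → ℝ := fun k => ∫ x, x k ∂(η₁ : Measure (Fin n → ℝ)) with hm₁
  set m₂ : Fin n → ℝ := fun k => ∫ x, x k ∂(η₂ : Measure (Fin n → ℝ)) with hm₂
  have hvar : totalVar m - w₁ * totalVar (η₁ : Measure (Fin n → ℝ)) -
      w₂ * totalVar (η₂ : Measure (Fin n → ℝ)) = w₁ * w₂ * ∑ k, (m₁ k - m₂ k) ^ 2 := by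
    unfold totalVar
    rw [Finset.mul_sum, Finset.mul_sum, Finset.mul_sum, ← Finset.sum_sub_distrib,
      ← Finset.sum_sub_distrib]
    refine Finset.sum_congr rfl fun k _ => ?_
    rw [← hI _ (by fun_prop : Continuous fun x : Fin n → ℝ => x k ^ 2),
      ← hI _ (by fun_prop : Continuous fun x : Fin n → ℝ => x k)]
    have : w₂ = 1 - w₁ := by linarith
    rw [this]
    simp only [hm₁, hm₂]
    ring
  have hle : ∑ k, (m₁ k - m₂ k) ^ 2 ≤ 0 := by
    have h12 : 0 < w₁ * w₂ := mul_pos hApos hBpos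
    by_contra hc
    have h13 := mul_pos h12 (not_le.mp hc)
    rw [← hvar] at h13
    have h14 := mul_le_mul_of_nonneg_left hV1 hApos.le
    have h15 := mul_le_mul_of_nonneg_left hV2 hBpos.le
    have h16 : w₁ * totalVar m + w₂ * totalVar m = totalVar m := by rw [← add_mul, hsum, one_mul]
    linarith
  have hk : ∀ k, m₁ k = m₂ k := by
    intro k
    have h0 := Finset.sum_eq_zero_iff_of_nonneg (s := Finset.univ)
      (f := fun k => (m₁ k - m₂ k) ^ 2) (fun k _ => sq_nonneg _)
    have h1 := (h0.mp (le_antisymm hle (Finset.sum_nonneg fun k _ => sq_nonneg _))) k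
      (Finset.mem_univ k)
    have := pow_eq_zero_iff (two_ne_zero) |>.mp h1
    linarith
  have hk0 : ∀ k, m₁ k = x₀ k := by
    intro k
    have := hI _ (by fun_prop : Continuous fun x : Fin n → ℝ => x k)
    change w₁ * m₁ k + w₂ * m₂ k = x₀ k at this
    rw [← hk k, ← add_mul, hsum, one_mul] at this
    exact this
  have hK₁ := ae_of_one_le hK.measurableSet hη₁.1.2
  have hitg1 : ∀ f : (Fin n → ℝ) → ℝ, Continuous f → Integrable f (η₁ : Measure (Fin n → ℝ)) :=
    fun f hf => cont_integrable hK hK₁ hf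
  have hL1 : ∫ x, L x ∂(η₁ : Measure (Fin n → ℝ)) = 0 := by
    simp only [hL]
    rw [integral_add (hitg1 _ (by fun_prop)) (hitg1 _ (by fun_prop)), integral_const_mul,
      integral_const_mul, integral_sub (hitg1 _ (by fun_prop)) (integrable_const _),
      integral_sub (hitg1 _ (by fun_prop)) (integrable_const _)]
    have e1 := hk0 i
    have e2 := hk0 j
    simp only [hm₁] at e1 e2
    rw [e1, e2]
    simp
  rw [he₁, integral_cond_eq] at hL1
  rcases mul_eq_zero.mp hL1 with h | h
  · exact (inv_ne_zero hApos.ne') h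
  · exact hLApos h

/-- **Localization.** A continuous function `g` has, under some `s`-concave measure on a line still
giving mass `p` to the closed set `F`, an integral at least as large as under `μ`. -/
theorem localization (hn : 0 < n) (hs : 0 ≤ s) (hK : IsCompact K) (hF : IsClosed F)
    {g : (Fin n → ℝ) → ℝ} (hg : Continuous g) {p : ℝ} {μ : Measure (Fin n → ℝ)}
    [IsProbabilityMeasure μ] (hμ : SC s μ) (hKμ : ∀ᵐ x ∂μ, x ∈ K) (hFp : p ≤ μ.real F) :
    ∃ (x₀ v : Fin n → ℝ) (R : ℝ) (η : Measure ℝ), IsProbabilityMeasure η ∧ SC s η ∧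
      (∀ᵐ t ∂η, |t| ≤ R) ∧ p ≤ η.real {t | x₀ + t • v ∈ F} ∧
      ∫ x, g x ∂μ ≤ ∫ t, g (x₀ + t • v) ∂η := by
  have hmem : (⟨μ, inferInstance⟩ : ProbabilityMeasure (Fin n → ℝ)) ∈
      locSet s K F (ENNReal.ofReal p) := by
    refine ⟨⟨hμ, ?_⟩, ?_⟩
    · exact ((prob_compl_eq_zero_iff hK.measurableSet).mp hKμ).ge
    · show ENNReal.ofReal p ≤ μ F
      rw [← ofReal_measureReal (measure_ne_top μ F)]
      exact ENNReal.ofReal_le_ofReal hFp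
  obtain ⟨ν, hν, hmax, hmin⟩ := exists_extremal hs hK hF hg ⟨_, hmem⟩
  obtain ⟨x₀, i, v, hline⟩ := extremal_on_line hn hs hK hF hg hν hmax hmin
  have hgle := hmax _ hmem
  obtain ⟨⟨hSC, hK1⟩, hFq⟩ := hν
  simp only [Set.mem_ofPred_eq] at hSC hK1 hFq
  have hKν := ae_of_one_le hK.measurableSet hK1
  set m := (ν : Measure (Fin n → ℝ)) with hm
  set l : (Fin n → ℝ) → ℝ := fun x => x i - x₀ i with hl
  have hlc : Continuous l := by simp only [hl]; fun_prop
  obtain ⟨R, hR⟩ := hK.exists_bound_of_continuousOn hlc.continuousOn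
  have hprob : IsProbabilityMeasure (m.map l) := Measure.isProbabilityMeasure_map hlc.aemeasurable
  have hT : Continuous fun t : ℝ => x₀ + t • v := by fun_prop
  refine ⟨x₀, v, R, m.map l, hprob, ?_, ?_, ?_, ?_⟩
  · exact hSC.map hK hKν hlc (fun x y α => by simp [hl]; ring)
  · rw [ae_map_iff hlc.aemeasurable (isClosed_le continuous_abs continuous_const).measurableSet]
    filter_upwards [hKν] with x hx using hR x hx
  · change p ≤ (m.map l).real ((fun t : ℝ => x₀ + t • v) ⁻¹' F)
    rw [map_measureReal_apply hlc.measurable (hF.preimage hT).measurableSet]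
    rw [← ofReal_measureReal (measure_ne_top _ _)] at hFq
    have h1 := (ENNReal.ofReal_le_ofReal_iff measureReal_nonneg).mp hFq
    refine h1.trans (le_of_eq (measureReal_congr ?_))
    filter_upwards [hline] with x hx
    apply propext
    show x ∈ F ↔ x₀ + l x • v ∈ F
    rw [← hx]
  · rw [integral_map (f := fun t => g (x₀ + t • v)) hlc.aemeasurable
      (hg.comp hT).aestronglyMeasurable]
    refine hgle.trans (le_of_eq (integral_congr_ae ?_))
    filter_upwards [hline] with x hx
    show g x = g (x₀ + l x • v)
    rw [← hx]

end Localize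

/-! ### Polynomials on `ℝⁿ` -/

section NDim

variable {n : ℕ} {s : ℝ}

lemma IsSConcave.toSC {μ : Measure (Fin n → ℝ)} [IsProbabilityMeasure μ]
    (h : IsSConcave s μ) : SC s μ := by
  intro A B hA hB ha hb α h0 h1
  have ha' : 0 < μ A := by
    by_contra h; simp [Measure.real, nonpos_iff_eq_zero.mp (not_lt.mp h)] at ha
  have hb' : 0 < μ B := by
    by_contra h; simp [Measure.real, nonpos_iff_eq_zero.mp (not_lt.mp h)] at hb
  have := h A B hA hB ha' hb' α h0.le h1.le
  unfold pm
  split_ifs at this ⊢ with hs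
  · have h2 := ENNReal.toReal_mono (measure_ne_top _ _) this
    rwa [ENNReal.toReal_mul, ← ENNReal.toReal_rpow, ← ENNReal.toReal_rpow] at h2
  · rw [← ofReal_measureReal (measure_ne_top μ (α • A + (1 - α) • B))] at this
    exact (ENNReal.ofReal_le_ofReal_iff measureReal_nonneg).mp this

/-- The restriction of a polynomial on `ℝⁿ` to the line `t ↦ x₀ + t v`. -/
def lineRestrict (f : MvPolynomial (Fin n) ℝ) (x₀ v : Fin n → ℝ) : Polynomial ℝ :=
  MvPolynomial.aeval (fun i => Polynomial.C (x₀ i) + Polynomial.C (v i) * Polynomial.X) f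

lemma lineRestrict_natDegree {f : MvPolynomial (Fin n) ℝ} {d : ℕ} (hf : f.totalDegree ≤ d)
    (x₀ v : Fin n → ℝ) : (lineRestrict f x₀ v).natDegree ≤ d := by
  have := MvPolynomial.aeval_natDegree_le (n := 1) f hf
    (fun i => Polynomial.C (x₀ i) + Polynomial.C (v i) * Polynomial.X) (fun i => by compute_degree)
  rwa [mul_one] at this

lemma lineRestrict_eval (f : MvPolynomial (Fin n) ℝ) (x₀ v : Fin n → ℝ) (t : ℝ) :
    (lineRestrict f x₀ v).eval t = MvPolynomial.eval (x₀ + t • v) f := by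
  unfold lineRestrict
  induction f using MvPolynomial.induction_on with
  | C a => simp
  | add p q hp hq => simp [hp, hq]
  | mul_X p i hp =>
    simp only [map_mul, Polynomial.eval_mul, hp, MvPolynomial.aeval_X, MvPolynomial.eval_X]
    simp; left; ring

lemma mv_continuous (f : MvPolynomial (Fin n) ℝ) : Continuous fun x => MvPolynomial.eval x f :=
  MvPolynomial.continuous_eval f

lemma tendsto_cond_integral {μ : Measure (Fin n → ℝ)} [IsProbabilityMeasure μ]
    {g : (Fin n → ℝ) → ℝ} (hg : Integrable g μ) :
    Filter.Tendsto (fun k : ℕ => ∫ x, g x ∂(ProbabilityTheory.cond μ (Metric.closedBall 0 (k : ℝ))))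
      Filter.atTop (nhds (∫ x, g x ∂μ)) := by
  have hU : (⋃ k : ℕ, Metric.closedBall (0 : Fin n → ℝ) (k : ℝ)) = Set.univ :=
    Metric.iUnion_closedBall_nat 0
  have hmono : Monotone fun k : ℕ => Metric.closedBall (0 : Fin n → ℝ) (k : ℝ) := fun i j hij =>
    Metric.closedBall_subset_closedBall (by exact_mod_cast hij)
  have key : ∀ g : (Fin n → ℝ) → ℝ, Integrable g μ → Filter.Tendsto
      (fun k : ℕ => ∫ x in Metric.closedBall (0 : Fin n → ℝ) (k : ℝ), g x ∂μ)
      Filter.atTop (nhds (∫ x, g x ∂μ)) := by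
    intro g hg
    have := tendsto_setIntegral_of_monotone (μ := μ) (f := g)
      (s := fun k : ℕ => Metric.closedBall (0 : Fin n → ℝ) (k : ℝ))
      (fun k => measurableSet_closedBall) hmono hg.integrableOn
    rwa [hU, setIntegral_univ] at this
  have h1 := key (fun _ => 1) (integrable_const _)
  simp only [integral_const, smul_eq_mul, mul_one, measureReal_restrict_apply_univ,
    probReal_univ] at h1
  have h2 := (h1.inv₀ one_ne_zero).mul (key g hg)
  rw [inv_one, one_mul] at h2
  exact h2.congr fun k => (integral_cond_eq _ _).symm

/-- Conditioning on large balls: compactly supported `s`-concave approximations. -/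
lemma eventually_cond {μ : Measure (Fin n → ℝ)} [IsProbabilityMeasure μ] (hμ : SC s μ)
    {F : Set (Fin n → ℝ)} (hF : MeasurableSet F) {q : ℝ} (hq : q < μ.real F) :
    ∀ᶠ k : ℕ in Filter.atTop, ∃ ν : Measure (Fin n → ℝ),
      ν = ProbabilityTheory.cond μ (Metric.closedBall 0 (k : ℝ)) ∧ IsProbabilityMeasure ν ∧
      SC s ν ∧ (∀ᵐ x ∂ν, x ∈ Metric.closedBall (0 : Fin n → ℝ) (k : ℝ)) ∧ q < ν.real F := by
  have hind := tendsto_cond_integral (μ := μ) (g := F.indicator fun _ => (1 : ℝ))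
    ((integrable_const _).indicator hF)
  have hone : ∀ᶠ k : ℕ in Filter.atTop, 0 < μ.real (Metric.closedBall (0 : Fin n → ℝ) (k : ℝ)) := by
    have hlim := tendsto_measure_iUnion_atTop (μ := μ)
      (s := fun k : ℕ => Metric.closedBall (0 : Fin n → ℝ) (k : ℝ)) (fun i j hij =>
        Metric.closedBall_subset_closedBall (by exact_mod_cast hij))
    rw [Metric.iUnion_closedBall_nat, measure_univ] at hlim
    filter_upwards [hlim.eventually (lt_mem_nhds (show (0 : ENNReal) < 1 by norm_num))] with k hk
    exact ENNReal.toReal_pos hk.ne' (measure_ne_top _ _)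
  simp only [integral_indicator hF, integral_const, smul_eq_mul, mul_one,
    measureReal_restrict_apply_univ] at hind
  filter_upwards [hone, hind.eventually (lt_mem_nhds hq)] with k hk hqk
  have hne : μ (Metric.closedBall (0 : Fin n → ℝ) (k : ℝ)) ≠ 0 := by
    intro h0; simp [Measure.real, h0] at hk
  refine ⟨_, rfl, ProbabilityTheory.cond_isProbabilityMeasure hne,
    hμ.cond Metric.isClosed_closedBall (convex_closedBall _ _) hk, ?_, hqk⟩
  exact ProbabilityTheory.ae_cond_mem measurableSet_closedBall

/-- One-sided oscillation estimate on `ℝⁿ`, from the one on lines by localization. -/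
theorem osc_nd (hn : 0 < n) (hs : 0 ≤ s) {μ : Measure (Fin n → ℝ)} [IsProbabilityMeasure μ]
    (hμ : SC s μ) {f : MvPolynomial (Fin n) ℝ} {d : ℕ} (hd : 0 < d) (hf : f.totalDegree ≤ d)
    {φ : ℝ → ℝ} (hφ : ContDiff ℝ 1 φ) {ε : ℝ} (hε : 0 < ε) (hb : ∀ t, |φ t| ≤ ε)
    (hb' : ∀ t, |deriv φ t| ≤ 1) (hz : ∀ t, 0 ≤ t → φ t = 0)
    (hm : 1 / 8 < μ.real {x | 1 ≤ MvPolynomial.eval x f}) :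
    ∫ x, deriv φ (MvPolynomial.eval x f) ∂μ ≤ 32832 * ε ^ (1 / (d : ℝ)) := by
  have hφc : Continuous (deriv φ) := hφ.continuous_deriv le_rfl
  have hgc : Continuous fun x : Fin n → ℝ => deriv φ (MvPolynomial.eval x f) :=
    hφc.comp (mv_continuous f)
  have hF : IsClosed {x : Fin n → ℝ | 1 ≤ MvPolynomial.eval x f} :=
    isClosed_le continuous_const (mv_continuous f)
  have hgi : Integrable (fun x : Fin n → ℝ => deriv φ (MvPolynomial.eval x f)) μ :=
    Integrable.of_bound hgc.aestronglyMeasurable 1 (Filter.Eventually.of_forall fun x => hb' _)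
  refine le_of_tendsto (tendsto_cond_integral hgi) ?_
  filter_upwards [eventually_cond hμ hF.measurableSet hm] with k hk
  obtain ⟨ν, rfl, hprob, hSC, hK, hmk⟩ := hk
  obtain ⟨x₀, v, R, η, hη, hηSC, hηR, hηF, hle⟩ := localization hn hs
    (isCompact_closedBall (0 : Fin n → ℝ) (k : ℝ)) hF hgc hSC hK le_rfl
  refine hle.trans ?_
  simp only [← lineRestrict_eval]
  refine osc_line hs hηSC hηR hd (lineRestrict_natDegree hf x₀ v) hφ hε hb hb' hz ?_
  simp only [lineRestrict_eval]
  exact hmk.trans_le hηF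

/-- Moment comparison on `ℝⁿ`, from the one on lines by localization. -/
theorem second_moment_nd (hn : 0 < n) (hs : 0 ≤ s) (hs1 : s ≤ 1) {μ : Measure (Fin n → ℝ)}
    [IsProbabilityMeasure μ] (hμ : SC s μ) {f : MvPolynomial (Fin n) ℝ} {d : ℕ} (hd : 0 < d)
    (hf : f.totalDegree ≤ d) {M : ℝ} (hm : 1 / 2 ≤ μ.real {x | |MvPolynomial.eval x f| ≤ M})
    (hitg : Integrable (fun x => MvPolynomial.eval x f ^ 2) μ) :
    ∫ x, MvPolynomial.eval x f ^ 2 ∂μ ≤ M ^ 2 * (2 ^ 18 * dimFactor s d) ^ (2 * d) := by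
  have hgc : Continuous fun x : Fin n → ℝ => MvPolynomial.eval x f ^ 2 := (mv_continuous f).pow 2
  have hF : IsClosed {x : Fin n → ℝ | |MvPolynomial.eval x f| ≤ M} :=
    isClosed_le (mv_continuous f).abs continuous_const
  refine le_of_tendsto (tendsto_cond_integral hitg) ?_
  filter_upwards [eventually_cond hμ hF.measurableSet (show (3 : ℝ) / 8 < _ by linarith)] with k hk
  obtain ⟨ν, rfl, hprob, hSC, hK, hmk⟩ := hk
  obtain ⟨x₀, v, R, η, hη, hηSC, hηR, hηF, hle⟩ := localization hn hs
    (isCompact_closedBall (0 : Fin n → ℝ) (k : ℝ)) hF hgc hSC hK le_rfl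
  refine hle.trans ?_
  simp only [← lineRestrict_eval]
  refine second_moment_line hs hs1 hηSC hηR hd (lineRestrict_natDegree hf x₀ v) ?_
  simp only [lineRestrict_eval]
  exact hmk.le.trans hηF

end NDim

/-! ### Quantiles, cutoff and conclusion -/

section Final

variable {n : ℕ} {s : ℝ}

lemma exists_quantile (ρ : Measure ℝ) [IsProbabilityMeasure ρ] {q : ℝ} (hq0 : 0 < q) (hq1 : q < 1) :
    ∃ a : ℝ, q ≤ ρ.real (Set.Iic a) ∧ ρ.real (Set.Iio a) ≤ q := by
  set S : Set ℝ := {x | q ≤ ProbabilityTheory.cdf ρ x} with hS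
  have hne : S.Nonempty := by
    obtain ⟨x, hx⟩ := ((ProbabilityTheory.tendsto_cdf_atTop ρ).eventually (lt_mem_nhds hq1)).exists
    exact ⟨x, hx.le⟩
  have hbd : BddBelow S := by
    obtain ⟨x, hx⟩ := ((ProbabilityTheory.tendsto_cdf_atBot ρ).eventually (gt_mem_nhds hq0)).exists
    refine ⟨x, fun y hy => ?_⟩
    by_contra hlt
    have := ProbabilityTheory.monotone_cdf ρ (not_le.mp hlt).le
    have hy' : q ≤ ProbabilityTheory.cdf ρ y := hy
    linarith
  refine ⟨sInf S, ?_, ?_⟩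
  · rw [← ProbabilityTheory.cdf_eq_real]
    have hrc := (ProbabilityTheory.cdf ρ).right_continuous (sInf S)
    have h2 : Filter.Tendsto (ProbabilityTheory.cdf ρ) (nhdsWithin (sInf S) (Set.Ioi (sInf S)))
        (nhds (ProbabilityTheory.cdf ρ (sInf S))) :=
      hrc.tendsto.mono_left (nhdsWithin_mono _ Set.Ioi_subset_Ici_self)
    refine ge_of_tendsto h2 ?_
    filter_upwards [self_mem_nhdsWithin] with x hx
    obtain ⟨y, hy, hyx⟩ := exists_lt_of_csInf_lt hne hx
    exact le_trans hy (ProbabilityTheory.monotone_cdf ρ hyx.le)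
  · obtain ⟨u, hu, hul, hlim⟩ := exists_seq_strictMono_tendsto (sInf S)
    have hU : (⋃ k, Set.Iic (u k)) = Set.Iio (sInf S) := iUnion_Iic_eq_Iio_of_lt_of_tendsto hul hlim
    have h1 := tendsto_measure_iUnion_atTop (μ := ρ) (s := fun k => Set.Iic (u k))
      (fun i j hij => Set.Iic_subset_Iic.mpr (hu.monotone hij))
    rw [hU] at h1
    have h2 := (ENNReal.tendsto_toReal (measure_ne_top ρ _)).comp h1
    refine le_of_tendsto' h2 fun k => ?_
    have h3 : u k ∉ S := fun h => not_lt.mpr (csInf_le hbd h) (hul k)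
    have h4 := (not_le.mp (show ¬ q ≤ ProbabilityTheory.cdf ρ (u k) from h3)).le
    rwa [ProbabilityTheory.cdf_eq_real] at h4

/-- The one-sided estimate for a test function vanishing on `[b - T, ∞)`. -/
lemma osc_right (hn : 0 < n) (hs : 0 ≤ s) {μ : Measure (Fin n → ℝ)} [IsProbabilityMeasure μ]
    (hμ : SC s μ) {f : MvPolynomial (Fin n) ℝ} {d : ℕ} (hd : 0 < d) (hf : f.totalDegree ≤ d)
    {ψ : ℝ → ℝ} (hψ : ContDiff ℝ 1 ψ) {ε N b T : ℝ} (hε : 0 < ε) (hN : 0 < N) (hT : 0 < T)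
    (hb : ∀ t, |ψ t| ≤ ε) (hb' : ∀ t, |deriv ψ t| ≤ N) (hz : ∀ t, b - T ≤ t → ψ t = 0)
    (hm : 1 / 4 ≤ μ.real {x | b ≤ MvPolynomial.eval x f}) :
    ∫ x, deriv ψ (MvPolynomial.eval x f) ∂μ ≤ 32832 * N * (ε / (N * T)) ^ (1 / (d : ℝ)) := by
  set F : MvPolynomial (Fin n) ℝ := MvPolynomial.C T⁻¹ * (f - MvPolynomial.C (b - T)) with hF
  have hFe : ∀ x, MvPolynomial.eval x F = T⁻¹ * (MvPolynomial.eval x f - (b - T)) := by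
    intro x; simp [hF]
  have hFd : F.totalDegree ≤ d := by
    refine (MvPolynomial.totalDegree_mul _ _).trans ?_
    rw [MvPolynomial.totalDegree_C, zero_add]
    refine (MvPolynomial.totalDegree_sub _ _).trans ?_
    rw [MvPolynomial.totalDegree_C]
    exact max_le hf (Nat.zero_le _)
  set φ : ℝ → ℝ := fun u => (N * T)⁻¹ * ψ (b - T + T * u) with hφ
  have hder : ∀ u, deriv φ u = N⁻¹ * deriv ψ (b - T + T * u) := by
    intro u
    have h1 : HasDerivAt ψ (deriv ψ (b - T + T * u)) (b - T + T * u) :=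
      (hψ.differentiable one_ne_zero _).hasDerivAt
    have h2 : HasDerivAt (fun u : ℝ => b - T + T * u) T u := by
      simpa using ((hasDerivAt_id u).const_mul T).const_add (b - T)
    have h3 := (h1.comp u h2).const_mul ((N * T)⁻¹)
    rw [show φ = fun y => (N * T)⁻¹ * (ψ ∘ fun u : ℝ => b - T + T * u) y from rfl, h3.deriv]
    field_simp
  have hNT : 0 < N * T := mul_pos hN hT
  have key := osc_nd hn hs hμ hd hFd (φ := φ) (ε := ε / (N * T))
    (contDiff_const.mul (hψ.comp (contDiff_const.add (contDiff_const.mul contDiff_id))))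
    (by positivity) (fun t => by
      simp only [hφ, abs_mul, abs_of_pos (inv_pos.mpr hNT)]
      rw [inv_mul_eq_div]
      exact div_le_div_of_nonneg_right (hb _) hNT.le)
    (fun t => by
      rw [hder, abs_mul, abs_of_pos (inv_pos.mpr hN), inv_mul_eq_div, div_le_one hN]
      exact hb' _)
    (fun t ht => by
      simp only [hφ]
      rw [hz _ (by nlinarith), mul_zero])
    (by
      refine lt_of_lt_of_le (by norm_num) (hm.trans (measureReal_mono ?_ (measure_ne_top _ _)))
      intro x hx
      have hx' : b ≤ MvPolynomial.eval x f := hx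
      show 1 ≤ MvPolynomial.eval x F
      rw [hFe, inv_mul_eq_div, le_div_iff₀ hT]
      linarith)
  have heq : ∫ x, deriv φ (MvPolynomial.eval x F) ∂μ =
      N⁻¹ * ∫ x, deriv ψ (MvPolynomial.eval x f) ∂μ := by
    rw [← integral_const_mul]
    congr 1
    ext x
    rw [hder, hFe]
    congr 2
    field_simp
    ring
  rw [heq, inv_mul_eq_div, div_le_iff₀ hN] at key
  linarith

/-- The one-sided estimate for a test function vanishing on `(-∞, a + T]`. -/
lemma osc_left (hn : 0 < n) (hs : 0 ≤ s) {μ : Measure (Fin n → ℝ)} [IsProbabilityMeasure μ]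
    (hμ : SC s μ) {f : MvPolynomial (Fin n) ℝ} {d : ℕ} (hd : 0 < d) (hf : f.totalDegree ≤ d)
    {ψ : ℝ → ℝ} (hψ : ContDiff ℝ 1 ψ) {ε N a T : ℝ} (hε : 0 < ε) (hN : 0 < N) (hT : 0 < T)
    (hb : ∀ t, |ψ t| ≤ ε) (hb' : ∀ t, |deriv ψ t| ≤ N) (hz : ∀ t, t ≤ a + T → ψ t = 0)
    (hm : 1 / 4 ≤ μ.real {x | MvPolynomial.eval x f ≤ a}) :
    ∫ x, deriv ψ (MvPolynomial.eval x f) ∂μ ≤ 32832 * N * (ε / (N * T)) ^ (1 / (d : ℝ)) := by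
  have hder : ∀ u, deriv (fun u => - ψ (-u)) u = deriv ψ (-u) := by
    intro u
    have h1 : HasDerivAt ψ (deriv ψ (-u)) (-u) :=
      (hψ.differentiable one_ne_zero _).hasDerivAt
    have h3 := (h1.comp u (hasDerivAt_neg u)).neg
    have h4 : (fun u => - ψ (-u)) = -(ψ ∘ Neg.neg) := rfl
    rw [h4, h3.deriv]
    ring
  have key := osc_right hn hs hμ hd (f := -f) (by rwa [MvPolynomial.totalDegree_neg])
    (ψ := fun u => - ψ (-u)) (hψ.comp contDiff_neg).neg (b := -a) hε hN hT
    (fun t => by rw [abs_neg]; exact hb _) (fun t => by rw [hder]; exact hb' _)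
    (fun t ht => by rw [hz _ (by linarith), neg_zero])
    (by simpa using hm)
  simpa [hder] using key

lemma exists_step_bound : ∃ L : ℝ, 0 < L ∧ ∀ x, |deriv Real.smoothTransition x| ≤ L := by
  have hc : Continuous (deriv Real.smoothTransition) :=
    (Real.smoothTransition.contDiff (n := 1)).continuous_deriv le_rfl
  obtain ⟨B, hB⟩ := (isCompact_Icc (a := (0 : ℝ)) (b := 1)).exists_bound_of_continuousOn
    hc.continuousOn
  refine ⟨|B| + 1, by positivity, fun x => ?_⟩
  by_cases hx : x ∈ Set.Icc (0 : ℝ) 1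
  · have h1 := hB x hx
    have h2 := le_abs_self B
    rw [Real.norm_eq_abs] at h1
    linarith
  · have h0 : deriv Real.smoothTransition x = 0 := by
      rw [Set.mem_Icc, not_and_or, not_le, not_le] at hx
      rcases hx with hx | hx
      · have : Real.smoothTransition =ᶠ[nhds x] fun _ => 0 := by
          filter_upwards [Iio_mem_nhds hx] with y hy
          exact Real.smoothTransition.zero_of_nonpos (le_of_lt hy)
        rw [this.deriv_eq]; simp
      · have : Real.smoothTransition =ᶠ[nhds x] fun _ => 1 := by
          filter_upwards [Ioi_mem_nhds hx] with y hy
          exact Real.smoothTransition.one_of_one_le (le_of_lt hy)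
        rw [this.deriv_eq]; simp
    rw [h0, abs_zero]
    positivity

/-- The two-sided estimate in terms of the gap `b - a` between two quantiles: `φ` is cut by a smooth
step `χ` on the middle third of `[a, b]` into `φ (1 - χ)` and `φ χ`, each covered by a one-sided
estimate. -/
lemma osc_quantile {L : ℝ} (hL0 : 0 < L) (hL : ∀ x, |deriv Real.smoothTransition x| ≤ L)
    (hn : 0 < n) (hs : 0 ≤ s) {μ : Measure (Fin n → ℝ)} [IsProbabilityMeasure μ]
    (hμ : SC s μ) {f : MvPolynomial (Fin n) ℝ} {d : ℕ} (hd : 0 < d) (hf : f.totalDegree ≤ d)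
    {φ : ℝ → ℝ} (hφ : ContDiff ℝ 1 φ) {ε N a b : ℝ} (hε : 0 < ε) (hN : 0 < N) (hab : a < b)
    (hb : ∀ t, |φ t| ≤ ε) (hb' : ∀ t, |deriv φ t| ≤ N)
    (ha1 : 1 / 4 ≤ μ.real {x | MvPolynomial.eval x f ≤ a})
    (hb1 : 1 / 4 ≤ μ.real {x | b ≤ MvPolynomial.eval x f}) :
    ∫ x, deriv φ (MvPolynomial.eval x f) ∂μ ≤
      196992 * (1 + 3 * L) * N * (ε / (N * (b - a))) ^ (1 / (d : ℝ)) := by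
  have hM : 0 < b - a := sub_pos.mpr hab
  have hNM : 0 < N * (b - a) := mul_pos hN hM
  have hd1 : (1 : ℝ) ≤ d := by exact_mod_cast hd
  have hdp : 0 < 1 / (d : ℝ) := by positivity
  have hitg : ∀ ψ : ℝ → ℝ, ContDiff ℝ 1 ψ → ∀ B, (∀ t, |deriv ψ t| ≤ B) →
      Integrable (fun x => deriv ψ (MvPolynomial.eval x f)) μ := fun ψ hψ B hB =>
    Integrable.of_bound ((hψ.continuous_deriv le_rfl).comp (mv_continuous f)).aestronglyMeasurable B
      (Filter.Eventually.of_forall fun x => hB _)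
  rcases le_or_gt (N * (b - a)) ε with hcase | hcase
  · -- the right-hand side exceeds the trivial bound `N`
    have h1 : ∫ x, deriv φ (MvPolynomial.eval x f) ∂μ ≤ N := by
      have := integral_mono (hitg φ hφ N hb') (integrable_const N) (fun x => (abs_le.mp (hb' _)).2)
      simpa using this
    have h2 : 1 ≤ (ε / (N * (b - a))) ^ (1 / (d : ℝ)) :=
      Real.one_le_rpow ((one_le_div hNM).mpr hcase) hdp.le
    have h3 : N * 1 ≤ N * (ε / (N * (b - a))) ^ (1 / (d : ℝ)) := by gcongr
    have h4 : 1 ≤ 196992 * (1 + 3 * L) := by linarith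
    nlinarith
  · set T := (b - a) / 3 with hT
    have hTp : 0 < T := by positivity
    set χ : ℝ → ℝ := fun u => Real.smoothTransition (T⁻¹ * (u - (a + T))) with hχ
    have hχs : ContDiff ℝ 1 χ := Real.smoothTransition.contDiff.comp
      (contDiff_const.mul (contDiff_id.sub contDiff_const))
    have hχ0 : ∀ u, u ≤ a + T → χ u = 0 := fun u hu =>
      Real.smoothTransition.zero_of_nonpos
        (mul_nonpos_of_nonneg_of_nonpos (by positivity) (by linarith))
    have hχ1 : ∀ u, b - T ≤ u → χ u = 1 := fun u hu => by
      apply Real.smoothTransition.one_of_one_le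
      rw [inv_mul_eq_div, le_div_iff₀ hTp]
      linarith
    have hχn : ∀ u, 0 ≤ χ u := fun u => Real.smoothTransition.nonneg _
    have hχl : ∀ u, χ u ≤ 1 := fun u => Real.smoothTransition.le_one _
    have hχd : ∀ u, |deriv χ u| ≤ T⁻¹ * L := by
      intro u
      have h1 : HasDerivAt Real.smoothTransition
          (deriv Real.smoothTransition (T⁻¹ * (u - (a + T)))) (T⁻¹ * (u - (a + T))) :=
        ((Real.smoothTransition.contDiff (n := 1)).differentiable one_ne_zero _).hasDerivAt
      have h2 : HasDerivAt (fun u : ℝ => T⁻¹ * (u - (a + T))) T⁻¹ u := by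
        simpa using ((hasDerivAt_id u).sub_const (a + T)).const_mul T⁻¹
      have h3 := (h1.comp u h2).deriv
      rw [show χ = Real.smoothTransition ∘ fun u : ℝ => T⁻¹ * (u - (a + T)) from rfl, h3, abs_mul,
        abs_of_pos (inv_pos.mpr hTp), mul_comm]
      gcongr
      exact hL _
    have hφd : Differentiable ℝ φ := hφ.differentiable one_ne_zero
    have hχdf : Differentiable ℝ χ := hχs.differentiable one_ne_zero
    have hd1' : ∀ u, deriv (fun u => φ u * (1 - χ u)) u =
        deriv φ u * (1 - χ u) - φ u * deriv χ u := by
      intro u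
      have := ((hφd u).hasDerivAt.mul ((hχdf u).hasDerivAt.const_sub 1)).deriv
      change deriv (fun u => φ u * (1 - χ u)) u = _ at this
      rw [this]; ring
    have hd2' : ∀ u, deriv (fun u => φ u * χ u) u = deriv φ u * χ u + φ u * deriv χ u := by
      intro u
      exact ((hφd u).hasDerivAt.mul (hχdf u).hasDerivAt).deriv
    set N' := (1 + 3 * L) * N with hN'
    have hN'p : 0 < N' := by positivity
    have hεT : ε * (T⁻¹ * L) ≤ 3 * L * N := by
      have : ε * T⁻¹ ≤ 3 * N := by
        rw [← div_eq_mul_inv, div_le_iff₀ hTp, hT]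
        linarith
      calc ε * (T⁻¹ * L) = ε * T⁻¹ * L := by ring
        _ ≤ 3 * N * L := by gcongr
        _ = 3 * L * N := by ring
    have hφχ : ∀ u, |φ u * deriv χ u| ≤ 3 * L * N := by
      intro u
      rw [abs_mul]
      exact (mul_le_mul (hb u) (hχd u) (abs_nonneg _) hε.le).trans hεT
    have hB1 : ∀ u, |deriv (fun u => φ u * (1 - χ u)) u| ≤ N' := by
      intro u
      rw [hd1']
      refine (abs_sub _ _).trans ?_
      have h1 : |deriv φ u * (1 - χ u)| ≤ N := by
        rw [abs_mul, abs_of_nonneg (by linarith [hχl u] : 0 ≤ 1 - χ u)]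
        have := mul_le_mul (hb' u) (by linarith [hχn u] : 1 - χ u ≤ 1)
          (by linarith [hχl u]) hN.le
        linarith
      have h2 := hφχ u
      rw [hN']; linarith
    have hB2 : ∀ u, |deriv (fun u => φ u * χ u) u| ≤ N' := by
      intro u
      rw [hd2']
      refine (abs_add_le _ _).trans ?_
      have h1 : |deriv φ u * χ u| ≤ N := by
        rw [abs_mul, abs_of_nonneg (hχn u)]
        have := mul_le_mul (hb' u) (hχl u) (hχn u) hN.le
        linarith
      have h2 := hφχ u
      rw [hN']; linarith
    have hs1 : ContDiff ℝ 1 (fun u => φ u * (1 - χ u)) := hφ.mul (contDiff_const.sub hχs)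
    have hs2 : ContDiff ℝ 1 (fun u => φ u * χ u) := hφ.mul hχs
    have k1 := osc_right hn hs hμ hd hf hs1 hε hN'p hTp
      (fun t => by
        rw [abs_mul, abs_of_nonneg (by linarith [hχl t] : 0 ≤ 1 - χ t)]
        have := mul_le_mul (hb t) (by linarith [hχn t] : 1 - χ t ≤ 1) (by linarith [hχl t]) hε.le
        linarith) hB1 (fun t ht => by rw [hχ1 t ht]; ring) hb1
    have k2 := osc_left hn hs hμ hd hf hs2 hε hN'p hTp
      (fun t => by
        rw [abs_mul, abs_of_nonneg (hχn t)]
        have := mul_le_mul (hb t) (hχl t) (hχn t) hε.le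
        linarith) hB2 (fun t ht => by rw [hχ0 t ht]; ring) ha1
    have hsum : ∫ x, deriv φ (MvPolynomial.eval x f) ∂μ =
        ∫ x, deriv (fun u => φ u * (1 - χ u)) (MvPolynomial.eval x f) ∂μ +
        ∫ x, deriv (fun u => φ u * χ u) (MvPolynomial.eval x f) ∂μ := by
      rw [← integral_add (hitg _ hs1 _ hB1) (hitg _ hs2 _ hB2)]
      congr 1
      ext x
      rw [hd1', hd2']
      ring
    have hratio : (ε / (N' * T)) ^ (1 / (d : ℝ)) ≤ 3 * (ε / (N * (b - a))) ^ (1 / (d : ℝ)) := by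
      have h1 : ε / (N' * T) ≤ 3 * (ε / (N * (b - a))) := by
        have : 3 * (ε / (N * (b - a))) = ε / (N * T) := by
          rw [hT]; field_simp
        rw [this]
        apply div_le_div_of_nonneg_left hε.le (by positivity)
        apply mul_le_mul_of_nonneg_right _ hTp.le
        rw [hN']
        nlinarith
      refine (Real.rpow_le_rpow (by positivity) h1 hdp.le).trans ?_
      rw [Real.mul_rpow (by norm_num) (by positivity)]
      apply mul_le_mul_of_nonneg_right _ (by positivity)
      have h3 : (3 : ℝ) ^ (1 / (d : ℝ)) ≤ 3 ^ (1 : ℝ) :=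
        Real.rpow_le_rpow_of_exponent_le (by norm_num) (by rw [div_le_one (by linarith)]; exact hd1)
      rwa [Real.rpow_one] at h3
    have hfin : 32832 * N' * (ε / (N' * T)) ^ (1 / (d : ℝ)) ≤
        32832 * N' * (3 * (ε / (N * (b - a))) ^ (1 / (d : ℝ))) := by gcongr
    rw [hsum]
    have he : 196992 * (1 + 3 * L) * N * (ε / (N * (b - a))) ^ (1 / (d : ℝ)) =
        2 * (32832 * N' * (3 * (ε / (N * (b - a))) ^ (1 / (d : ℝ)))) := by rw [hN']; ring
    rw [he]
    linarith

end Final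

section Concl

variable {n : ℕ} {s : ℝ}

/-- The combination of the moment and oscillation estimates, for `C¹` test functions. -/
theorem main_estimate {L : ℝ} (hL0 : 0 < L) (hL : ∀ x, |deriv Real.smoothTransition x| ≤ L)
    (hn : 0 < n) (hs : 0 ≤ s) (hs1 : s ≤ 1) {μ : Measure (Fin n → ℝ)} [IsProbabilityMeasure μ]
    (hμ : SC s μ) {f : MvPolynomial (Fin n) ℝ} {d : ℕ} (hd : 0 < d) (hf : f.totalDegree ≤ d)
    {φ : ℝ → ℝ} (hφ : ContDiff ℝ 1 φ) {ε N : ℝ}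
    (hb : ∀ t, |φ t| ≤ ε) (hb' : ∀ t, |deriv φ t| ≤ N) :
    (∫ x, (MvPolynomial.eval x f - ∫ y, MvPolynomial.eval y f ∂μ) ^ 2 ∂μ) ^ (1 / (2 * (d : ℝ))) *
        (∫ x, deriv φ (MvPolynomial.eval x f) ∂μ) ≤
      (2 ^ 18 * (196992 * (1 + 3 * L))) * dimFactor s d * ε ^ (1 / (d : ℝ)) *
        N ^ (1 - 1 / (d : ℝ)) := by
  have hm1 := one_le_dimFactor (d := d) hs hs1 hd
  set m := dimFactor s d with hm
  have hε0 : 0 ≤ ε := (abs_nonneg _).trans (hb 0)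
  have hN0 : 0 ≤ N := (abs_nonneg _).trans (hb' 0)
  have hd0 : (0 : ℝ) < d := by exact_mod_cast hd
  have hRHS : 0 ≤ (2 ^ 18 * (196992 * (1 + 3 * L))) * m * ε ^ (1 / (d : ℝ)) *
      N ^ (1 - 1 / (d : ℝ)) := by positivity
  set E := ∫ y, MvPolynomial.eval y f ∂μ with hE
  set X := ∫ x, (MvPolynomial.eval x f - E) ^ 2 ∂μ with hX
  set Y := ∫ x, deriv φ (MvPolynomial.eval x f) ∂μ with hY
  have hX0 : 0 ≤ X := integral_nonneg fun x => sq_nonneg _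
  have h2d : 1 / (2 * (d : ℝ)) ≠ 0 := by positivity
  have hXpow : 0 ≤ X ^ (1 / (2 * (d : ℝ))) := Real.rpow_nonneg hX0 _
  have hXzero : X = 0 → X ^ (1 / (2 * (d : ℝ))) * Y ≤
      (2 ^ 18 * (196992 * (1 + 3 * L))) * m * ε ^ (1 / (d : ℝ)) * N ^ (1 - 1 / (d : ℝ)) := by
    intro h
    rw [h, Real.zero_rpow h2d, zero_mul]
    exact hRHS
  by_cases hitg : Integrable (fun x => (MvPolynomial.eval x f - E) ^ 2) μ
  swap
  · exact hXzero (integral_undef hitg)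
  rcases le_or_gt Y 0 with hY0 | hY0
  · exact (mul_nonpos_of_nonneg_of_nonpos hXpow hY0).trans hRHS
  have hNp : 0 < N := by
    refine lt_of_le_of_ne hN0 fun h => ?_
    have : Y = 0 := by
      rw [hY]
      have : ∀ t, deriv φ t = 0 := fun t => abs_eq_zero.mp (le_antisymm (h ▸ hb' t) (abs_nonneg _))
      simp [this]
    linarith
  have hεp : 0 < ε := by
    refine lt_of_le_of_ne hε0 fun h => ?_
    have h0 : φ = fun _ => 0 := by
      ext t
      exact abs_eq_zero.mp (le_antisymm (h ▸ hb t) (abs_nonneg _))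
    have : Y = 0 := by
      rw [hY, h0]
      simp
    linarith
  have hfm : Measurable fun x : Fin n → ℝ => MvPolynomial.eval x f := (mv_continuous f).measurable
  -- quantiles of the law of `f`
  set ρ := μ.map fun x => MvPolynomial.eval x f with hρ
  have hρp : IsProbabilityMeasure ρ := Measure.isProbabilityMeasure_map hfm.aemeasurable
  obtain ⟨a, ha1, ha2⟩ := exists_quantile ρ (q := 1 / 4) (by norm_num) (by norm_num)
  obtain ⟨b, hb1, hb2⟩ := exists_quantile ρ (q := 3 / 4) (by norm_num) (by norm_num)
  have hIciE : ∀ c : ℝ, ρ.real (Set.Ici c) = 1 - ρ.real (Set.Iio c) := by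
    intro c
    rw [← Set.compl_Iio, probReal_compl_eq_one_sub measurableSet_Iio]
  have hab : a ≤ b := by
    by_contra hlt
    have : ρ.real (Set.Iic b) ≤ ρ.real (Set.Iio a) := measureReal_mono
      (fun x (hx : x ≤ b) => lt_of_le_of_lt hx (not_le.mp hlt)) (measure_ne_top _ _)
    linarith
  have hpush : ∀ S : Set ℝ, MeasurableSet S →
      ρ.real S = μ.real {x | MvPolynomial.eval x f ∈ S} := fun S hS =>
    map_measureReal_apply hfm hS
  have hqa : 1 / 4 ≤ μ.real {x | MvPolynomial.eval x f ≤ a} := by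
    have := hpush _ (measurableSet_Iic (a := a))
    rw [this] at ha1
    exact ha1
  have hqb : 1 / 4 ≤ μ.real {x | b ≤ MvPolynomial.eval x f} := by
    have := hpush _ (measurableSet_Ici (a := b))
    rw [hIciE] at this
    change _ = μ.real {x | b ≤ MvPolynomial.eval x f} at this
    linarith
  have hmid : 1 / 2 ≤ μ.real {x | |MvPolynomial.eval x f - a| ≤ b - a} := by
    have h1 : ρ.real (Set.Iic b) ≤ ρ.real (Set.Iio a) + ρ.real (Set.Icc a b) := by
      refine (measureReal_mono ?_ (measure_ne_top _ _)).trans (measureReal_union_le _ _)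
      intro x hx
      rcases lt_or_ge x a with h | h
      · exact Or.inl h
      · exact Or.inr ⟨h, hx⟩
    have h2 : ρ.real (Set.Icc a b) ≤ μ.real {x | |MvPolynomial.eval x f - a| ≤ b - a} := by
      rw [hpush _ measurableSet_Icc]
      refine measureReal_mono ?_ (measure_ne_top _ _)
      intro x hx
      have hx1 : a ≤ MvPolynomial.eval x f := hx.1
      have hx2 : MvPolynomial.eval x f ≤ b := hx.2
      show |MvPolynomial.eval x f - a| ≤ b - a
      rw [abs_of_nonneg (by linarith)]
      linarith
    linarith
  -- second moment about `a`
  have hi1 : Integrable (fun x => MvPolynomial.eval x f - E) μ := by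
    refine Integrable.mono' ((integrable_const (1 : ℝ)).add hitg)
      ((mv_continuous f).sub continuous_const).aestronglyMeasurable
      (Filter.Eventually.of_forall fun x => ?_)
    simp only [Pi.add_apply, Real.norm_eq_abs]
    rw [← sq_abs]
    nlinarith [sq_nonneg (|MvPolynomial.eval x f - E| - 1), abs_nonneg (MvPolynomial.eval x f - E)]
  have hi0 : Integrable (fun x => MvPolynomial.eval x f) μ := by
    have := hi1.add (integrable_const E)
    refine this.congr (Filter.Eventually.of_forall fun x => ?_)
    simp
  have hmean : ∫ x, (MvPolynomial.eval x f - E) ∂μ = 0 := by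
    rw [integral_sub hi0 (integrable_const _)]
    simp [hE]
  have hexp : ∀ x, (MvPolynomial.eval x f - a) ^ 2 = (MvPolynomial.eval x f - E) ^ 2 +
      (2 * (E - a) * (MvPolynomial.eval x f - E) + (E - a) ^ 2) := fun x => by ring
  have hi2 : Integrable (fun x => 2 * (E - a) * (MvPolynomial.eval x f - E) + (E - a) ^ 2) μ :=
    (hi1.const_mul _).add (integrable_const _)
  have hia : Integrable (fun x => (MvPolynomial.eval x f - a) ^ 2) μ := by
    simp only [hexp]
    exact hitg.add hi2
  have hXa : X ≤ ∫ x, (MvPolynomial.eval x f - a) ^ 2 ∂μ := by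
    simp only [hexp]
    rw [integral_add hitg hi2, integral_add (hi1.const_mul _) (integrable_const _),
      integral_const_mul, hmean]
    simp only [integral_const, smul_eq_mul, mul_zero, zero_add, probReal_univ, one_mul]
    linarith [sq_nonneg (E - a)]
  have hfa : (f - MvPolynomial.C a).totalDegree ≤ d := by
    refine (MvPolynomial.totalDegree_sub _ _).trans ?_
    rw [MvPolynomial.totalDegree_C]
    exact max_le hf (Nat.zero_le _)
  have hB := second_moment_nd hn hs hs1 hμ (f := f - MvPolynomial.C a) hd hfa (M := b - a)
    (by simpa using hmid) (by simpa using hia)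
  simp only [map_sub, MvPolynomial.eval_C] at hB
  rw [← hm] at hB
  have hXle := hXa.trans hB
  rcases hab.eq_or_lt with heq | hlt
  · apply hXzero
    rw [← heq, sub_self] at hXle
    simp only [ne_eq, OfNat.ofNat_ne_zero, not_false_eq_true, zero_pow, zero_mul] at hXle
    exact le_antisymm hXle hX0
  have hM : 0 < b - a := sub_pos.mpr hlt
  set M := b - a with hMdef
  have hA := osc_quantile hL0 hL hn hs hμ hd hf hφ hεp hNp hlt hb hb' hqa hqb
  rw [← hMdef, ← hY] at hA
  have hXr : X ^ (1 / (2 * (d : ℝ))) ≤ M ^ (1 / (d : ℝ)) * (2 ^ 18 * m) := by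
    refine (Real.rpow_le_rpow hX0 hXle (by positivity)).trans (le_of_eq ?_)
    have hQ : 0 ≤ 2 ^ 18 * m := by positivity
    rw [Real.mul_rpow (by positivity) (by positivity), ← Real.rpow_natCast M 2,
      ← Real.rpow_natCast _ (2 * d), ← Real.rpow_mul hM.le, ← Real.rpow_mul hQ]
    have e1 : ((2 : ℕ) : ℝ) * (1 / (2 * (d : ℝ))) = 1 / d := by
      push_cast; field_simp
    have e2 : ((2 * d : ℕ) : ℝ) * (1 / (2 * (d : ℝ))) = 1 := by
      push_cast; field_simp
    rw [e1, e2, Real.rpow_one]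
  refine (mul_le_mul hXr hA hY0.le (by positivity)).trans (le_of_eq ?_)
  rw [Real.div_rpow hεp.le (by positivity), Real.mul_rpow hNp.le hM.le, Real.rpow_sub hNp,
    Real.rpow_one]
  have h1 : M ^ (1 / (d : ℝ)) ≠ 0 := (Real.rpow_pos_of_pos hM _).ne'
  have h2 : N ^ (1 / (d : ℝ)) ≠ 0 := (Real.rpow_pos_of_pos hNp _).ne'
  field_simp

lemma CbSmooth.le_supNorm {φ : ℝ → ℝ} (h : CbSmooth φ) (t : ℝ) : |φ t| ≤ supNorm φ := by
  obtain ⟨M, hM⟩ := h.2 0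
  refine le_ciSup (f := fun t => |φ t|) ⟨M, ?_⟩ t
  rintro _ ⟨u, rfl⟩
  simpa using hM u

lemma CbSmooth.deriv_le_supNorm {φ : ℝ → ℝ} (h : CbSmooth φ) (t : ℝ) :
    |deriv φ t| ≤ supNorm (deriv φ) := by
  obtain ⟨M, hM⟩ := h.2 1
  refine le_ciSup (f := fun t => |deriv φ t|) ⟨M, ?_⟩ t
  rintro _ ⟨u, rfl⟩
  simpa using hM u

end Concl

/-- **Dimension-free regularity of polynomial images of `s`-concave measures.**
There is an absolute constant `C > 0` such that for every `s ≥ 0`, all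
`d, n ∈ ℕ` with `n ≤ 1/s` (vacuous for `s = 0`, encoded as `n·s ≤ 1`), every
`s`-concave probability measure `μ` on `ℝⁿ`, every polynomial `f` of degree at most
`d` and every `φ ∈ C_b^∞(ℝ)`,
`‖f - 𝔼_μ f‖_{L²(μ)}^{1/d} ∫ φ'(f) dμ ≤ C min{d, 1/s} ‖φ‖_∞^{1/d} ‖φ'‖_∞^{1-1/d}`;
equivalently, whenever `‖f - 𝔼_μ f‖_{L²(μ)} > 0`,
`σ(μ∘f⁻¹, t) ≤ C min{d, 1/s} ‖f - 𝔼_μ f‖_{L²(μ)}^{-1/d} t^{1/d}` for all `t > 0`. -/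
theorem sconcave_regularity :
    ∃ C : ℝ, 0 < C ∧ ∀ s : ℝ, 0 ≤ s → ∀ (d n : ℕ), 0 < d → 0 < n → (n : ℝ) * s ≤ 1 →
      ∀ μ : Measure (Fin n → ℝ), IsProbabilityMeasure μ → IsSConcave s μ →
      ∀ f : MvPolynomial (Fin n) ℝ, f.totalDegree ≤ d →
        (∀ φ : ℝ → ℝ, CbSmooth φ →
          (∫ x, (MvPolynomial.eval x f - ∫ y, MvPolynomial.eval y f ∂μ) ^ 2 ∂μ) ^
              (1 / (2 * (d : ℝ))) *
              (∫ x, deriv φ (MvPolynomial.eval x f) ∂μ) ≤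
            C * (if s = 0 then (d : ℝ) else min (d : ℝ) s⁻¹) *
              supNorm φ ^ (1 / (d : ℝ)) * supNorm (deriv φ) ^ (1 - 1 / (d : ℝ))) ∧
        (0 < (∫ x, (MvPolynomial.eval x f - ∫ y, MvPolynomial.eval y f ∂μ) ^ 2 ∂μ) →
          ∀ t : ℝ, 0 < t →
            sigmaMod (Measure.map (fun x => MvPolynomial.eval x f) μ) t ≤
              C * (if s = 0 then (d : ℝ) else min (d : ℝ) s⁻¹) *
                (∫ x, (MvPolynomial.eval x f - ∫ y, MvPolynomial.eval y f ∂μ) ^ 2 ∂μ) ^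
                  (-(1 / (2 * (d : ℝ)))) * t ^ (1 / (d : ℝ))) := by
  obtain ⟨L, hL0, hL⟩ := exists_step_bound
  refine ⟨2 ^ 18 * (196992 * (1 + 3 * L)), by positivity, ?_⟩
  intro s hs d n hd hn hns μ hμ hsc f hf
  have hs1 : s ≤ 1 := by
    have : (1 : ℝ) ≤ n := by exact_mod_cast hn
    nlinarith
  have hSC : SC s μ := hsc.toSC
  have hm : (if s = 0 then (d : ℝ) else min (d : ℝ) s⁻¹) = dimFactor s d := rfl
  rw [hm]
  have hφ1 : ∀ φ, CbSmooth φ → ContDiff ℝ 1 φ := fun φ h => h.1.of_le (by exact_mod_cast le_top)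
  refine ⟨fun φ hφ => main_estimate hL0 hL hn hs hs1 hSC hd hf (hφ1 φ hφ)
    hφ.le_supNorm hφ.deriv_le_supNorm, ?_⟩
  intro hX t ht
  refine csSup_le ?_ ?_
  · exact ⟨0, fun _ => 0, ⟨contDiff_const, fun k => ⟨0, fun t => by simp⟩⟩, fun _ => by simpa using ht.le, fun _ => by simp, by simp⟩
  · rintro y ⟨φ, hφ, hb, hb', rfl⟩
    have hc := hφ1 φ hφ
    rw [integral_map (mv_continuous f).measurable.aemeasurable
      (hc.continuous_deriv le_rfl).aestronglyMeasurable]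
    have key := main_estimate hL0 hL hn hs hs1 hSC hd hf hc hb hb'
    rw [Real.one_rpow, mul_one] at key
    have hXp := Real.rpow_pos_of_pos hX (1 / (2 * (d : ℝ)))
    rw [Real.rpow_neg hX.le]
    rw [mul_comm, ← le_div_iff₀ hXp] at key
    refine key.trans (le_of_eq ?_)
    rw [div_eq_mul_inv]
    ring
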